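/- arXiv:q-alg/9708013 — 3 statements merged into one kernel-verified Lean document; each statement's English description precedes it below -/
import Mathlib

section
/- Let M be a monoid and t₁,…,t_{k−1} ∈ M elements satisfying the braid relations: t_i t_{i+1} t_i = t_{i+1} t_i t_{i+1} for 1 ≤ i ≤ k−2, and t_i t_j = t_j t_i whenever |i−j| ≥ 2. If s_{i₁}⋯s_{i_r} and s_{j₁}⋯s_{j_r} are two reduced expressions of the same permutation w ∈ S_k (so r = ℓ(w)), then t_{i₁}⋯t_{i_r} = t_{j₁}⋯t_{j_r} in M. In particular, setting t_w equal to this common value gives a well-defined map w ↦ t_w on S_k. -/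
/-!
The proof is the classical induction on the length of `w`. Left multiplication by `s_i` creates
or destroys exactly one inversion, according to the relative order of `w⁻¹ i` and `w⁻¹ (i + 1)`
(`permLength_adjSwap_mul`). Consequently a word `i :: a` is reduced for `w` exactly when `i` is a
left descent of `w` and `a` is reduced for `s_i w` (`Reduced.cons_iff`), and every permutation has
a reduced word (`exists_reduced`).

Let `i :: a` and `j :: b` be reduced for `w`. If `i = j`, the induction hypothesis applies to `a`
and `b`. Otherwise `i` and `j` are both left descents of `w`, and `w` has reduced words `i :: c`
and `j :: d` that differ only by one braid or commutation move at the front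
(`exists_reduced_comm`, `exists_reduced_braid`). The induction hypothesis compares `a` with `c` and
`b` with `d`, and the relation in `M` compares the two middle words.
-/

/-- The length (inversion number) of a permutation of `Fin k`. -/
def permLength {k : ℕ} (p : Equiv.Perm (Fin k)) : ℕ :=
  ((Finset.univ : Finset (Fin k × Fin k)).filter
    (fun x => x.1 < x.2 ∧ p x.2 < p x.1)).card

/-- The adjacent transposition `s_i ∈ S_k` exchanging the (0-indexed) points
`i` and `i+1`; defined to be the identity if `i + 1 ≥ k`. -/
def adjSwap (k i : ℕ) : Equiv.Perm (Fin k) :=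
  if h : i + 1 < k then Equiv.swap ⟨i, Nat.lt_of_succ_lt h⟩ ⟨i + 1, h⟩ else 1

/-- `i` is a left descent of `p`: it indexes a generator and `p⁻¹ (i + 1) < p⁻¹ i`. -/
def LeftDescent {k : ℕ} (p : Equiv.Perm (Fin k)) (i : ℕ) : Prop :=
  ∃ h : i + 1 < k, p.symm ⟨i + 1, h⟩ < p.symm ⟨i, Nat.lt_of_succ_lt h⟩

/-- The word `l` is a reduced expression of `p`. The bound on the letters excludes the indices
for which `adjSwap` is by convention the identity. -/
def Reduced {k : ℕ} (l : List ℕ) (p : Equiv.Perm (Fin k)) : Prop :=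
  (∀ i ∈ l, i + 1 < k) ∧ (l.map (adjSwap k)).prod = p ∧ l.length = permLength p

theorem adjSwap_val {k i : ℕ} (h : i + 1 < k) (x : Fin k) :
    (adjSwap k i x : ℕ) = if (x : ℕ) = i then i + 1 else if (x : ℕ) = i + 1 then i else x := by
  rw [adjSwap, dif_pos h, Equiv.swap_apply_def]
  simp only [Fin.ext_iff]
  split_ifs <;> simp_all

theorem adjSwap_mul_self (k i : ℕ) : adjSwap k i * adjSwap k i = 1 := by
  unfold adjSwap
  split_ifs <;> simp

theorem adjSwap_mul_cancel (k i : ℕ) (p : Equiv.Perm (Fin k)) :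
    adjSwap k i * (adjSwap k i * p) = p := by
  rw [← mul_assoc, adjSwap_mul_self, one_mul]

theorem adjSwap_comm {k i j : ℕ} (hi : i + 1 < k) (hj : j + 1 < k) (hij : i + 2 ≤ j) :
    adjSwap k i * adjSwap k j = adjSwap k j * adjSwap k i := by
  ext x
  simp only [Equiv.Perm.mul_apply, adjSwap_val hi, adjSwap_val hj]
  split_ifs <;> omega

theorem adjSwap_braid {k i : ℕ} (h : i + 2 < k) :
    adjSwap k i * adjSwap k (i + 1) * adjSwap k i =
      adjSwap k (i + 1) * adjSwap k i * adjSwap k (i + 1) := by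
  have hi : i + 1 < k := by omega
  ext x
  simp only [Equiv.Perm.mul_apply, adjSwap_val hi, adjSwap_val (show i + 1 + 1 < k from h)]
  split_ifs <;> omega

theorem adjSwap_mul_symm_apply (k i : ℕ) (p : Equiv.Perm (Fin k)) (x : Fin k) :
    (adjSwap k i * p).symm x = p.symm (adjSwap k i x) := by
  rw [Equiv.symm_apply_eq, Equiv.Perm.mul_apply, Equiv.apply_symm_apply, ← Equiv.Perm.mul_apply,
    adjSwap_mul_self, Equiv.Perm.one_apply]

/-- If `p⁻¹ i < p⁻¹ (i + 1)`, then the inversions of `s_i p` are those of `p` together with the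
pair `(p⁻¹ i, p⁻¹ (i + 1))`. -/
theorem permLength_adjSwap_mul {k i : ℕ} (p : Equiv.Perm (Fin k)) (h : i + 1 < k)
    (hlt : p.symm ⟨i, Nat.lt_of_succ_lt h⟩ < p.symm ⟨i + 1, h⟩) :
    permLength (adjSwap k i * p) = permLength p + 1 := by
  unfold permLength
  rw [← Finset.card_insert_of_notMem
    (a := (p.symm ⟨i, Nat.lt_of_succ_lt h⟩, p.symm ⟨i + 1, h⟩)) (by simp)]
  congr 1
  ext ⟨m, n⟩
  simp only [Finset.mem_filter, Finset.mem_univ, true_and, Finset.mem_insert, Prod.mk.injEq]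
  rw [Equiv.Perm.mul_apply, Equiv.Perm.mul_apply]
  rw [Equiv.eq_symm_apply, Equiv.eq_symm_apply]
  constructor
  · rintro ⟨h1, h2⟩
    have hne : (p m : ℕ) ≠ p n := fun e => h1.ne (p.injective (Fin.ext e))
    simp only [Fin.lt_def, Fin.ext_iff, adjSwap_val h] at h1 h2 ⊢
    split_ifs at h2 <;> omega
  · rintro (⟨h1, h2⟩ | ⟨h1, h2⟩)
    · have hmn : m < n := by
        rw [← Equiv.eq_symm_apply] at h1 h2
        rwa [h1, h2]
      refine ⟨hmn, ?_⟩
      simp [Fin.lt_def, adjSwap_val h, h1, h2]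
    · refine ⟨h1, ?_⟩
      -- The pair `p m = i + 1`, `p n = i` is impossible, as it would contradict `hlt`.
      have hno : ¬ ((p m : ℕ) = i + 1 ∧ (p n : ℕ) = i) := by
        rintro ⟨e1, e2⟩
        have e1' : p m = ⟨i + 1, h⟩ := Fin.ext e1
        have e2' : p n = ⟨i, Nat.lt_of_succ_lt h⟩ := Fin.ext e2
        rw [← Equiv.eq_symm_apply] at e1' e2'
        rw [← e1', ← e2'] at hlt
        exact lt_asymm h1 hlt
      simp only [Fin.lt_def, adjSwap_val h] at h2 ⊢
      split_ifs <;> omega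

theorem LeftDescent.permLength {k i : ℕ} {p : Equiv.Perm (Fin k)} (hd : LeftDescent p i) :
    permLength (adjSwap k i * p) + 1 = permLength p := by
  obtain ⟨h, hd⟩ := hd
  have key := permLength_adjSwap_mul (adjSwap k i * p) h (by
    rw [adjSwap_mul_symm_apply, adjSwap_mul_symm_apply]
    simpa [adjSwap, h] using hd)
  rw [adjSwap_mul_cancel] at key
  exact key.symm

theorem permLength_of_not_leftDescent {k i : ℕ} {p : Equiv.Perm (Fin k)} (h : i + 1 < k)
    (hd : ¬ LeftDescent p i) : permLength (adjSwap k i * p) = permLength p + 1 := by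
  apply permLength_adjSwap_mul p h
  have h1 : ¬ p.symm ⟨i + 1, h⟩ < p.symm ⟨i, Nat.lt_of_succ_lt h⟩ := fun h' => hd ⟨h, h'⟩
  refine lt_of_le_of_ne (not_lt.mp h1) fun e => ?_
  simpa using p.symm.injective e

theorem permLength_one (k : ℕ) : permLength (1 : Equiv.Perm (Fin k)) = 0 := by
  rw [permLength, Finset.card_eq_zero, Finset.filter_eq_empty_iff]
  rintro ⟨m, n⟩ - ⟨h1, h2⟩
  exact lt_asymm h1 h2

theorem permLength_prod_le {k : ℕ} (l : List ℕ) (hl : ∀ i ∈ l, i + 1 < k) :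
    permLength (l.map (adjSwap k)).prod ≤ l.length := by
  induction l with
  | nil => simp [permLength_one]
  | cons i a ih =>
    have ih := ih fun j hj => hl j (List.mem_cons_of_mem _ hj)
    have hi := hl i List.mem_cons_self
    rw [List.map_cons, List.prod_cons, List.length_cons]
    by_cases hd : LeftDescent (a.map (adjSwap k)).prod i
    · have := hd.permLength
      omega
    · rw [permLength_of_not_leftDescent hi hd]
      omega

theorem Reduced.cons_iff {k i : ℕ} {a : List ℕ} {p : Equiv.Perm (Fin k)} :
    Reduced (i :: a) p ↔ LeftDescent p i ∧ Reduced a (adjSwap k i * p) := by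
  constructor
  · rintro ⟨hl, hp, hlen⟩
    have hi := hl i List.mem_cons_self
    have ha : ∀ j ∈ a, j + 1 < k := fun j hj => hl j (List.mem_cons_of_mem _ hj)
    have hpa : (a.map (adjSwap k)).prod = adjSwap k i * p := by
      rw [← hp, List.map_cons, List.prod_cons, adjSwap_mul_cancel]
    rw [List.length_cons] at hlen
    have hd : LeftDescent p i := by
      by_contra hd
      have h1 := permLength_of_not_leftDescent hi hd
      have h2 := permLength_prod_le a ha
      rw [hpa] at h2
      omega
    have := hd.permLength
    exact ⟨hd, ha, hpa, by omega⟩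
  · rintro ⟨hd, ha, hpa, hlen⟩
    refine ⟨?_, ?_, ?_⟩
    · intro j hj
      rcases List.mem_cons.mp hj with rfl | hj
      · exact hd.1
      · exact ha j hj
    · rw [List.map_cons, List.prod_cons, hpa, adjSwap_mul_cancel]
    · rw [List.length_cons, hlen, hd.permLength]

/-- A permutation without left descents has increasing inverse, hence is trivial. -/
theorem eq_one_of_forall_not_leftDescent {k : ℕ} {p : Equiv.Perm (Fin k)}
    (h : ∀ i, ¬ LeftDescent p i) : p = 1 := by
  have hmono : StrictMono p.symm := by
    cases k with
    | zero => exact fun x => x.elim0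
    | succ n =>
      rw [Fin.strictMono_iff_lt_succ]
      intro i
      have h1 : ¬ p.symm i.succ < p.symm i.castSucc := fun h' =>
        h i ⟨Nat.succ_lt_succ i.2, h'⟩
      exact lt_of_le_of_ne (not_lt.mp h1) fun e => (Fin.castSucc_lt_succ).ne (p.symm.injective e)
  have hid : ∀ x, p.symm x = x := fun x => by
    have := Subsingleton.elim (hmono.orderIsoOfSurjective _ p.symm.surjective) (OrderIso.refl _)
    exact congrArg (fun e : Fin k ≃o Fin k => e x) this
  ext x
  rw [Equiv.Perm.one_apply, ← hid (p x), Equiv.symm_apply_apply]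

theorem exists_reduced {k : ℕ} (p : Equiv.Perm (Fin k)) : ∃ l, Reduced l p := by
  induction hn : permLength p using Nat.strong_induction_on generalizing p with
  | _ n ih =>
    by_cases h : ∃ i, LeftDescent p i
    · obtain ⟨i, hd⟩ := h
      have := hd.permLength
      obtain ⟨l, hl⟩ := ih _ (by omega) (adjSwap k i * p) rfl
      exact ⟨i :: l, Reduced.cons_iff.mpr ⟨hd, hl⟩⟩
    · obtain rfl := eq_one_of_forall_not_leftDescent (not_exists.mp h)
      exact ⟨[], by simp [Reduced, permLength_one]⟩

theorem adjSwap_apply_left {k i : ℕ} (h : i + 1 < k) :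
    adjSwap k i ⟨i, Nat.lt_of_succ_lt h⟩ = ⟨i + 1, h⟩ :=
  Fin.ext (by simp [adjSwap_val h])

theorem adjSwap_apply_right {k i : ℕ} (h : i + 1 < k) :
    adjSwap k i ⟨i + 1, h⟩ = ⟨i, Nat.lt_of_succ_lt h⟩ :=
  Fin.ext (by simp [adjSwap_val h])

theorem adjSwap_apply_of_ne {k i j : ℕ} (h : i + 1 < k) (hj : j < k) (h1 : j ≠ i)
    (h2 : j ≠ i + 1) : adjSwap k i ⟨j, hj⟩ = ⟨j, hj⟩ :=
  Fin.ext (by simp [adjSwap_val h, h1, h2])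

theorem exists_reduced_comm {k i j : ℕ} {p : Equiv.Perm (Fin k)} (hij : i + 2 ≤ j)
    (hi : LeftDescent p i) (hj : LeftDescent p j) :
    ∃ c, Reduced (i :: j :: c) p ∧ Reduced (j :: i :: c) p := by
  obtain ⟨c, hc⟩ := exists_reduced (adjSwap k j * (adjSwap k i * p))
  have hj' : LeftDescent (adjSwap k i * p) j := by
    refine ⟨hj.1, ?_⟩
    rw [adjSwap_mul_symm_apply, adjSwap_mul_symm_apply,
      adjSwap_apply_of_ne hi.1 _ (by omega) (by omega),
      adjSwap_apply_of_ne hi.1 _ (by omega) (by omega)]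
    exact hj.2
  have h1 : Reduced (i :: j :: c) p :=
    Reduced.cons_iff.mpr ⟨hi, Reduced.cons_iff.mpr ⟨hj', hc⟩⟩
  refine ⟨c, h1, ?_, ?_, ?_⟩
  · intro x hx
    apply h1.1 x
    simp only [List.mem_cons] at hx ⊢
    tauto
  · rw [← h1.2.1]
    simp only [List.map_cons, List.prod_cons, ← mul_assoc, adjSwap_comm hi.1 hj.1 hij]
  · rw [← h1.2.2]
    rfl

theorem exists_reduced_braid {k i : ℕ} {p : Equiv.Perm (Fin k)}
    (hi : LeftDescent p i) (hj : LeftDescent p (i + 1)) :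
    ∃ c, Reduced (i :: (i + 1) :: i :: c) p ∧ Reduced ((i + 1) :: i :: (i + 1) :: c) p := by
  obtain ⟨c, hc⟩ := exists_reduced (adjSwap k i * (adjSwap k (i + 1) * (adjSwap k i * p)))
  obtain ⟨h1, hi'⟩ := id hi
  obtain ⟨h2, hj'⟩ := hj
  -- On `i, i + 1, i + 2` the inverses of `p`, `s_i p`, `s_{i+1} s_i p` take the values
  -- `(x, y, z)`, `(y, x, z)`, `(y, z, x)`, where `x > y > z`.
  have hd1 : LeftDescent (adjSwap k i * p) (i + 1) := by
    refine ⟨h2, ?_⟩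
    rw [adjSwap_mul_symm_apply, adjSwap_mul_symm_apply, adjSwap_apply_right h1,
      adjSwap_apply_of_ne h1 _ (by omega) (by omega)]
    exact hj'.trans hi'
  have hd2 : LeftDescent (adjSwap k (i + 1) * (adjSwap k i * p)) i := by
    refine ⟨h1, ?_⟩
    rw [adjSwap_mul_symm_apply, adjSwap_mul_symm_apply, adjSwap_mul_symm_apply,
      adjSwap_mul_symm_apply, adjSwap_apply_left h2,
      adjSwap_apply_of_ne (i := i + 1) h2 (Nat.lt_of_succ_lt h1) (by omega) (by omega),
      adjSwap_apply_left h1, adjSwap_apply_of_ne h1 _ (by omega) (by omega)]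
    exact hj'
  have hr : Reduced (i :: (i + 1) :: i :: c) p :=
    Reduced.cons_iff.mpr ⟨hi, Reduced.cons_iff.mpr ⟨hd1, Reduced.cons_iff.mpr ⟨hd2, hc⟩⟩⟩
  refine ⟨c, hr, ?_, ?_, ?_⟩
  · intro x hx
    apply hr.1 x
    simp only [List.mem_cons] at hx ⊢
    tauto
  · rw [← hr.2.1]
    simp only [List.map_cons, List.prod_cons, ← mul_assoc, adjSwap_braid h2]
  · rw [← hr.2.2]
    rfl

/-- Two distinct left descents `i < j` of `p` start reduced words of `p` that have the same
product in `M`: they differ by a single commutation or braid move. -/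
theorem exists_reduced_pair {k : ℕ} {M : Type*} [Monoid M] {t : ℕ → M}
    (hbraid : ∀ i : ℕ, i + 2 < k →
      t i * t (i + 1) * t i = t (i + 1) * t i * t (i + 1))
    (hcomm : ∀ i j : ℕ, i + 1 < k → j + 1 < k → (i + 2 ≤ j ∨ j + 2 ≤ i) →
      t i * t j = t j * t i)
    {p : Equiv.Perm (Fin k)} {i j : ℕ} (hij : i < j)
    (hi : LeftDescent p i) (hj : LeftDescent p j) :
    ∃ c d, Reduced (i :: c) p ∧ Reduced (j :: d) p ∧
      ((i :: c).map t).prod = ((j :: d).map t).prod := by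
  rcases (show j = i + 1 ∨ i + 2 ≤ j by omega) with rfl | h
  · obtain ⟨c, h1, h2⟩ := exists_reduced_braid hi hj
    refine ⟨_, _, h1, h2, ?_⟩
    simp only [List.map_cons, List.prod_cons, ← mul_assoc, hbraid i hj.1]
  · obtain ⟨c, h1, h2⟩ := exists_reduced_comm h hi hj
    refine ⟨_, _, h1, h2, ?_⟩
    simp only [List.map_cons, List.prod_cons, ← mul_assoc, hcomm i j hi.1 hj.1 (Or.inl h)]

theorem Reduced.prod_map_eq {k : ℕ} {M : Type*} [Monoid M] {t : ℕ → M}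
    (hbraid : ∀ i : ℕ, i + 2 < k →
      t i * t (i + 1) * t i = t (i + 1) * t i * t (i + 1))
    (hcomm : ∀ i j : ℕ, i + 1 < k → j + 1 < k → (i + 2 ≤ j ∨ j + 2 ≤ i) →
      t i * t j = t j * t i)
    (n : ℕ) {p : Equiv.Perm (Fin k)} (hn : _root_.permLength p = n) {l₁ l₂ : List ℕ}
    (h₁ : Reduced l₁ p) (h₂ : Reduced l₂ p) : (l₁.map t).prod = (l₂.map t).prod := by
  induction n generalizing p l₁ l₂ with
  | zero =>
    rw [List.length_eq_zero_iff.mp (h₁.2.2.trans hn), List.length_eq_zero_iff.mp (h₂.2.2.trans hn)]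
  | succ n ih =>
    obtain ⟨i, a, rfl⟩ := List.exists_cons_of_length_eq_add_one (h₁.2.2.trans hn)
    obtain ⟨j, b, rfl⟩ := List.exists_cons_of_length_eq_add_one (h₂.2.2.trans hn)
    have same : ∀ {m : ℕ} {c d : List ℕ}, Reduced (m :: c) p → Reduced (m :: d) p →
        ((m :: c).map t).prod = ((m :: d).map t).prod := by
      intro m c d hc hd
      rw [Reduced.cons_iff] at hc hd
      have hlen := hc.1.permLength
      rw [List.map_cons, List.map_cons, List.prod_cons, List.prod_cons,
        ih (by omega) hc.2 hd.2]
    have hi := (Reduced.cons_iff.mp h₁).1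
    have hj := (Reduced.cons_iff.mp h₂).1
    rcases lt_trichotomy i j with hij | rfl | hij
    · obtain ⟨c, d, hc, hd, e⟩ := exists_reduced_pair hbraid hcomm hij hi hj
      exact (same h₁ hc).trans (e.trans (same hd h₂))
    · exact same h₁ h₂
    · obtain ⟨c, d, hc, hd, e⟩ := exists_reduced_pair hbraid hcomm hij hj hi
      exact (same h₁ hd).trans (e.symm.trans (same hc h₂))

/-- Matsumoto's theorem for monoids: if `t₀, …, t_{k-2}` in a monoid `M`
satisfy the braid relations, then the product `t_{i₁} ⋯ t_{i_r}` is the same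
for all reduced expressions `s_{i₁} ⋯ s_{i_r}` of a fixed permutation
`w ∈ S_k`. -/
theorem braid_lift_well_defined (k : ℕ) (hk : 1 ≤ k) (M : Type*) [Monoid M]
    (t : ℕ → M)
    (hbraid : ∀ i : ℕ, i + 2 < k →
      t i * t (i + 1) * t i = t (i + 1) * t i * t (i + 1))
    (hcomm : ∀ i j : ℕ, i + 1 < k → j + 1 < k → (i + 2 ≤ j ∨ j + 2 ≤ i) →
      t i * t j = t j * t i)
    (w : Equiv.Perm (Fin k)) (l₁ l₂ : List ℕ)
    (hl₁ : ∀ i ∈ l₁, i + 1 < k) (hl₂ : ∀ i ∈ l₂, i + 1 < k)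
    (hw₁ : (l₁.map (adjSwap k)).prod = w) (hw₂ : (l₂.map (adjSwap k)).prod = w)
    (hred₁ : l₁.length = permLength w) (hred₂ : l₂.length = permLength w) :
    (l₁.map t).prod = (l₂.map t).prod := by
  exact Reduced.prod_map_eq hbraid hcomm _ rfl ⟨hl₁, hw₁, hred₁⟩ ⟨hl₂, hw₂, hred₂⟩
end

section
/- Let N ≥ 2 and let q ∈ ℂ be transcendental over ℚ. Let F be the free unital associative ℂ-algebra on N² generators x^i_j (1 ≤ i, j ≤ N), V the ℂ-span of the generators, T the N×N matrix over F with (i,j) entry x^i_j, and T₂ = I ⊗ T the corresponding N²×N² matrix over F. Regard the standard R-matrix R̂ of GL_q(N) as a scalar N²×N² matrix. Let J ⊆ F be the two-sided ideal generated by the N⁴ entries of the matrix R̂ T₂ R̂ T₂ R̂ + T₂ R̂ T₂. Then for every k ≥ 0, dim_ℂ ( V^{⊗k} / (J ∩ V^{⊗k}) ) = C(N², k) (the binomial coefficient); that is, the quadratic algebra F/J has Poincaré series (1+t)^{N²}. In particular its top nonzero homogeneous component is in degree N² and is one-dimensional. -/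
/-!
The dimension of the degree `k` component of the quadratic algebra is computed by duality: a
functional on it is a functional `φ` on the degree `k` component of the free algebra vanishing on all
products `u · r · v`, where `r` is an entry of the relation matrix and `u`, `v` are words.

The words of degree `k` are first replaced by the entries `Z j i` of the braided power of `T`, indexed
by a column word `j` and a row word `i` with `k` letters. Since the braiding of `GL_q(N)` is
skew-invertible (`br_inj`), a functional vanishing on all the `Z j i` is zero (`apply_Z_iff`), and by
counting dimensions the values `A j i = φ (Z j i)` can be prescribed arbitrarily
(`exists_functional`). The braid relation lets the Hecke operators pass through the braidings
(`hecke_br`, `hecke_br2`), and therefore the relations become the defects `R_s Z R_s + Z` of the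
reflection equation, in all positions `s` (`E_succ`, `E_zero`, `E_iff`). Hence `φ` vanishes on the ideal
if and only if `A R_s = -R_s⁻¹ A` for all `s`, which is the predicate `Cond` (`cond_iff`).

Both `R_s` and `-R_s⁻¹` represent the Hecke algebra with eigenvalues `q` and `-q⁻¹`, so `A` is an
intertwiner between two Hecke modules, and the count of such intertwiners is a quantum form of skew
Howe duality. Explicitly, regard a pair of words `(j, i)` as a word of pairs `(j_m, i_m)`, ordered
lexicographically. The relations express `A` at a descent through smaller words, and force `A` to
vanish at a word with equal neighbouring pairs as soon as `q² ≠ -1`; thus `A` is determined by its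
values at strictly increasing words of pairs (`cond_inj`), which correspond to subsets with `k`
elements of a set with `N²` elements. Conversely, arbitrary values on these subsets extend to a solution:
for increasing `j` one takes the `q`-alternating function `wt`, and for general `j` one applies the
operators of the permutation sorting `j` (`sortOp`), whose compatibility with the relations follows
from the braid relations (`sortOp_eq`, `sortOp_lt`, `cond_sol`). Consequently the classes of the
entries `Z j i` at increasing words of pairs form a basis of the component (`cls_linearIndependent`,
`cls_span`).
-/

/-- The standard R-matrix `R̂` of `GL_q(N)` as a scalar `N² × N²` matrix:
the column indexed by `(a, b)` records the coefficients of `R̂(e_a ⊗ e_b)`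
in the standard basis, so that `R̂(e_a ⊗ e_b) = q e_a ⊗ e_b` if `a = b`,
`R̂(e_a ⊗ e_b) = e_b ⊗ e_a` if `a < b`, and
`R̂(e_a ⊗ e_b) = e_b ⊗ e_a + (q - q⁻¹) e_a ⊗ e_b` if `a > b`. -/
noncomputable def Rhat (N : ℕ) (q : ℂ) : Matrix (Fin N × Fin N) (Fin N × Fin N) ℂ :=
  fun out inp =>
    if inp.1 = inp.2 then (if out = inp then q else 0)
    else if inp.1 < inp.2 then (if out = (inp.2, inp.1) then 1 else 0)
    else (if out = (inp.2, inp.1) then 1 else 0) +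
         (if out = inp then q - q⁻¹ else 0)

/-- The degree-`k` homogeneous component `V^{⊗k}` of the free algebra on the
generators: the span of all products of exactly `k` generators. -/
noncomputable def degComp (N k : ℕ) :
    Submodule ℂ (FreeAlgebra ℂ (Fin N × Fin N)) :=
  Submodule.span ℂ
    {x | ∃ l : List (Fin N × Fin N), l.length = k ∧
      x = (l.map (FreeAlgebra.ι ℂ)).prod}

/-- The two-sided ideal generated by a set `S`, viewed as a `ℂ`-submodule. -/
noncomputable def twoSidedSpan (N : ℕ) (S : Set (FreeAlgebra ℂ (Fin N × Fin N))) :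
    Submodule ℂ (FreeAlgebra ℂ (Fin N × Fin N)) :=
  Submodule.span ℂ {x | ∃ a b : FreeAlgebra ℂ (Fin N × Fin N), ∃ r ∈ S, x = a * r * b}

/-- The matrix `T₂ = I ⊗ T` over the free algebra, where `T` is the `N × N`
matrix of generators. -/
noncomputable def T2mat (N : ℕ) :
    Matrix (Fin N × Fin N) (Fin N × Fin N) (FreeAlgebra ℂ (Fin N × Fin N)) :=
  fun out inp =>
    (if out.1 = inp.1 then 1 else 0) * FreeAlgebra.ι ℂ (out.2, inp.2)

/-! ### Hecke operators on functions on words -/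

namespace TsyganRE

/-- The Hecke operator on the first two letters. A vector with coefficients in `M` in a tensor power
of the space with basis `α` is encoded as a function on words `List α`; words with fewer than two
letters are sent to `0`. With `lt = (· < ·)` this is the action of the matrix `R̂` of parameter `q`
on coordinate vectors, with the second tensor factor written as the first letter. -/
noncomputable def hecke0 {α M : Type*} [DecidableEq α] [AddCommGroup M] [Module ℂ M] (lt : α → α → Prop)
    [DecidableRel lt] (q : ℂ) (v : List α → M) : List α → M
  | a :: b :: t =>
      if a = b then q • v (a :: b :: t)
      else v (b :: a :: t) + if lt a b then (q - q⁻¹) • v (a :: b :: t) else 0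
  | _ => 0

/-- The Hecke operator on the letters in positions `s` and `s + 1` (counted from `0`). -/
noncomputable def hecke {α M : Type*} [DecidableEq α] [AddCommGroup M] [Module ℂ M] (lt : α → α → Prop)
    [DecidableRel lt] (q : ℂ) : ℕ → (List α → M) → List α → M
  | 0, v => hecke0 lt q v
  | s + 1, v => fun l => match l with
    | [] => 0
    | a :: t => hecke lt q s (fun l' => v (a :: l')) t

end TsyganRE
namespace TsyganRE

section basic
variable {α M M' : Type*} [DecidableEq α] [AddCommGroup M] [Module ℂ M]
  [AddCommGroup M'] [Module ℂ M'] (lt : α → α → Prop) [DecidableRel lt] (q : ℂ)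

theorem hecke_zero_cons (v : List α → M) (a b : α) (t : List α) :
    hecke lt q 0 v (a :: b :: t) = if a = b then q • v (a :: b :: t)
      else v (b :: a :: t) + if lt a b then (q - q⁻¹) • v (a :: b :: t) else 0 := rfl

theorem hecke_succ_cons (s : ℕ) (v : List α → M) (a : α) (t : List α) :
    hecke lt q (s + 1) v (a :: t) = hecke lt q s (fun l => v (a :: l)) t := rfl

theorem hecke_short (s : ℕ) (v : List α → M) (l : List α) (h : l.length < s + 2) :
    hecke lt q s v l = 0 := by
  induction s generalizing v l with
  | zero =>
    match l, h with
    | [], _ => rfl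
    | [a], _ => rfl
  | succ s ih =>
    match l, h with
    | [], _ => rfl
    | a :: t, h => exact ih _ _ (by simpa using h)

theorem map_hecke (g : M →ₗ[ℂ] M') (s : ℕ) (v : List α → M) (l : List α) :
    g (hecke lt q s v l) = hecke lt q s (fun l' => g (v l')) l := by
  induction s generalizing v l with
  | zero =>
    match l with
    | [] => exact map_zero g
    | [a] => exact map_zero g
    | a :: b :: t =>
      rw [hecke_zero_cons, hecke_zero_cons]
      split_ifs <;> simp
  | succ s ih =>
    match l with
    | [] => exact map_zero g
    | a :: t => exact ih _ _

theorem hecke_congr (s : ℕ) (v w : List α → M) (l : List α)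
    (h : ∀ l', l'.length = l.length → v l' = w l') : hecke lt q s v l = hecke lt q s w l := by
  induction s generalizing v w l with
  | zero =>
    match l with
    | [] => rfl
    | [a] => rfl
    | a :: b :: t =>
      rw [hecke_zero_cons, hecke_zero_cons, h _ rfl, h (b :: a :: t) (by simp)]
  | succ s ih =>
    match l with
    | [] => rfl
    | a :: t => exact ih _ _ _ fun l' hl' => h _ (by simp [hl'])

theorem hecke_add (s : ℕ) (v w : List α → M) (l : List α) :
    hecke lt q s (v + w) l = hecke lt q s v l + hecke lt q s w l := by
  induction s generalizing v w l with
  | zero =>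
    match l with
    | [] => exact (add_zero _).symm
    | [a] => exact (add_zero _).symm
    | a :: b :: t =>
      simp only [hecke_zero_cons, Pi.add_apply]
      split_ifs <;> module
  | succ s ih =>
    match l with
    | [] => exact (add_zero _).symm
    | a :: t => exact ih _ _ _

theorem hecke_smul (s : ℕ) (c : ℂ) (v : List α → M) (l : List α) :
    hecke lt q s (c • v) l = c • hecke lt q s v l := by
  induction s generalizing v l with
  | zero =>
    match l with
    | [] => exact (smul_zero _).symm
    | [a] => exact (smul_zero _).symm
    | a :: b :: t =>
      simp only [hecke_zero_cons, Pi.smul_apply]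
      split_ifs <;> module
  | succ s ih =>
    match l with
    | [] => exact (smul_zero _).symm
    | a :: t => exact ih _ _

theorem hecke_zero_comm (s : ℕ) (v : List α → M) (l : List α) :
    hecke lt q 0 (hecke lt q (s + 2) v) l = hecke lt q (s + 2) (hecke lt q 0 v) l := by
  match l with
  | [] => rfl
  | [a] => rfl
  | a :: b :: t =>
    simp only [hecke_zero_cons, hecke_succ_cons]
    split_ifs with h1 h2
    · exact (hecke_smul lt q s q (fun l => v (a :: b :: l)) t).symm
    · have := hecke_add lt q s (fun l => v (b :: a :: l)) ((q - q⁻¹) • fun l => v (a :: b :: l)) t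
      rw [hecke_smul] at this
      exact this.symm
    · simp

theorem hecke_comm (s d : ℕ) (v : List α → M) (l : List α) :
    hecke lt q s (hecke lt q (s + d + 2) v) l = hecke lt q (s + d + 2) (hecke lt q s v) l := by
  induction s generalizing v l with
  | zero => rw [Nat.zero_add]; exact hecke_zero_comm lt q d v l
  | succ s ih =>
    match l with
    | [] => rfl
    | a :: t =>
      have := ih (fun l => v (a :: l)) t
      rw [show s + 1 + d + 2 = (s + d + 2) + 1 by ring]
      exact this

end basic

section order
variable {α M : Type*} [LinearOrder α] [AddCommGroup M] [Module ℂ M] {q : ℂ}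

/-- The braid relation, for a strict total order `lt`. The order enters only through trichotomy and
transitivity, so that the proof serves `<` and `>` alike. -/
theorem braid_aux {lt : α → α → Prop} [DecidableRel lt] (hq : q ≠ 0)
    (tri : ∀ a b, (lt a b ∧ ¬ lt b a ∧ a ≠ b ∧ b ≠ a) ∨ a = b ∨ (lt b a ∧ ¬ lt a b ∧ a ≠ b ∧ b ≠ a))
    (tr : ∀ a b c, lt a b → lt b c → lt a c) (s : ℕ) (v : List α → M) (l : List α) :
    hecke lt q s (hecke lt q (s + 1) (hecke lt q s v)) l =
      hecke lt q (s + 1) (hecke lt q s (hecke lt q (s + 1) v)) l := by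
  induction s generalizing v l with
  | zero =>
    match l with
    | [] => rfl
    | [a] => rfl
    | [a, b] => simp [hecke_zero_cons, hecke_short]
    | a :: b :: c :: t =>
      simp only [hecke_zero_cons, hecke_succ_cons]
      rcases tri a b with ⟨h1, h1', h1a, h1b⟩ | h1 | ⟨h1, h1', h1a, h1b⟩ <;>
      rcases tri b c with ⟨h2, h2', h2a, h2b⟩ | h2 | ⟨h2, h2', h2a, h2b⟩ <;>
      rcases tri a c with ⟨h3, h3', h3a, h3b⟩ | h3 | ⟨h3, h3', h3a, h3b⟩ <;>
      first
      | (exfalso; grind)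
      | (subst_vars
         simp [*]
         try match_scalars <;> (field_simp; try ring))
  | succ s ih =>
    match l with
    | [] => rfl
    | a :: t => exact ih (fun l => v (a :: l)) t

theorem tri_lt (a b : α) :
    (a < b ∧ ¬ b < a ∧ a ≠ b ∧ b ≠ a) ∨ a = b ∨ (b < a ∧ ¬ a < b ∧ a ≠ b ∧ b ≠ a) := by
  rcases lt_trichotomy a b with h | h | h
  · exact Or.inl ⟨h, h.not_gt, h.ne, h.ne'⟩
  · exact Or.inr (Or.inl h)
  · exact Or.inr (Or.inr ⟨h, h.not_gt, h.ne', h.ne⟩)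

theorem braid_lt (hq : q ≠ 0) (s : ℕ) (v : List α → M) (l : List α) :
    hecke (· < ·) q s (hecke (· < ·) q (s + 1) (hecke (· < ·) q s v)) l =
      hecke (· < ·) q (s + 1) (hecke (· < ·) q s (hecke (· < ·) q (s + 1) v)) l :=
  braid_aux hq tri_lt (fun _ _ _ => lt_trans) s v l

theorem braid_gt (hq : q ≠ 0) (s : ℕ) (v : List α → M) (l : List α) :
    hecke (· > ·) q s (hecke (· > ·) q (s + 1) (hecke (· > ·) q s v)) l =
      hecke (· > ·) q (s + 1) (hecke (· > ·) q s (hecke (· > ·) q (s + 1) v)) l :=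
  braid_aux (lt := (· > ·)) hq (fun a b => by
      rcases tri_lt a b with ⟨h1, h2, h3⟩ | h | ⟨h1, h2, h3⟩
      · exact Or.inr (Or.inr ⟨h1, h2, h3⟩)
      · exact Or.inr (Or.inl h)
      · exact Or.inl ⟨h1, h2, h3⟩)
    (fun _ _ _ h1 h2 => lt_trans h2 h1) s v l

/-- The inverse of the Hecke operator is obtained by reversing the order and inverting `q`. -/
theorem hecke_inv_left (hq : q ≠ 0) (s : ℕ) (v : List α → M) (l : List α) (h : s + 2 ≤ l.length) :
    hecke (· > ·) q⁻¹ s (hecke (· < ·) q s v) l = v l := by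
  induction s generalizing v l with
  | zero =>
    match l, h with
    | a :: b :: t, _ =>
      simp only [hecke_zero_cons]
      rcases tri_lt a b with ⟨h1, h1', h1a, h1b⟩ | h1 | ⟨h1, h1', h1a, h1b⟩ <;> subst_vars <;>
        simp [*]
      module
  | succ s ih =>
    match l, h with
    | a :: t, h => exact ih (fun l => v (a :: l)) t (by simpa using h)

/-- The quadratic Hecke relation in the form `R⁻¹ = R - (q - q⁻¹)`. -/
theorem hecke_inv_eq (s : ℕ) (v : List α → M) (l : List α) (h : s + 2 ≤ l.length) :
    hecke (· > ·) q⁻¹ s v l = hecke (· < ·) q s v l - (q - q⁻¹) • v l := by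
  induction s generalizing v l with
  | zero =>
    match l, h with
    | a :: b :: t, _ =>
      simp only [hecke_zero_cons]
      rcases tri_lt a b with ⟨h1, h1', h1a, h1b⟩ | h1 | ⟨h1, h1', h1a, h1b⟩ <;> subst_vars <;>
        simp [*] <;> module
  | succ s ih =>
    match l, h with
    | a :: t, h => exact ih (fun l => v (a :: l)) t (by simpa using h)

/-- The quadratic relation `x² = 1 - (q - q⁻¹) x` satisfied by the inverse Hecke operator. -/
theorem hecke_inv_sq (hq : q ≠ 0) (s : ℕ) (v : List α → M) (l : List α) (h : s + 2 ≤ l.length) :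
    hecke (· > ·) q⁻¹ s (hecke (· > ·) q⁻¹ s v) l = v l - (q - q⁻¹) • hecke (· > ·) q⁻¹ s v l := by
  rw [hecke_congr _ _ s _ (hecke (· < ·) q s v + (-(q - q⁻¹)) • v) l
      (fun l' hl' => by rw [hecke_inv_eq s v l' (hl' ▸ h), Pi.add_apply, Pi.smul_apply]; module),
    hecke_add, hecke_smul, hecke_inv_left hq s v l h]
  module

end order
end TsyganRE

/-! ### The braiding with a basis vector -/

namespace TsyganRE
section braiding
variable {α M M' : Type*} [LinearOrder α] [AddCommGroup M] [Module ℂ M]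
  [AddCommGroup M'] [Module ℂ M'] (q : ℂ)

/-- Auxiliary recursion for `br`: the word is `b :: l`, with `l` the list argument and the letter `b`
that is being moved kept separately, which makes the recursion structural. -/
noncomputable def brAux (j : α) : List α → α → (List α → M) → M
  | [], b, v => if b = j then v [] else 0
  | c :: t, b, v =>
      if b = c then q • brAux j t c (fun l => v (b :: l))
      else brAux j t b (fun l => v (c :: l)) +
        if b < c then (q - q⁻¹) • brAux j t c (fun l => v (b :: l)) else 0

/-- The braiding of a vector `v` in `k` tensor factors with the basis vector `e_j`: the product of the
Hecke operators in positions `0, …, k - 1` applied to `v ⊗ e_j`. -/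
noncomputable def br (j : α) (v : List α → M) : List α → M
  | [] => 0
  | b :: t => brAux q j t b v

/-- Apply an operator to all slots but the first. -/
def shift (X : (List α → M) → List α → M) (v : List α → M) : List α → M
  | [] => 0
  | a :: t => X (fun l => v (a :: l)) t

theorem br_cons_cons (j : α) (v : List α → M) (b c : α) (t : List α) :
    br q j v (b :: c :: t) = hecke (· < ·) q 0 (shift (br q j) v) (b :: c :: t) := rfl

omit [LinearOrder α] [Module ℂ M] in
theorem shift_cons (X : (List α → M) → List α → M) (v : List α → M) (a : α) (t : List α) :
    shift X v (a :: t) = X (fun l => v (a :: l)) t := rfl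

theorem br_singleton (j b : α) (v : List α → M) :
    br q j v [b] = if b = j then v [] else 0 := rfl

theorem br_nil (j : α) (v : List α → M) : br q j v [] = 0 := rfl

theorem br_congr (j : α) (n : ℕ) (v w : List α → M) (i : List α) (hi : i.length = n + 1)
    (h : ∀ l, l.length = n → v l = w l) : br q j v i = br q j w i := by
  induction n generalizing v w i with
  | zero =>
    match i, hi with
    | [b], _ => rw [br_singleton, br_singleton, h _ rfl]
  | succ n ih =>
    match i, hi with
    | b :: c :: t, hi =>
      rw [br_cons_cons, br_cons_cons]
      refine hecke_congr _ _ _ _ _ _ fun l hl => ?_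
      match l, hl with
      | a :: l', hl =>
        exact ih _ _ _ (by simpa using hl.trans hi) fun l hl => h _ (by simp [hl])

theorem map_br (g : M →ₗ[ℂ] M') (j : α) (v : List α → M) (i : List α) :
    g (br q j v i) = br q j (fun l => g (v l)) i := by
  induction i generalizing v with
  | nil => exact map_zero g
  | cons b t ih =>
    show g (brAux q j t b v) = brAux q j t b _
    clear ih
    induction t generalizing b v with
    | nil => simp only [brAux]; split_ifs <;> simp
    | cons c t ih => simp only [brAux]; split_ifs <;> simp [ih]

theorem br_add (j : α) (v w : List α → M) (i : List α) :
    br q j (v + w) i = br q j v i + br q j w i := by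
  cases i with
  | nil => exact (add_zero _).symm
  | cons b t =>
    show brAux q j t b (v + w) = brAux q j t b v + brAux q j t b w
    induction t generalizing b v w with
    | nil => simp only [brAux]; split_ifs <;> simp
    | cons c t ih =>
      have h (a b : α) : brAux q j t b (fun l => (v + w) (a :: l)) = _ :=
        ih (fun l => v (a :: l)) (fun l => w (a :: l)) b
      simp only [brAux, h]; split_ifs <;> module

theorem br_smul (j : α) (r : ℂ) (v : List α → M) (i : List α) :
    br q j (r • v) i = r • br q j v i := by
  cases i with
  | nil => exact (smul_zero _).symm
  | cons b t =>
    show brAux q j t b (r • v) = r • brAux q j t b v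
    induction t generalizing b v with
    | nil => simp only [brAux]; split_ifs <;> simp
    | cons c t ih =>
      have h (a b : α) : brAux q j t b (fun l => (r • v) (a :: l)) = _ :=
        ih (fun l => v (a :: l)) b
      simp only [brAux, h]; split_ifs <;> module

/-- The braiding with `e_j` as a linear map. -/
noncomputable def brLin (j : α) : (List α → M) →ₗ[ℂ] (List α → M) where
  toFun := br q j
  map_add' v w := funext (br_add q j v w)
  map_smul' r v := funext (br_smul q j r v)

/-- The braid relation lets a Hecke operator pass through the braiding. -/
theorem hecke_br (hq : q ≠ 0) (j : α) (s : ℕ) (v : List α → M) (i : List α) :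
    hecke (· < ·) q (s + 1) (br q j v) i = br q j (hecke (· < ·) q s v) i := by
  induction s using Nat.strong_induction_on generalizing v i with
  | _ s ih =>
  match i with
  | [] => rfl
  | [b] =>
    rw [hecke_succ_cons, hecke_short _ _ _ _ _ (by simp), br_singleton,
      hecke_short _ _ _ _ _ (by simp), ite_self]
  | [b, c] =>
    rw [hecke_short _ _ _ _ _ (by simp)]
    rw [br_congr q j 1 (hecke (· < ·) q s v) 0 [b, c] rfl
      (fun l hl => hecke_short _ _ _ _ _ (by omega))]
    exact (congrFun (map_zero (brLin q j : (List α → M) →ₗ[ℂ] _)) [b, c]).symm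
  | b :: c :: d :: t =>
    rw [br_cons_cons]
    have e1 : hecke (· < ·) q (s + 1) (br q j v) (b :: c :: d :: t) =
        hecke (· < ·) q (s + 1) (hecke (· < ·) q 0 (shift (br q j) v)) (b :: c :: d :: t) := by
      refine hecke_congr _ _ _ _ _ _ fun l hl => ?_
      match l, hl with
      | a :: e :: l, _ => rfl
    rw [e1]
    cases s with
    | succ s =>
      rw [← hecke_zero_comm]
      refine hecke_congr _ _ _ _ _ _ fun l hl => ?_
      match l with
      | a :: l =>
        rw [hecke_succ_cons, shift_cons]
        exact ih s (by omega) (fun l => v (a :: l)) l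
    | zero =>
      have e2 : hecke (· < ·) q (0 + 1) (hecke (· < ·) q 0 (shift (br q j) v)) (b :: c :: d :: t) =
          hecke (· < ·) q (0 + 1) (hecke (· < ·) q 0 (hecke (· < ·) q (0 + 1)
            (shift (shift (br q j)) v))) (b :: c :: d :: t) := by
        refine hecke_congr _ _ _ _ _ _ fun l hl => hecke_congr _ _ _ _ _ _ fun l' hl' => ?_
        match l', hl'.trans hl with
        | a :: e :: f :: l', _ => rfl
      rw [e2, ← braid_lt hq]
      refine hecke_congr _ _ _ _ _ _ fun l hl => ?_
      match l, hl with
      | a :: e :: f :: l, _ =>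
        rw [shift_cons, hecke_succ_cons, br_cons_cons]
        refine hecke_congr _ _ _ _ _ _ fun l' hl' => ?_
        match l', hl' with
        | x :: y :: l', _ =>
          show _ = br q j (fun l => hecke (· < ·) q 0 v (a :: x :: l)) (y :: l')
          simp only [hecke_zero_cons]
          split_ifs
          · exact (br_smul q j q (fun l => v (a :: x :: l)) (y :: l')).symm
          · have h := br_add q j (fun l => v (x :: a :: l))
              ((q - q⁻¹) • (fun l => v (a :: x :: l))) (y :: l')
            rw [br_smul] at h
            exact h.symm
          · simp only [add_zero]
            rfl

/-- Skew-invertibility of the braiding: a family `u b` is determined by the sums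
`∑ b, br q j (u b) (b :: t)`. The diagonal terms are recovered by induction on the letter. -/
theorem br_inj (hq : q ≠ 0) [Fintype α] (n : ℕ) (u : α → List α → M)
    (h : ∀ j t, t.length = n → ∑ b, br q j (u b) (b :: t) = 0) (b : α) (t : List α)
    (ht : t.length = n) : u b t = 0 := by
  induction n generalizing u b t with
  | zero =>
    match t, ht with
    | [], _ =>
      have := h b [] rfl
      simpa [br_singleton] using this
  | succ n ih =>
    match t, ht with
    | c :: t, ht =>
      have ht' : t.length = n := by simpa using ht
      clear ht
      have key := fun (c b : α) (t) (ht : t.length = n) =>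
        ih (fun b => if b = c then q • (fun l => u c (c :: l)) +
          ∑ a ∈ Finset.univ.filter (· < c), (q - q⁻¹) • (fun l => u a (a :: l))
            else fun l => u b (c :: l)) (fun j t ht => by
          have e1 : ∀ b, br q j (u b) (b :: c :: t) =
              (if b = c then q • br q j (fun l => u c (c :: l)) (c :: t)
                else br q j (fun l => u b (c :: l)) (b :: t)) +
              if b < c then (q - q⁻¹) • br q j (fun l => u b (b :: l)) (c :: t) else 0 := by
            intro b
            rw [br_cons_cons, hecke_zero_cons]
            split_ifs with h1 h2 h2
            · exact absurd h1 h2.ne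
            · subst h1; exact (add_zero _).symm
            · rfl
            · rfl
          have e2 : br q j (q • (fun l => u c (c :: l)) +
              ∑ a ∈ Finset.univ.filter (· < c), (q - q⁻¹) • (fun l => u a (a :: l))) (c :: t) =
              q • br q j (fun l => u c (c :: l)) (c :: t) +
              ∑ b, if b < c then (q - q⁻¹) • br q j (fun l => u b (b :: l)) (c :: t) else 0 := by
            rw [← Finset.sum_filter]
            change brLin q j _ (c :: t) = q • brLin q j _ (c :: t) +
              ∑ b ∈ _, (q - q⁻¹) • brLin q j _ (c :: t)
            simp only [map_add, map_smul, map_sum, Pi.add_apply, Pi.smul_apply, Finset.sum_apply]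
          rw [← h j (c :: t) (by simp [ht]), Finset.sum_congr rfl fun b _ => e1 b,
            Finset.sum_add_distrib, ← Finset.add_sum_erase _ _ (Finset.mem_univ c),
            ← Finset.add_sum_erase (a := c) (f := fun b => if b = c then _ else _) _
              (Finset.mem_univ c), if_pos rfl, if_pos rfl, e2, add_right_comm]
          congr 2
          refine Finset.sum_congr rfl fun b hb => ?_
          rw [if_neg (Finset.ne_of_mem_erase hb), if_neg (Finset.ne_of_mem_erase hb)]) b t ht
      by_cases hbc : b = c
      · subst hbc
        clear h
        induction b using WellFoundedLT.induction with
        | _ b ihb =>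
          have := key b b t ht'
          rw [if_pos rfl] at this
          simp only [Pi.add_apply, Pi.smul_apply, Finset.sum_apply] at this
          rw [Finset.sum_eq_zero fun a ha => by
            rw [ihb a (Finset.mem_filter.1 ha).2, smul_zero], add_zero] at this
          exact (smul_eq_zero.1 this).resolve_left hq
      · have := key c b t ht'
        rwa [if_neg hbc] at this

end braiding
end TsyganRE

/-! ### Double braidings -/

namespace TsyganRE
section double
variable {α M : Type*} [LinearOrder α] [AddCommGroup M] [Module ℂ M] (q : ℂ)

/-- Two consecutive braidings, with `e_d` and then with `e_c`, the second on all slots but the first. -/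
noncomputable def br2 (c d : α) (v : List α → M) : List α → M := shift (br q c) (br q d v)

theorem br2_long (c d : α) (v : List α → M) (i : List α) (hi : 3 ≤ i.length) :
    br2 q c d v i = hecke (· < ·) q 1 (hecke (· < ·) q 0 (shift (br2 q c d) v)) i := by
  match i, hi with
  | a :: b :: e :: t, _ =>
    rw [br2, shift_cons, br_cons_cons, hecke_succ_cons]
    refine hecke_congr _ _ _ _ _ _ fun l hl => ?_
    match l, hl with
    | b :: e :: t, _ =>
      rw [shift_cons]
      have h (l : List α) : br q d v (a :: b :: l) =
        hecke (· < ·) q 0 (shift (br q d) v) (a :: b :: l) := br_cons_cons ..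
      simp only [h, hecke_zero_cons]
      split_ifs
      · exact br_smul q c q (fun l => shift (br q d) v (a :: b :: l)) (e :: t)
      · have h := br_add q c (fun l => shift (br q d) v (b :: a :: l))
              ((q - q⁻¹) • (fun l => shift (br q d) v (a :: b :: l))) (e :: t)
        rw [br_smul] at h
        exact h
      · simp only [add_zero]
        rfl

/-- The Hecke operator can be moved from the two slots of the output
to the two braided letters. -/
theorem hecke_br2 (hq : q ≠ 0) (c d : α) (v : List α → M) (i : List α) (hi : 2 ≤ i.length) :
    hecke (· < ·) q 0 (br2 q c d v) i =
      (if c = d then q • br2 q c d v else br2 q d c v +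
        if c > d then (q - q⁻¹) • br2 q c d v else 0) i := by
  obtain ⟨n, hn⟩ : ∃ n, i.length = n + 2 := ⟨i.length - 2, by omega⟩
  clear hi
  induction n generalizing v i with
  | zero =>
    match i, hn with
    | [a, b], _ =>
      have h (a b c d : α) : br2 q c d v [a, b] = if b = c then (if a = d then v [] else 0) else 0 :=
        rfl
      split_ifs <;>
        simp only [hecke_zero_cons, Pi.add_apply, Pi.smul_apply, h, Pi.zero_apply] <;>
        split_ifs <;> subst_vars <;> first | (exfalso; order) | simp_all
  | succ n ih =>
    have e1 : hecke (· < ·) q 0 (br2 q c d v) i =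
        hecke (· < ·) q 1 (hecke (· < ·) q 0 (hecke (· < ·) q 1 (shift (br2 q c d) v))) i := by
      rw [← braid_lt hq 0]
      exact hecke_congr _ _ _ _ _ _ fun l hl => br2_long q c d v l (by omega)
    have e2 : hecke (· < ·) q 0 (br2 q c d v) i =
        hecke (· < ·) q 1 (hecke (· < ·) q 0 (if c = d then q • shift (br2 q c d) v
          else shift (br2 q d c) v + if c > d then (q - q⁻¹) • shift (br2 q c d) v else 0)) i := by
      rw [e1]
      refine hecke_congr _ _ _ _ _ _ fun l hl => hecke_congr _ _ _ _ _ _ fun l' hl' => ?_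
      match l', hl'.trans (hl.trans hn) with
      | a :: l', h =>
        rw [hecke_succ_cons]
        refine (ih (fun l => v (a :: l)) l' (by simpa using h)).trans ?_
        split_ifs <;> rfl
    have hs (r : ℂ) (w : List α → M) (l) := hecke_smul (· < ·) q 0 r w l
    have hs' (r : ℂ) (w : List α → M) : hecke (· < ·) q 0 (r • w) = r • hecke (· < ·) q 0 w :=
      funext (hs r w)
    have ha (u w : List α → M) : hecke (· < ·) q 0 (u + w) =
      hecke (· < ·) q 0 u + hecke (· < ·) q 0 w := funext (hecke_add (· < ·) q 0 u w)
    rw [e2]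
    split_ifs <;>
      simp only [hs', ha, hecke_smul, hecke_add, add_zero, Pi.add_apply, Pi.smul_apply, Pi.zero_apply,
        br2_long q _ _ v i (by omega : 3 ≤ i.length)]
end double
end TsyganRE

/-! ### Braided powers of the matrix of generators -/

namespace TsyganRE
section reflection
variable {N : ℕ} (q : ℂ)

/-- The free algebra on the `N²` generators. -/
abbrev FA (N : ℕ) := FreeAlgebra ℂ (Fin N × Fin N)

/-- The generator `x^a_c`. -/
noncomputable def gen (a c : Fin N) : FA N := FreeAlgebra.ι ℂ (a, c)

/-- Multiplication by the matrix `T` of generators in the first tensor slot. -/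
noncomputable def Top (v : List (Fin N) → FA N) : List (Fin N) → FA N
  | [] => 0
  | a :: t => ∑ c, gen a c * v (c :: t)

theorem Top_cons (v : List (Fin N) → FA N) (a : Fin N) (t : List (Fin N)) :
    Top v (a :: t) = ∑ c, gen a c * v (c :: t) := rfl

/-- `Top` as a linear map. -/
noncomputable def TopLin : (List (Fin N) → FA N) →ₗ[ℂ] (List (Fin N) → FA N) where
  toFun := Top
  map_add' v w := by
    funext i
    cases i with
    | nil => exact (add_zero _).symm
    | cons a t => simp only [Top_cons, Pi.add_apply, mul_add, Finset.sum_add_distrib]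
  map_smul' r v := by
    funext i
    cases i with
    | nil =>
      change (0 : FA N) = r • (0 : FA N)
      rw [smul_zero]
    | cons a t =>
      simp only [Top_cons, Pi.smul_apply, mul_smul_comm, Finset.smul_sum, RingHom.id_apply]

/-- The Hecke operator as a linear map. -/
noncomputable def heckeLin {α M : Type*} [DecidableEq α] [AddCommGroup M] [Module ℂ M]
    (lt : α → α → Prop) [DecidableRel lt] (q : ℂ) (s : ℕ) : (List α → M) →ₗ[ℂ] (List α → M) where
  toFun := hecke lt q s
  map_add' v w := funext (hecke_add lt q s v w)
  map_smul' r v := funext (hecke_smul lt q s r v)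

/-- The entries of the braided power of `T`. The column `Z (j :: j')`, a vector in row words, arises
from `Z j'` by braiding with `e_j` and then applying `T` in the first slot; in degree two this is the
matrix `T₂ R̂ T₂`. -/
noncomputable def Z : List (Fin N) → List (Fin N) → FA N
  | [] => fun i => if i = [] then 1 else 0
  | j :: j' => Top (br q j (Z j'))

theorem Z_cons_cons (j : Fin N) (j' : List (Fin N)) (a : Fin N) (t : List (Fin N)) :
    Z q (j :: j') (a :: t) = ∑ c, gen a c * br q j (Z q j') (c :: t) := rfl

theorem Top_congr (v w : List (Fin N) → FA N) (i : List (Fin N))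
    (h : ∀ l, l.length = i.length → v l = w l) : Top v i = Top w i := by
  cases i with
  | nil => rfl
  | cons a t => exact Finset.sum_congr rfl fun c _ => by rw [h _ (by simp)]

theorem hecke_Top (s : ℕ) (v : List (Fin N) → FA N) :
    hecke (· < ·) q (s + 1) (Top v) = Top (hecke (· < ·) q (s + 1) v) := by
  funext i
  cases i with
  | nil => rfl
  | cons a t =>
    rw [Top_cons, hecke_succ_cons]
    have : (fun l => Top v (a :: l)) = ∑ c, fun l => LinearMap.mulLeft ℂ (gen a c) (v (c :: l)) := by
      funext l; simp [Top_cons]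
    rw [this]
    change heckeLin (· < ·) q s _ t = _
    rw [map_sum, Finset.sum_apply]
    exact Finset.sum_congr rfl fun c _ => (map_hecke _ q (LinearMap.mulLeft ℂ (gen a c)) s _ t).symm

theorem shift_br_Top (j : Fin N) (v : List (Fin N) → FA N) :
    shift (br q j) (Top v) = Top (shift (br q j) v) := by
  funext i
  cases i with
  | nil => rfl
  | cons a t =>
    rw [Top_cons, shift_cons]
    have : (fun l => Top v (a :: l)) = ∑ c, fun l => LinearMap.mulLeft ℂ (gen a c) (v (c :: l)) := by
      funext l; simp [Top_cons]
    rw [this]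
    change brLin q j _ t = _
    rw [map_sum, Finset.sum_apply]
    exact Finset.sum_congr rfl fun c _ => (map_br q (LinearMap.mulLeft ℂ (gen a c)) j _ t).symm

theorem br_Top (j : Fin N) (v : List (Fin N) → FA N) (i : List (Fin N)) (hi : 2 ≤ i.length) :
    br q j (Top v) i = hecke (· < ·) q 0 (Top (shift (br q j) v)) i := by
  match i, hi with
  | b :: c :: t, _ => rw [br_cons_cons, shift_br_Top]

/-- For a column word starting with `c, d`, the vector `Z` is `T₂ R̂ T₂` applied to a double braiding. -/
theorem Z_two (c d : Fin N) (j i : List (Fin N)) (hi : 2 ≤ i.length) :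
    Z q (c :: d :: j) i = Top (hecke (· < ·) q 0 (Top (br2 q c d (Z q j)))) i :=
  Top_congr _ _ _ fun l hl => br_Top q c _ l (hl ▸ hi)

/-- The defect `R_s Z R_s + Z` of the reflection equation in positions `s` and `s + 1`. Multiplication
by `R_s` on the left acts on row words through `<`, and on the right on column words through `>`. -/
noncomputable def E (s : ℕ) (j : List (Fin N)) : List (Fin N) → FA N :=
  hecke (· < ·) q s (hecke (· > ·) q s (Z q) j) + Z q j

/-- The relation matrix `R̂ T₂ R̂ T₂ R̂ + T₂ R̂ T₂` acting on vectors in row words. -/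
noncomputable def relOp (u : List (Fin N) → FA N) : List (Fin N) → FA N :=
  hecke (· < ·) q 0 (Top (hecke (· < ·) q 0 (Top (hecke (· < ·) q 0 u)))) +
    Top (hecke (· < ·) q 0 (Top u))

/-- The defect in position `s + 1` comes from the one in position `s` by the same recursion as `Z`. -/
theorem E_succ (hq : q ≠ 0) (s : ℕ) (j : Fin N) (j' : List (Fin N)) :
    E q (s + 1) (j :: j') = Top (br q j (E q s j')) := by
  have h1 : hecke (· > ·) q (s + 1) (Z q) (j :: j') =
      Top (br q j (hecke (· > ·) q s (Z q) j')) :=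
    (map_hecke (· > ·) q (TopLin ∘ₗ brLin q j) s (Z q) j').symm
  have h2 : br q j (hecke (· < ·) q s (hecke (· > ·) q s (Z q) j')) =
      hecke (· < ·) q (s + 1) (br q j (hecke (· > ·) q s (Z q) j')) :=
    funext fun i => (hecke_br q hq j s _ i).symm
  have h3 : Top (br q j (E q s j')) =
      Top (br q j (hecke (· < ·) q s (hecke (· > ·) q s (Z q) j'))) + Top (br q j (Z q j')) :=
    map_add (TopLin ∘ₗ brLin q j) _ _
  rw [h3, h2, ← hecke_Top, ← h1]
  rfl

/-- The defect in position `0` is the relation matrix applied to a double braiding: the right factor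
`R₀` on column words moves through the braidings by `hecke_br2`. -/
theorem E_zero (hq : q ≠ 0) (c d : Fin N) (j i : List (Fin N)) (hi : 2 ≤ i.length) :
    E q 0 (c :: d :: j) i = relOp q (br2 q c d (Z q j)) i := by
  have key : ∀ l, l.length = i.length → hecke (· > ·) q 0 (Z q) (c :: d :: j) l =
      Top (hecke (· < ·) q 0 (Top (hecke (· < ·) q 0 (br2 q c d (Z q j))))) l := by
    intro l hl
    have hl2 : 2 ≤ l.length := hl ▸ hi
    have e : Top (hecke (· < ·) q 0 (Top (hecke (· < ·) q 0 (br2 q c d (Z q j))))) l =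
        (TopLin ∘ₗ heckeLin (· < ·) q 0 ∘ₗ TopLin) (if c = d then q • br2 q c d (Z q j)
          else br2 q d c (Z q j) + if c > d then (q - q⁻¹) • br2 q c d (Z q j) else 0) l := by
      refine Top_congr _ _ _ fun l' hl' => hecke_congr _ _ _ _ _ _ fun l'' hl'' =>
        Top_congr _ _ _ fun l₃ hl₃ => ?_
      exact hecke_br2 q hq c d _ _ (by omega)
    rw [e, hecke_zero_cons]
    have z (c d : Fin N) : Z q (c :: d :: j) l =
      (TopLin ∘ₗ heckeLin (· < ·) q 0 ∘ₗ TopLin) (br2 q c d (Z q j)) l := Z_two q c d j l hl2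
    split_ifs <;> simp only [map_add, map_smul, Pi.add_apply, Pi.smul_apply, z, add_zero, Pi.zero_apply]
  rw [E, relOp, Pi.add_apply, Pi.add_apply, Z_two q c d j i hi,
    hecke_congr _ _ _ _ _ _ key]

end reflection
end TsyganRE

/-! ### Functionals on the free algebra -/

namespace TsyganRE
section functionals
variable {N : ℕ} (q : ℂ)

/-- The R-matrix with entries in the free algebra. -/
noncomputable def RFmat (N : ℕ) (q : ℂ) : Matrix (Fin N × Fin N) (Fin N × Fin N) (FA N) :=
  (Rhat N q).map (algebraMap ℂ (FA N))

/-- The matrix of defining relations. -/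
noncomputable def rel (N : ℕ) (q : ℂ) : Matrix (Fin N × Fin N) (Fin N × Fin N) (FA N) :=
  RFmat N q * T2mat N * RFmat N q * T2mat N * RFmat N q + T2mat N * RFmat N q * T2mat N

/-- The vector indexed by `Fin N × Fin N` obtained from the values of `u` at the words `a :: b :: t`,
where `a` stands for the second tensor factor. -/
def vec (u : List (Fin N) → FA N) (t : List (Fin N)) : Fin N × Fin N → FA N :=
  fun p => u (p.2 :: p.1 :: t)

theorem RF_mulVec (u : List (Fin N) → FA N) (t : List (Fin N)) :
    (RFmat N q).mulVec (vec u t) = vec (hecke (· < ·) q 0 u) t := by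
  funext ⟨b, a⟩
  have e : ∀ p : Fin N × Fin N, RFmat N q (b, a) p * vec u t p =
      (if p = (b, a) then (if a = b then q else if a < b then q - q⁻¹ else 0) • vec u t (b, a)
        else 0) + if p = (a, b) then (if a = b then (0 : FA N) else vec u t (a, b)) else 0 := by
    rintro ⟨c, d⟩
    rw [RFmat, Matrix.map_apply, ← Algebra.smul_def]
    simp only [Rhat, Prod.mk.injEq]
    rcases lt_trichotomy c d with h | h | h
    · by_cases h1 : c = b ∧ d = a
      · obtain ⟨rfl, rfl⟩ := h1
        simp [h.ne, h.ne', h, h.not_gt]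
      · by_cases h2 : c = a ∧ d = b
        · obtain ⟨rfl, rfl⟩ := h2
          simp [h.ne, h.ne', h]
        · have h3 : ¬ (b = d ∧ a = c) := fun h => h2 ⟨h.2.symm, h.1.symm⟩
          rw [if_neg h.ne, if_pos h, if_neg h1, if_neg h2, if_neg h3, zero_smul, add_zero]
    · subst h
      by_cases h1 : c = b
      · subst h1
        by_cases h2 : c = a
        · subst h2; simp
        · simp [h2, Ne.symm h2]
      · have h1' : ¬ b = c := fun h => h1 h.symm
        by_cases h2 : c = a <;> simp [h1, h1']
    · by_cases h1 : c = b ∧ d = a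
      · obtain ⟨rfl, rfl⟩ := h1
        simp [h.ne, h.ne', h, h.not_gt]
      · by_cases h2 : c = a ∧ d = b
        · obtain ⟨rfl, rfl⟩ := h2
          simp [h.ne, h.ne', h.not_gt]
        · have h3 : ¬ (b = d ∧ a = c) := fun h => h2 ⟨h.2.symm, h.1.symm⟩
          have h4 : ¬ (b = c ∧ a = d) := fun h => h1 ⟨h.1.symm, h.2.symm⟩
          rw [if_neg h.ne', if_neg h.not_gt, if_neg h1, if_neg h2, if_neg h3, if_neg h4,
            add_zero, zero_smul, add_zero]
  rw [Matrix.mulVec, dotProduct, Finset.sum_congr rfl fun p _ => e p, Finset.sum_add_distrib]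
  simp only [Finset.sum_ite_eq', Finset.mem_univ, if_true, vec, hecke_zero_cons]
  split_ifs <;> simp_all [add_comm]

theorem T2_mulVec (u : List (Fin N) → FA N) (t : List (Fin N)) :
    (T2mat N).mulVec (vec u t) = vec (Top u) t := by
  funext ⟨b, a⟩
  rw [Matrix.mulVec, dotProduct, Fintype.sum_prod_type]
  simp only [T2mat, vec, Top_cons, gen, ite_mul, zero_mul, one_mul]
  rw [Finset.sum_comm]
  refine Finset.sum_congr rfl fun c _ => ?_
  simp

theorem relOp_eq (u : List (Fin N) → FA N) (a b : Fin N) (t : List (Fin N)) :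
    relOp q u (a :: b :: t) = ∑ p, rel N q (b, a) p * u (p.2 :: p.1 :: t) := by
  have h : vec (relOp q u) t = (rel N q).mulVec (vec u t) := by
    simp only [rel, Matrix.add_mulVec, ← Matrix.mulVec_mulVec, RF_mulVec, T2_mulVec]
    rfl
  exact congrFun h (b, a)

/-- The monomial of a word in the generators. -/
noncomputable def mon (l : List (Fin N × Fin N)) : FA N := (l.map (FreeAlgebra.ι ℂ)).prod

/-- The functional `y ↦ φ (z y)`. -/
noncomputable def lmul (φ : FA N →ₗ[ℂ] ℂ) (z : FA N) : FA N →ₗ[ℂ] ℂ := φ ∘ₗ LinearMap.mulLeft ℂ z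

theorem lmul_apply (φ : FA N →ₗ[ℂ] ℂ) (z y : FA N) : lmul φ z y = φ (z * y) := rfl

/-- A functional applied to `Top (br q j v)` is a sum of braidings of scalar vectors, a form to which
`br_inj` applies. -/
theorem apply_Z_cons (φ : FA N →ₗ[ℂ] ℂ) (v : List (Fin N) → FA N) (j a : Fin N) (t : List (Fin N)) :
    φ (Top (br q j v) (a :: t)) = ∑ c, br q j (fun l => lmul φ (gen a c) (v l)) (c :: t) := by
  rw [Top_cons, map_sum]
  exact Finset.sum_congr rfl fun c _ => map_br q (lmul φ (gen a c)) j v (c :: t)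

theorem br_eq_zero {M : Type*} [AddCommGroup M] [Module ℂ M] (j : Fin N) (n : ℕ)
    (v : List (Fin N) → M) (i : List (Fin N)) (hi : i.length = n + 1)
    (h : ∀ l, l.length = n → v l = 0) : br q j v i = 0 := by
  rw [br_congr q j n v 0 i hi h]
  exact congrFun (map_zero (brLin q j : (List (Fin N) → M) →ₗ[ℂ] _)) i

theorem mon_cons (p : Fin N × Fin N) (l : List (Fin N × Fin N)) :
    mon (p :: l) = gen p.1 p.2 * mon l := by simp [mon, gen]

/-- A functional vanishing on the entries `Z j i` of degree `k` vanishes in degree `k`, and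
conversely. -/
theorem apply_Z_iff (hq : q ≠ 0) (k : ℕ) (φ : FA N →ₗ[ℂ] ℂ) :
    (∀ j i, j.length = k → i.length = k → φ (Z q j i) = 0) ↔ ∀ l, l.length = k → φ (mon l) = 0 := by
  induction k generalizing φ with
  | zero =>
    constructor
    · intro h l hl
      have := h [] [] rfl rfl
      rw [List.length_eq_zero_iff.1 hl]
      simpa [Z, mon] using this
    · intro h j i hj hi
      have := h [] rfl
      rw [List.length_eq_zero_iff.1 hj, List.length_eq_zero_iff.1 hi]
      simpa [Z, mon] using this
  | succ k ih =>
    constructor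
    · intro h l hl
      match l, hl with
      | p :: l, hl =>
        rw [mon_cons, ← lmul_apply]
        refine (ih _).1 (fun j i hj hi => ?_) l (by simpa using hl)
        refine br_inj q hq k (fun c l => lmul φ (gen p.1 c) (Z q j l)) (fun j' t ht => ?_) p.2 i hi
        rw [← apply_Z_cons q φ (Z q j) j' p.1 t]
        exact h (j' :: j) (p.1 :: t) (by simp [hj]) (by simp [ht])
    · intro h j i hj hi
      match j, i, hj, hi with
      | j' :: j, a :: t, hj, hi =>
        rw [Z, apply_Z_cons]
        refine Finset.sum_eq_zero fun c _ => br_eq_zero q j' k _ _ (by simpa using hi) fun l hl => ?_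
        refine (ih _).2 (fun l hl => ?_) j l (by simpa using hj) hl
        rw [lmul_apply]
        have := h ((a, c) :: l) (by simp [hl])
        rwa [mon_cons] at this

/-- A functional vanishes on the defects in position `0` if and only if it vanishes on the products of
a relation with a word on its right. -/
theorem E_zero_iff (hq : q ≠ 0) (n : ℕ) (φ : FA N →ₗ[ℂ] ℂ) :
    (∀ j i, j.length = n + 2 → i.length = n + 2 → φ (E q 0 j i) = 0) ↔
      ∀ p r v, v.length = n → φ (rel N q p r * mon v) = 0 := by
  have key : ∀ (c d a b : Fin N) (j t : List (Fin N)), φ (E q 0 (c :: d :: j) (a :: b :: t)) =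
      ∑ x, br q c (fun l => ∑ y, br q d (fun l' => lmul φ (rel N q (b, a) (x, y)) (Z q j l'))
        (y :: l)) (x :: t) := by
    intro c d a b j t
    rw [E_zero q hq c d j _ (by simp), relOp_eq, map_sum, Fintype.sum_prod_type]
    refine Finset.sum_congr rfl fun x _ => ?_
    have e : (fun l => ∑ y, br q d (fun l' => lmul φ (rel N q (b, a) (x, y)) (Z q j l')) (y :: l)) =
        ∑ y, fun l => lmul φ (rel N q (b, a) (x, y)) (br q d (Z q j) (y :: l)) := by
      funext l
      rw [Finset.sum_apply]
      exact Finset.sum_congr rfl fun y _ => (map_br q _ d _ _).symm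
    rw [e]
    refine Eq.trans ?_ (congrFun (map_sum (brLin q c) _ Finset.univ) (x :: t)).symm
    rw [Finset.sum_apply]
    exact Finset.sum_congr rfl fun y _ =>
      map_br q (lmul φ (rel N q (b, a) (x, y))) c (fun l => br q d (Z q j) (y :: l)) (x :: t)
  constructor
  · rintro h ⟨b, a⟩ ⟨x, y⟩ v hv
    rw [← lmul_apply]
    refine (apply_Z_iff q hq n _).1 (fun j i hj hi => ?_) v hv
    refine br_inj q hq n (fun y l => lmul φ (rel N q (b, a) (x, y)) (Z q j l)) (fun d t ht => ?_)
      y i hi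
    refine br_inj q hq n (fun x l => ∑ y, br q d (fun l' => lmul φ (rel N q (b, a) (x, y))
      (Z q j l')) (y :: l)) (fun c t ht => ?_) x t ht
    rw [← key c d a b j t]
    exact h _ _ (by simp [hj]) (by simp [ht])
  · intro h j i hj hi
    match j, i, hj, hi with
    | c :: d :: j, a :: b :: t, hj, hi =>
      have hj : j.length = n := by simpa using hj
      have hi : t.length = n := by simpa using hi
      rw [key]
      refine Finset.sum_eq_zero fun x _ => br_eq_zero q c n _ _ (by simp [hi]) fun l hl => ?_
      refine Finset.sum_eq_zero fun y _ => br_eq_zero q d n _ _ (by simp [hl]) fun l' hl' => ?_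
      exact (apply_Z_iff q hq n _).2 (fun v hv => h _ _ v hv) j l' hj hl'

/-- A functional vanishes on the degree `k` part of the ideal if and only if it vanishes on all
the defects of degree `k`. -/
theorem E_iff (hq : q ≠ 0) (k : ℕ) (φ : FA N →ₗ[ℂ] ℂ) :
    (∀ s j i, s + 2 ≤ k → j.length = k → i.length = k → φ (E q s j i) = 0) ↔
      ∀ u p r v, u.length + v.length + 2 = k → φ (mon u * rel N q p r * mon v) = 0 := by
  induction k generalizing φ with
  | zero => exact ⟨fun _ _ _ _ _ h => by omega, fun _ _ _ _ h => by omega⟩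
  | succ k ih =>
    constructor
    · intro h u p r v huv
      match u, huv with
      | [], huv =>
        obtain ⟨n, rfl⟩ : ∃ n, k = n + 1 := ⟨v.length, by simp at huv; omega⟩
        rw [show mon ([] : List (Fin N × Fin N)) = 1 from rfl, one_mul]
        exact (E_zero_iff q hq n φ).1 (fun j i hj hi => h 0 j i (by omega) hj hi) p r v
          (by simp at huv; omega)
      | (a, c) :: u, huv =>
        rw [mon_cons, mul_assoc, mul_assoc, ← mul_assoc (mon u), ← lmul_apply]
        refine (ih _).1 (fun s j i hs hj hi => ?_) u p r v (by simp at huv; omega)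
        refine br_inj q hq k (fun c l => lmul φ (gen a c) (E q s j l)) (fun j' t ht => ?_) c i hi
        rw [← apply_Z_cons q φ (E q s j) j' a t, ← E_succ q hq]
        exact h (s + 1) _ _ (by omega) (by simp [hj]) (by simp [ht])
    · intro h s j i hs hj hi
      match s, j, i, hj, hi with
      | 0, j, i, hj, hi =>
        obtain ⟨n, rfl⟩ : ∃ n, k = n + 1 := ⟨k - 1, by omega⟩
        refine (E_zero_iff q hq n φ).2 (fun p r v hv => ?_) j i hj hi
        have := h [] p r v (by simp [hv])
        rwa [show mon ([] : List (Fin N × Fin N)) = 1 from rfl, one_mul] at this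
      | s + 1, j' :: j, a :: t, hj, hi =>
        rw [E_succ q hq, apply_Z_cons]
        refine Finset.sum_eq_zero fun c _ => br_eq_zero q j' k _ _ (by simpa using hi) fun l hl => ?_
        refine (ih _).2 (fun u p r v huv => ?_) s j l (by omega) (by simpa using hj) hl
        rw [lmul_apply]
        have := h ((a, c) :: u) p r v (by simp; omega)
        rwa [mon_cons, mul_assoc, mul_assoc, ← mul_assoc (mon u)] at this

end functionals
end TsyganRE

/-! ### The dual of the quotient as a space of solutions of `Cond` -/

namespace TsyganRE
section realization
variable {N : ℕ} (q : ℂ)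

theorem basis_eq_mon (l : List (Fin N × Fin N)) :
    FreeAlgebra.basisFreeMonoid ℂ (Fin N × Fin N) (FreeMonoid.ofList l) = mon l := by
  simp [FreeAlgebra.basisFreeMonoid, FreeAlgebra.equivMonoidAlgebraFreeMonoid, mon,
    FreeMonoid.lift_apply]

/-- The linear functional with prescribed values on monomials. -/
noncomputable def functional : (List (Fin N × Fin N) → ℂ) →ₗ[ℂ] (FA N →ₗ[ℂ] ℂ) :=
  ((FreeAlgebra.basisFreeMonoid ℂ (Fin N × Fin N)).constr ℂ).toLinearMap

theorem functional_mon (f : List (Fin N × Fin N) → ℂ) (l : List (Fin N × Fin N)) :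
    functional f (mon l) = f l := by
  rw [← basis_eq_mon]
  exact (FreeAlgebra.basisFreeMonoid ℂ (Fin N × Fin N)).constr_basis ℂ f (FreeMonoid.ofList l)

/-- The values on the entries `Z j i` of degree `k` of a functional can be prescribed
arbitrarily. -/
theorem exists_functional (hq : q ≠ 0) (k : ℕ) (A : List (Fin N) → List (Fin N) → ℂ) :
    ∃ φ : FA N →ₗ[ℂ] ℂ, (∀ l, l.length ≠ k → φ (mon l) = 0) ∧
      ∀ j i, j.length = k → i.length = k → φ (Z q j i) = A j i := by
  classical
  let ext : (List.Vector (Fin N × Fin N) k → ℂ) →ₗ[ℂ] (List (Fin N × Fin N) → ℂ) :=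
    LinearMap.pi fun l => if h : l.length = k then
      LinearMap.proj (φ := fun _ : List.Vector (Fin N × Fin N) k => ℂ) ⟨l, h⟩ else 0
  let Φ : (List.Vector (Fin N × Fin N) k → ℂ) →ₗ[ℂ]
      (List.Vector (Fin N) k × List.Vector (Fin N) k → ℂ) :=
    { toFun := fun f p => functional (ext f) (Z q p.1.1 p.2.1)
      map_add' := fun f g => by funext l; simp
      map_smul' := fun r f => by funext l; simp }
  have ext_ne (f) (l : List (Fin N × Fin N)) (hl : l.length ≠ k) : ext f l = 0 := by
    simp [ext, hl]
  have ext_eq (f) (l : List (Fin N × Fin N)) (hl : l.length = k) : ext f l = f ⟨l, hl⟩ := by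
    rw [LinearMap.pi_apply, dif_pos hl]
    rfl
  have inj : Function.Injective Φ := by
    rw [injective_iff_map_eq_zero]
    intro f hf
    funext ⟨l, hl⟩
    rw [← ext_eq f l hl, ← functional_mon (ext f)]
    exact (apply_Z_iff q hq k (functional (ext f))).1
      (fun j i hj hi => congrFun hf (⟨j, hj⟩, ⟨i, hi⟩)) l hl
  have surj : Function.Surjective Φ :=
    (LinearMap.injective_iff_surjective_of_finrank_eq_finrank (by
      rw [Module.finrank_fintype_fun_eq_card, Module.finrank_fintype_fun_eq_card, Fintype.card_prod,
        card_vector, card_vector, Fintype.card_prod, mul_pow])).1 inj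
  obtain ⟨f, hf⟩ := surj fun p => A p.1.1 p.2.1
  refine ⟨functional (ext f), fun l hl => ?_, fun j i hj hi => congrFun hf (⟨j, hj⟩, ⟨i, hi⟩)⟩
  rw [functional_mon, ext_ne f l hl]

theorem hecke_inv_right {α M : Type*} [LinearOrder α] [AddCommGroup M] [Module ℂ M] {q : ℂ}
    (hq : q ≠ 0) (s : ℕ) (v : List α → M) (l : List α) (h : s + 2 ≤ l.length) :
    hecke (· < ·) q s (hecke (· > ·) q⁻¹ s v) l = v l := by
  have h1 := hecke_inv_eq (q := q) s (hecke (· > ·) q⁻¹ s v) l h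
  rw [hecke_inv_sq hq s v l h] at h1
  exact (sub_left_injective h1).symm

/-- The equations `A R_s = -R_s⁻¹ A` satisfied by the values `A j i = φ (Z j i)` of a functional `φ`
that vanishes on the degree `k` part of the ideal. -/
def Cond (k : ℕ) (A : List (Fin N) → List (Fin N) → ℂ) : Prop :=
  ∀ s j i, s + 2 ≤ k → j.length = k → i.length = k →
    hecke (· > ·) q s A j i = -hecke (· > ·) q⁻¹ s (A j) i

/-- A functional vanishes on the defects `R_s Z R_s + Z` if and only if its values `A` on `Z` satisfy
`A R_s = -R_s⁻¹ A`. -/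
theorem cond_iff (hq : q ≠ 0) (k : ℕ) (φ : FA N →ₗ[ℂ] ℂ) :
    Cond q k (fun j i => φ (Z q j i)) ↔
      ∀ s j i, s + 2 ≤ k → j.length = k → i.length = k → φ (E q s j i) = 0 := by
  set A : List (Fin N) → List (Fin N) → ℂ := fun j i => φ (Z q j i) with hA
  have key : ∀ s j i, φ (E q s j i) = hecke (· < ·) q s (hecke (· > ·) q s A j) i + A j i := by
    intro s j i
    rw [E, Pi.add_apply, map_add, map_hecke]
    congr 2
    funext i'
    exact (map_hecke (· > ·) q (φ ∘ₗ LinearMap.proj i') s (Z q) j).trans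
      (map_hecke (· > ·) q (LinearMap.proj i') s A j).symm
  constructor
  · intro h s j i hs hj hi
    rw [key, hecke_congr _ _ s _ ((-1 : ℂ) • hecke (· > ·) q⁻¹ s (A j)) i fun i' hi' => by
      rw [h s j i' hs hj (hi'.trans hi), Pi.smul_apply, neg_one_smul], hecke_smul,
      hecke_inv_right hq s _ i (by omega)]
    simp
  · intro h s j i hs hj hi
    rw [← hecke_inv_left hq s (hecke (· > ·) q s A j) i (by omega), hecke_congr _ _ s _ ((-1 : ℂ) • (A j)) i fun i' hi' => by
      rw [Pi.smul_apply, neg_one_smul]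
      have := h s j i' hs hj (hi'.trans hi)
      rw [key] at this
      exact eq_neg_of_add_eq_zero_left this, hecke_smul, neg_one_smul]

end realization
end TsyganRE

/-! ### Sorting words and the braid relations -/

namespace TsyganRE
section lists
variable {β : Type*} [LinearOrder β]

/-- The number of inversions of a word. -/
def inv : List β → ℕ
  | [] => 0
  | x :: t => t.countP (· < x) + inv t

theorem inv_swap (u : List β) {x y : β} (h : x < y) (v : List β) :
    inv (u ++ y :: x :: v) = inv (u ++ x :: y :: v) + 1 := by
  induction u with
  | nil =>
    simp only [List.nil_append, inv, List.countP_cons, h, h.not_gt, decide_true, decide_false]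
    simp
    omega
  | cons a u ih =>
    have : (u ++ y :: x :: v).countP (· < a) = (u ++ x :: y :: v).countP (· < a) :=
      List.Perm.countP_eq _ ((List.Perm.swap x y v).append_left u)
    simp only [List.cons_append, inv, ih, this]
    omega

theorem inv_sorted (l : List β) (h : l.Pairwise (· ≤ ·)) : inv l = 0 := by
  induction l with
  | nil => rfl
  | cons a t ih =>
    rw [List.pairwise_cons] at h
    rw [inv, ih h.2, List.countP_eq_zero.2]
    intro b hb
    simpa using h.1 b hb

/-- A property of words that holds for weakly increasing words and is preserved by transposing an
increasing pair of neighbours holds for all words. -/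
theorem sort_induction (p : List β → Prop) (h0 : ∀ l, l.Pairwise (· ≤ ·) → p l)
    (h1 : ∀ u x y v, x < y → p (u ++ x :: y :: v) → p (u ++ y :: x :: v)) (l : List β) : p l := by
  induction hn : inv l using Nat.strong_induction_on generalizing l with
  | _ n ih =>
    by_cases hl : l.Pairwise (· ≤ ·)
    · exact h0 l hl
    · rw [← List.isChain_iff_pairwise, List.isChain_iff_forall_rel_of_append_cons_cons] at hl
      push Not at hl
      obtain ⟨y, x, u, v, rfl, hxy⟩ := hl
      exact h1 u x y v hxy (ih _ (by rw [← hn, inv_swap u hxy]; omega) _ rfl)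

theorem exists_adjacent_eq (l : List β) (h : l.Pairwise (· ≤ ·)) (h' : ¬ l.Pairwise (· < ·)) :
    ∃ u x v, l = u ++ x :: x :: v := by
  rw [← List.isChain_iff_pairwise, List.isChain_iff_forall_rel_of_append_cons_cons] at h'
  push Not at h'
  obtain ⟨x, y, u, v, rfl, hxy⟩ := h'
  have hyx : x ≤ y := by
    rw [List.pairwise_append, List.pairwise_cons] at h
    exact h.2.1.1 y (by simp)
  obtain rfl := le_antisymm hyx hxy
  exact ⟨u, x, v, rfl⟩

/-- In an increasing word the positions from the number of letters `< c` up to the number of letters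
`≤ c` are occupied by `c`. -/
theorem sorted_block (c : β) (l : List β) (hl : l.Pairwise (· ≤ ·)) (s : ℕ)
    (h1 : l.countP (· < c) ≤ s) (h2 : s + 2 ≤ l.countP (· ≤ c)) :
    ∃ u v, l = u ++ c :: c :: v ∧ u.length = s := by
  have big : ∀ (a : β) (t : List β), (a :: t).Pairwise (· ≤ ·) → 0 < (a :: t).countP (· ≤ c) →
      a ≤ c := by
    intro a t h h'
    obtain ⟨b, hb, hbc⟩ := List.countP_pos_iff.1 h'
    rw [List.pairwise_cons] at h
    rcases List.mem_cons.1 hb with rfl | hb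
    · simpa using hbc
    · exact (h.1 b hb).trans (by simpa using hbc)
  induction l generalizing s with
  | nil => simp at h2
  | cons a t ih =>
    have hac := big a t hl (by omega)
    have ht := (List.pairwise_cons.1 hl).2
    rcases hac.lt_or_eq with hac' | rfl
    · simp only [List.countP_cons, hac, hac', decide_true, if_true] at h1 h2
      obtain ⟨s, rfl⟩ : ∃ s', s = s' + 1 := ⟨s - 1, by omega⟩
      obtain ⟨u, v, rfl, hu⟩ := ih ht s (by omega) (by omega)
      exact ⟨a :: u, v, rfl, by simp [hu]⟩
    · simp only [List.countP_cons, le_refl, decide_true, if_true] at h2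
      cases s with
      | zero =>
        match t, ht, h2 with
        | b :: t, ht, h2 =>
          have hb := big b t ht (by omega)
          have hb' := (List.pairwise_cons.1 hl).1 b (by simp)
          obtain rfl := le_antisymm hb hb'
          exact ⟨[], t, rfl, rfl⟩
      | succ s =>
        have h0 : t.countP (· < a) = 0 := by
          rw [List.countP_eq_zero]
          intro b hb
          simpa using (List.pairwise_cons.1 hl).1 b hb
        obtain ⟨u, v, rfl, hu⟩ := ih ht s (by omega) (by omega)
        exact ⟨a :: u, v, rfl, by simp [hu]⟩

end lists

section action
variable {α W : Type*} [LinearOrder α] [AddCommGroup W] [Module ℂ W] (P : ℕ → W →ₗ[ℂ] W)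

/-- The product `P n ∘ P (n + 1) ∘ ⋯ ∘ P (n + r - 1)`. -/
def cyc (n : ℕ) : ℕ → W →ₗ[ℂ] W
  | 0 => LinearMap.id
  | r + 1 => cyc n r ∘ₗ P (n + r)

theorem cyc_succ (n r : ℕ) (w : W) : cyc P n (r + 1) w = P n (cyc P (n + 1) r w) := by
  induction r generalizing w with
  | zero => rfl
  | succ r ih =>
    change cyc P n (r + 1) (P (n + (r + 1)) w) = P n (cyc P (n + 1) r (P (n + 1 + r) w))
    rw [ih, show n + (r + 1) = n + 1 + r by ring]

/-- The action, on the strands from `n` on, of the shortest permutation carrying the increasing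
rearrangement of the word to the word itself: the operators `P n` stand for the generators of the
braid monoid, and the first letter `a` passes all the letters smaller than `a`. -/
def sortOp : List α → ℕ → W →ₗ[ℂ] W
  | [], _ => LinearMap.id
  | a :: t, n => sortOp t (n + 1) ∘ₗ cyc P n (t.countP (· < a))

variable (far : ∀ m n, m + 2 ≤ n → ∀ w, P m (P n w) = P n (P m w))
  (braid : ∀ n w, P n (P (n + 1) (P n w)) = P (n + 1) (P n (P (n + 1) w)))

include far in
theorem cyc_far_right (n r m : ℕ) (h : n + r + 1 ≤ m) (w : W) :
    P m (cyc P n r w) = cyc P n r (P m w) := by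
  induction r generalizing w with
  | zero => rfl
  | succ r ih =>
    change P m (cyc P n r (P (n + r) w)) = cyc P n r (P (n + r) (P m w))
    rw [ih (by omega), far (n + r) m (by omega)]

include far in
theorem cyc_far_left (n r m : ℕ) (h : m + 2 ≤ n) (w : W) :
    P m (cyc P n r w) = cyc P n r (P m w) := by
  induction r generalizing w with
  | zero => rfl
  | succ r ih =>
    change P m (cyc P n r (P (n + r) w)) = cyc P n r (P (n + r) (P m w))
    rw [ih, far m (n + r) (by omega)]

include far braid in
theorem cyc_slide (n m s : ℕ) (h : s + 2 ≤ m) (w : W) :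
    cyc P n m (P (n + s) w) = P (n + s + 1) (cyc P n m w) := by
  induction m generalizing w with
  | zero => omega
  | succ m ih =>
    change cyc P n m (P (n + m) (P (n + s) w)) = P (n + s + 1) (cyc P n m (P (n + m) w))
    by_cases hs : s + 2 ≤ m
    · rw [← far (n + s) (n + m) (by omega), ih hs]
    · obtain rfl : m = s + 1 := by omega
      change cyc P n s (P (n + s) (P (n + s + 1) (P (n + s) w))) =
        P (n + s + 1) (cyc P n s (P (n + s) (P (n + s + 1) w)))
      rw [braid, cyc_far_right P far n s _ (by omega)]

include far braid in
theorem cyc_cyc (n m m' : ℕ) (h : m' ≤ m) (w : W) :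
    cyc P n (m + 1) (cyc P n m' w) = cyc P (n + 1) m' (cyc P n (m + 1) w) := by
  induction m' generalizing w with
  | zero => rfl
  | succ s ih =>
    change cyc P n (m + 1) (cyc P n s (P (n + s) w)) =
      cyc P (n + 1) s (P (n + 1 + s) (cyc P n (m + 1) w))
    rw [ih (by omega), cyc_slide P far braid n (m + 1) s (by omega),
      show n + s + 1 = n + 1 + s by ring]

include far in
theorem sortOp_far (j : List α) (n m : ℕ) (h : m + 2 ≤ n) (w : W) :
    P m (sortOp P j n w) = sortOp P j n (P m w) := by
  induction j generalizing n w with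
  | nil => rfl
  | cons a t ih =>
    change P m (sortOp P t (n + 1) (cyc P n _ w)) = sortOp P t (n + 1) (cyc P n _ (P m w))
    rw [ih (n + 1) (by omega), cyc_far_left P far n _ m h]

theorem sortOp_sorted (j : List α) (hj : j.Pairwise (· ≤ ·)) (n : ℕ) (w : W) :
    sortOp P j n w = w := by
  induction j generalizing n w with
  | nil => rfl
  | cons a t ih =>
    rw [List.pairwise_cons] at hj
    have h0 : t.countP (· < a) = 0 := by
      rw [List.countP_eq_zero]
      intro b hb
      simpa using hj.1 b hb
    change sortOp P t (n + 1) (cyc P n _ w) = w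
    rw [h0, ih hj.2]
    rfl

variable {P} in
/-- The vector `w` is an eigenvector of the generators permuting equal letters of the sorted
rearrangement of `j`, shifted by `n`. -/
def Good (P : ℕ → W →ₗ[ℂ] W) (q : ℂ) (j : List α) (n : ℕ) (w : W) : Prop :=
  ∀ c s, j.countP (· < c) ≤ s → s + 2 ≤ j.countP (· ≤ c) → P (n + s) w = q • w

include far braid in
/-- Splitting off the first letter, the block of positions carrying a given letter is moved by `cyc`
to its place in the remaining word. -/
theorem Good.tail {q : ℂ} {a : α} {t : List α} {n : ℕ} {w : W} (h : Good P q (a :: t) n w) :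
    Good P q t (n + 1) (cyc P n (t.countP (· < a)) w) := by
  intro c s h1 h2
  rcases lt_or_ge c a with hc | hc
  · have hr : t.countP (· ≤ c) ≤ t.countP (· < a) :=
      List.countP_mono_left fun x _ hx => by simpa using lt_of_le_of_lt (by simpa using hx) hc
    rw [show n + 1 + s = n + s + 1 by ring, ← cyc_slide P far braid n _ s (by omega),
      h c s (by simpa [List.countP_cons, hc.le] using h1)
        (h2.trans (by simp [List.countP_cons])), map_smul]
  · have hr : t.countP (· < a) ≤ t.countP (· < c) :=
      List.countP_mono_left fun x _ hx => by simpa using lt_of_lt_of_le (by simpa using hx) hc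
    rw [cyc_far_right P far n _ _ (by omega), show n + 1 + s = n + (s + 1) by ring,
      h c (s + 1) (by rw [List.countP_cons]; split_ifs <;> omega)
        (by rw [List.countP_cons, if_pos (by simpa using hc)]; omega), map_smul]

include far braid in
/-- Equal neighbours in the word: the generator at their position acts by `q`. -/
theorem sortOp_eq {q : ℂ} (u : List α) (c : α) (v : List α) (n : ℕ) (w : W)
    (h : Good P q (u ++ c :: c :: v) n w) :
    P (n + u.length) (sortOp P (u ++ c :: c :: v) n w) = q • sortOp P (u ++ c :: c :: v) n w := by
  induction u generalizing n w with
  | nil =>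
    change P n (sortOp P v (n + 2) (cyc P (n + 1) _ (cyc P n ((c :: v).countP (· < c)) w))) =
      q • sortOp P v (n + 2) (cyc P (n + 1) _ (cyc P n ((c :: v).countP (· < c)) w))
    have e : (c :: v).countP (· < c) = v.countP (· < c) := by simp
    have hm := h c (v.countP (· < c)) (by simp) (by
      simp only [List.nil_append, List.countP_cons, le_refl, decide_true, if_true]
      have : v.countP (· < c) ≤ v.countP (· ≤ c) :=
        List.countP_mono_left fun x _ hx => by simpa using le_of_lt (by simpa using hx)
      omega)
    rw [e, sortOp_far P far _ _ _ le_rfl, ← cyc_succ, cyc_cyc P far braid _ _ _ le_rfl]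
    change sortOp P v (n + 2) (cyc P (n + 1) _ (cyc P n _ (P (n + v.countP (· < c)) w))) = _
    rw [hm, map_smul, map_smul, map_smul]
  | cons a u ih =>
    have := ih (n + 1) _ (Good.tail P far braid h)
    rw [List.length_cons, show n + (u.length + 1) = n + 1 + u.length by ring]
    exact this

include far braid in
/-- Increasing neighbours `c < d` in the word: the generator at their position exchanges them. -/
theorem sortOp_lt {q : ℂ} (u : List α) {c d : α} (hcd : c < d) (v : List α) (n : ℕ) (w : W)
    (h : Good P q (u ++ c :: d :: v) n w) :
    P (n + u.length) (sortOp P (u ++ c :: d :: v) n w) = sortOp P (u ++ d :: c :: v) n w := by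
  induction u generalizing n w with
  | nil =>
    change P n (sortOp P v (n + 2) (cyc P (n + 1) _ (cyc P n ((d :: v).countP (· < c)) w))) =
      sortOp P v (n + 2) (cyc P (n + 1) _ (cyc P n ((c :: v).countP (· < d)) w))
    have e : (d :: v).countP (· < c) = v.countP (· < c) := by simp [hcd.le]
    have e' : (c :: v).countP (· < d) = v.countP (· < d) + 1 := by simp [hcd]
    have hm : v.countP (· < c) ≤ v.countP (· < d) :=
      List.countP_mono_left fun x _ hx => by simpa using lt_trans (by simpa using hx) hcd
    rw [e, e', sortOp_far P far _ _ _ le_rfl, ← cyc_succ, cyc_cyc P far braid _ _ _ hm]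
  | cons a u ih =>
    have e : (u ++ d :: c :: v).countP (· < a) = (u ++ c :: d :: v).countP (· < a) :=
      List.Perm.countP_eq _ ((List.Perm.swap c d v).append_left u)
    have := ih (n + 1) _ (Good.tail P far braid h)
    rw [List.length_cons, show n + (u.length + 1) = n + 1 + u.length by ring]
    refine this.trans ?_
    change _ = sortOp P _ (n + 1) (cyc P n ((u ++ d :: c :: v).countP (· < a)) w)
    rw [e]
    rfl

end action
end TsyganRE

/-! ### Solutions of `Cond` -/

namespace TsyganRE
section solutions
variable {N : ℕ} {q : ℂ}

theorem hecke_append {α M : Type*} [DecidableEq α] [AddCommGroup M] [Module ℂ M]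
    (lt : α → α → Prop) [DecidableRel lt] (q : ℂ) (u : List α) (v : List α → M) (l : List α) :
    hecke lt q u.length v (u ++ l) = hecke lt q 0 (fun l => v (u ++ l)) l := by
  induction u generalizing v with
  | nil => rfl
  | cons a u ih => exact ih fun l => v (a :: l)

theorem exists_split {α : Type*} (s : ℕ) (l : List α) (h : s + 2 ≤ l.length) :
    ∃ u a b t, l = u ++ a :: b :: t ∧ u.length = s := by
  induction s generalizing l with
  | zero =>
    match l, h with
    | a :: b :: t, _ => exact ⟨[], a, b, t, rfl, rfl⟩
  | succ s ih =>
    match l, h with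
    | x :: l, h =>
      obtain ⟨u, a, b, t, rfl, hu⟩ := ih l (by simpa using h)
      exact ⟨x :: u, a, b, t, rfl, by simp [hu]⟩

/-- The word of pairs, ordered lexicographically, with the given components. -/
def zl (j i : List (Fin N)) : List (Fin N ×ₗ Fin N) := List.zipWith (fun a b => toLex (a, b)) j i

theorem zl_append (u u' v v' : List (Fin N)) (h : u.length = u'.length) :
    zl (u ++ v) (u' ++ v') = zl u u' ++ zl v v' := List.zipWith_append h

theorem zl_cons (a b : Fin N) (v v' : List (Fin N)) :
    zl (a :: v) (b :: v') = toLex (a, b) :: zl v v' := rfl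

theorem zl_map (l : List (Fin N ×ₗ Fin N)) :
    zl (l.map fun p => (ofLex p).1) (l.map fun p => (ofLex p).2) = l := by
  induction l with
  | nil => rfl
  | cons a l ih => rw [List.map_cons, List.map_cons, zl_cons, ih]; rfl

theorem map_zl (j i : List (Fin N)) (h : j.length = i.length) :
    ((zl j i).map fun p => (ofLex p).1) = j ∧ ((zl j i).map fun p => (ofLex p).2) = i := by
  induction j generalizing i with
  | nil => simp [zl, List.length_eq_zero_iff.1 h.symm]
  | cons a j ih =>
    match i, h with
    | b :: i, h => simpa [zl_cons] using ih i (by simpa using h)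

/-- The negative of the inverse Hecke operator, acting on functions on row words. These operators
satisfy the braid relations and have the same quadratic relation as the Hecke operators, so that
`Cond` makes `A` an intertwiner from column words to row words. -/
noncomputable def rowOp (N : ℕ) (q : ℂ) (s : ℕ) : (List (Fin N) → ℂ) →ₗ[ℂ] (List (Fin N) → ℂ) :=
  -heckeLin (· > ·) q⁻¹ s

theorem rowOp_apply (s : ℕ) (v : List (Fin N) → ℂ) (i : List (Fin N)) :
    rowOp N q s v i = -hecke (· > ·) q⁻¹ s v i := rfl

theorem rowOp_rowOp (s s' : ℕ) (v : List (Fin N) → ℂ) :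
    rowOp N q s (rowOp N q s' v) = hecke (· > ·) q⁻¹ s (hecke (· > ·) q⁻¹ s' v) := by
  change -(heckeLin (· > ·) q⁻¹ s (-(heckeLin (· > ·) q⁻¹ s' v))) = _
  rw [map_neg, neg_neg]
  rfl

theorem rowOp_far (m n : ℕ) (h : m + 2 ≤ n) (w : List (Fin N) → ℂ) :
    rowOp N q m (rowOp N q n w) = rowOp N q n (rowOp N q m w) := by
  obtain ⟨d, rfl⟩ : ∃ d, n = m + d + 2 := ⟨n - m - 2, by omega⟩
  rw [rowOp_rowOp, rowOp_rowOp]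
  funext i
  exact hecke_comm _ _ m d w i

theorem rowOp_braid (hq : q ≠ 0) (n : ℕ) (w : List (Fin N) → ℂ) :
    rowOp N q n (rowOp N q (n + 1) (rowOp N q n w)) =
      rowOp N q (n + 1) (rowOp N q n (rowOp N q (n + 1) w)) := by
  rw [rowOp_rowOp, rowOp_rowOp]
  have h := fun s v => map_neg (heckeLin (· > ·) q⁻¹ s : (List (Fin N) → ℂ) →ₗ[ℂ] _) v
  funext i
  have := braid_gt (q := q⁻¹) (inv_ne_zero hq) n (-w) i
  have e : ∀ s, hecke (· > ·) q⁻¹ s (-w) = rowOp N q s w := fun s => h s w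
  rwa [e, e] at this

/-- The solution of the row relations for a sorted column word: a `q`-alternating function of the word
of pairs, with values on increasing words given by `g`. -/
noncomputable def wt (q : ℂ) (g : Finset (Fin N ×ₗ Fin N) → ℂ) (j i : List (Fin N)) : ℂ :=
  if i.length = j.length ∧ (zl j i).Nodup then (-q) ^ inv (zl j i) * g (zl j i).toFinset else 0

/-- Inside a block of equal column letters, `wt` is an eigenvector for the eigenvalue `q`. -/
theorem good_wt (hq : q ≠ 0) (g : Finset (Fin N ×ₗ Fin N) → ℂ) (j : List (Fin N))
    (hj : j.Pairwise (· ≤ ·)) : Good (rowOp N q) q j 0 (wt q g j) := by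
  intro c s h1 h2
  obtain ⟨u, v, rfl, rfl⟩ := sorted_block c j hj s h1 h2
  funext i
  rw [Nat.zero_add, rowOp_apply, Pi.smul_apply]
  by_cases hi : i.length = (u ++ c :: c :: v).length
  · obtain ⟨u', a, b, t, rfl, hu⟩ := exists_split u.length i (by rw [hi]; simp)
    have ht : t.length = v.length := by simp at hi; omega
    rw [← hu, hecke_append, hecke_zero_cons]
    have swap : ∀ a b, a < b → wt q g (u ++ c :: c :: v) (u' ++ b :: a :: t) =
        -q * wt q g (u ++ c :: c :: v) (u' ++ a :: b :: t) := by
      intro a b hab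
      have hlt : toLex (c, a) < toLex (c, b) := by
        rw [Prod.Lex.toLex_lt_toLex]
        exact Or.inr ⟨rfl, hab⟩
      have hp := (List.Perm.swap (toLex (c, a)) (toLex (c, b)) (zl v t)).append_left (zl u u')
      simp only [wt, zl_append _ _ _ _ hu.symm, zl_cons, inv_swap _ hlt, hp.nodup_iff,
        List.toFinset_eq_of_perm _ _ hp]
      rw [show (u' ++ b :: a :: t).length = (u' ++ a :: b :: t).length by simp]
      split_ifs
      · ring
      · simp
    have eq0 : ∀ a, wt q g (u ++ c :: c :: v) (u' ++ a :: a :: t) = 0 := by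
      intro a
      rw [wt, if_neg]
      rw [zl_append _ _ _ _ hu.symm, zl_cons, zl_cons, List.nodup_append]
      simp
    rcases lt_trichotomy a b with h | h | h
    · rw [if_neg h.ne, if_neg h.not_gt, swap a b h]
      simp
    · subst h
      simp [eq0]
    · rw [if_neg h.ne', if_pos h, swap b a h]
      simp only [smul_eq_mul]
      field_simp
      ring
  · have h0 : ∀ l : List (Fin N), l.length = i.length → wt q g (u ++ c :: c :: v) l = 0 := by
      intro l hl
      rw [wt, if_neg fun h => hi (hl ▸ h.1)]
    rw [h0 i rfl, hecke_congr _ _ _ _ 0 i h0, smul_zero]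
    exact neg_eq_zero.2 (congrFun (map_zero (heckeLin (· > ·) q⁻¹ u.length :
      (List (Fin N) → ℂ) →ₗ[ℂ] _)) i)

/-- The solution of `Cond` attached to a function on subsets of the set of pairs. -/
noncomputable def sol (q : ℂ) (g : Finset (Fin N ×ₗ Fin N) → ℂ) (j : List (Fin N)) :
    List (Fin N) → ℂ :=
  sortOp (rowOp N q) j 0 (wt q g (j.mergeSort (· ≤ ·)))

theorem mergeSort_pairwise (j : List (Fin N)) : (j.mergeSort (· ≤ ·)).Pairwise (· ≤ ·) := by
  have := List.pairwise_mergeSort (le := fun a b : Fin N => decide (a ≤ b))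
    (fun a b c hab hbc => by simpa using le_trans (by simpa using hab) (by simpa using hbc))
    (fun a b => by simpa using le_total a b) j
  simpa using this

theorem sol_sorted (g : Finset (Fin N ×ₗ Fin N) → ℂ) (j : List (Fin N))
    (hj : j.Pairwise (· ≤ ·)) : sol q g j = wt q g j := by
  rw [sol, sortOp_sorted _ _ hj, ((List.mergeSort_perm j _).eq_of_pairwise' (mergeSort_pairwise j) hj)]

theorem good_sol (hq : q ≠ 0) (g : Finset (Fin N ×ₗ Fin N) → ℂ) (j : List (Fin N)) :
    Good (rowOp N q) q j 0 (wt q g (j.mergeSort (· ≤ ·))) := by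
  intro c s h1 h2
  have := good_wt hq g _ (mergeSort_pairwise j) c s
  rw [(List.mergeSort_perm j _).countP_eq, (List.mergeSort_perm j _).countP_eq] at this
  exact this h1 h2

theorem cond_sol (hq : q ≠ 0) (g : Finset (Fin N ×ₗ Fin N) → ℂ) (k : ℕ) :
    Cond q k (sol q g) := by
  intro s j i hs hj hi
  obtain ⟨u, c, d, v, rfl, rfl⟩ := exists_split s j (by omega)
  rw [← rowOp_apply]
  have swap : ∀ c d, c < d → sol q g (u ++ d :: c :: v) =
      rowOp N q u.length (sol q g (u ++ c :: d :: v)) := by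
    intro c d hcd
    have hp := (List.Perm.swap c d v).append_left u
    have e : (u ++ d :: c :: v).mergeSort (· ≤ ·) = (u ++ c :: d :: v).mergeSort (· ≤ ·) :=
      (((List.mergeSort_perm _ _).trans hp).trans (List.mergeSort_perm _ _).symm).eq_of_pairwise'
        (mergeSort_pairwise _) (mergeSort_pairwise _)
    have := sortOp_lt (rowOp N q) rowOp_far (rowOp_braid hq) u hcd v 0 _ (good_sol hq g _)
    rw [Nat.zero_add] at this
    rw [sol, sol, this, e]
  rw [hecke_append, hecke_zero_cons]
  rcases lt_trichotomy c d with h | h | h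
  · rw [if_neg h.ne, if_neg h.not_gt, add_zero, swap c d h]
  · subst h
    have := sortOp_eq (rowOp N q) rowOp_far (rowOp_braid hq) u c v 0 _ (good_sol hq g _)
    rw [Nat.zero_add] at this
    rw [if_pos rfl, sol, this]
  · rw [if_neg h.ne', if_pos h, swap d c h, Pi.add_apply, rowOp_rowOp, hecke_inv_sq hq _ _ _ (by omega)]
    rw [Pi.smul_apply, rowOp_apply]
    module

/-- A solution of `Cond` is determined by its values at strictly increasing words of pairs: column
words can be sorted by `Cond`, then row words inside each block of equal column letters, and a
repeated pair contributes `0` because `q² ≠ -1`. -/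
theorem cond_inj (hq : q ≠ 0) (hq2 : q ^ 2 + 1 ≠ 0) (k : ℕ) (A : List (Fin N) → List (Fin N) → ℂ)
    (hA : Cond q k A)
    (h : ∀ j i, j.length = k → i.length = k → (zl j i).Pairwise (· < ·) → A j i = 0)
    (j i : List (Fin N)) (hj : j.length = k) (hi : i.length = k) : A j i = 0 := by
  -- first, sorted column words
  have sorted : ∀ l : List (Fin N ×ₗ Fin N), l.length = k →
      (l.map fun p => (ofLex p).1).Pairwise (· ≤ ·) →
      A (l.map fun p => (ofLex p).1) (l.map fun p => (ofLex p).2) = 0 := by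
    intro l
    have row : ∀ (u : List (Fin N ×ₗ Fin N)) (c a b : Fin N) (v : List (Fin N ×ₗ Fin N)),
        (u ++ toLex (c, a) :: toLex (c, b) :: v).length = k →
        q * A ((u ++ toLex (c, a) :: toLex (c, b) :: v).map fun p => (ofLex p).1)
            ((u ++ toLex (c, a) :: toLex (c, b) :: v).map fun p => (ofLex p).2) =
          -(if a = b then q⁻¹ * A ((u ++ toLex (c, a) :: toLex (c, b) :: v).map fun p => (ofLex p).1)
            ((u ++ toLex (c, a) :: toLex (c, b) :: v).map fun p => (ofLex p).2) else
            A ((u ++ toLex (c, b) :: toLex (c, a) :: v).map fun p => (ofLex p).1)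
            ((u ++ toLex (c, b) :: toLex (c, a) :: v).map fun p => (ofLex p).2) +
            if a > b then (q⁻¹ - q) *
              A ((u ++ toLex (c, a) :: toLex (c, b) :: v).map fun p => (ofLex p).1)
            ((u ++ toLex (c, a) :: toLex (c, b) :: v).map fun p => (ofLex p).2) else 0) := by
      intro u c a b v hl
      have := hA (u.map fun p => (ofLex p).1).length
        ((u ++ toLex (c, a) :: toLex (c, b) :: v).map fun p => (ofLex p).1)
        ((u ++ toLex (c, a) :: toLex (c, b) :: v).map fun p => (ofLex p).2)
        (by rw [← hl]; simp) (by simpa using hl) (by simpa using hl)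
      simp only [List.map_append, List.map_cons, ofLex_toLex] at this ⊢
      rw [hecke_append, hecke_zero_cons, if_pos rfl,
        show (u.map fun p => (ofLex p).1).length = (u.map fun p => (ofLex p).2).length by simp,
        hecke_append, hecke_zero_cons] at this
      simpa using this
    refine sort_induction (fun l => l.length = k → (l.map fun p => (ofLex p).1).Pairwise (· ≤ ·) →
      A (l.map fun p => (ofLex p).1) (l.map fun p => (ofLex p).2) = 0) ?_ ?_ l
    · intro l hl hk _
      by_cases hl' : l.Pairwise (· < ·)
      · exact h _ _ (by simpa using hk) (by simpa using hk) (by rwa [zl_map])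
      · obtain ⟨u, x, v, rfl⟩ := exists_adjacent_eq l hl hl'
        obtain ⟨⟨c, a⟩, rfl⟩ := toLex.surjective x
        have := row u c a a v hk
        rw [if_pos rfl] at this
        generalize A _ _ = X at this ⊢
        have h0 : (q ^ 2 + 1) * X = 0 := by
          field_simp at this
          linear_combination this
        exact (mul_eq_zero.1 h0).resolve_left hq2
    · intro u x y v hxy ih hk hs
      obtain ⟨⟨c, a⟩, rfl⟩ := toLex.surjective x
      obtain ⟨⟨d, b⟩, rfl⟩ := toLex.surjective y
      have hdc : d ≤ c := by
        rw [List.map_append, List.pairwise_append, List.map_cons, List.map_cons,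
          List.pairwise_cons] at hs
        exact hs.2.1.1 c (by simp)
      rcases Prod.Lex.toLex_lt_toLex.1 hxy with hcd | ⟨hcd, hab⟩
      · exact absurd hcd hdc.not_gt
      · simp only at hcd hab
        subst hcd
        have hk' : (u ++ toLex (c, a) :: toLex (c, b) :: v).length = k := by simpa using hk
        have := row u c a b v hk'
        rw [ih hk' (by simpa using hs), if_neg hab.ne, if_neg hab.not_gt, mul_zero, add_zero] at this
        exact neg_eq_zero.1 this.symm
  refine sort_induction (fun j => ∀ i, j.length = k → i.length = k → A j i = 0) ?_ ?_ j i hj hi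
  · intro j hs i hj hi
    have e' := map_zl j i (hj.trans hi.symm)
    have := sorted (zl j i) (by simp [zl, hj, hi]) (by rwa [e'.1])
    rwa [e'.1, e'.2] at this
  · intro u c d v hcd ih i hj hi
    have hj' : (u ++ c :: d :: v).length = k := by simpa using hj
    have := hA u.length (u ++ c :: d :: v) i (by rw [← hj']; simp) hj' hi
    rw [hecke_append, hecke_zero_cons, if_neg hcd.ne, if_neg hcd.not_gt, add_zero] at this
    rw [this, hecke_congr _ _ _ _ 0 i fun l hl => ih l hj' (hl.trans hi)]
    exact neg_eq_zero.2 (congrFun (map_zero (heckeLin (· > ·) q⁻¹ u.length :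
      (List (Fin N) → ℂ) →ₗ[ℂ] _)) i)

end solutions
end TsyganRE

/-! ### The dimension of the homogeneous components -/

namespace TsyganRE
section dimension
variable {N : ℕ} {q : ℂ}

theorem ext_mon {M : Type*} [AddCommGroup M] [Module ℂ M] {φ ψ : FA N →ₗ[ℂ] M}
    (h : ∀ l, φ (mon l) = ψ (mon l)) : φ = ψ :=
  (FreeAlgebra.basisFreeMonoid ℂ (Fin N × Fin N)).ext fun l => by
    have := h (FreeMonoid.toList l)
    rwa [← basis_eq_mon] at this

theorem mon_mem {k : ℕ} (l : List (Fin N × Fin N)) (hl : l.length = k) : mon l ∈ degComp N k :=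
  Submodule.subset_span ⟨l, hl, rfl⟩

theorem degComp_mul {m n : ℕ} {x y : FA N} (hx : x ∈ degComp N m) (hy : y ∈ degComp N n) :
    x * y ∈ degComp N (m + n) := by
  have : degComp N m * degComp N n ≤ degComp N (m + n) := by
    rw [degComp, degComp, Submodule.span_mul_span, Submodule.span_le]
    rintro _ ⟨_, ⟨l, rfl, rfl⟩, _, ⟨l', rfl, rfl⟩, rfl⟩
    exact Submodule.subset_span ⟨l ++ l', by simp, by simp⟩
  exact this (Submodule.mul_mem_mul hx hy)

theorem matrix_mul_mem {m n : ℕ} {A B : Matrix (Fin N × Fin N) (Fin N × Fin N) (FA N)}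
    (hA : ∀ p r, A p r ∈ degComp N m) (hB : ∀ p r, B p r ∈ degComp N n) (p r : Fin N × Fin N) :
    (A * B) p r ∈ degComp N (m + n) := by
  rw [Matrix.mul_apply]
  exact Submodule.sum_mem _ fun s _ => degComp_mul (hA p s) (hB s r)

theorem rel_mem (p r : Fin N × Fin N) : rel N q p r ∈ degComp N 2 := by
  have hR : ∀ p r, RFmat N q p r ∈ degComp N 0 := by
    intro p r
    rw [RFmat, Matrix.map_apply, Algebra.algebraMap_eq_smul_one]
    exact Submodule.smul_mem _ _ (mon_mem [] rfl)
  have hT : ∀ p r, T2mat N p r ∈ degComp N 1 := by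
    intro p r
    have h : FreeAlgebra.ι ℂ (p.2, r.2) ∈ degComp N 1 :=
      Submodule.subset_span ⟨[(p.2, r.2)], rfl, by simp⟩
    rw [T2mat]
    split_ifs
    · rwa [one_mul]
    · rw [zero_mul]; exact Submodule.zero_mem _
  rw [rel, Matrix.add_apply]
  exact Submodule.add_mem _
    (matrix_mul_mem (matrix_mul_mem (matrix_mul_mem (matrix_mul_mem hR hT) hR) hT) hR p r)
    (matrix_mul_mem (matrix_mul_mem hT hR) hT p r)

/-- The entries of `Z` are homogeneous; by duality, this is the converse half of `apply_Z_iff`. -/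
theorem Z_mem (hq : q ≠ 0) {k : ℕ} (j i : List (Fin N)) (hj : j.length = k) (hi : i.length = k) :
    Z q j i ∈ degComp N k := by
  by_contra h
  obtain ⟨φ, hφ, hle⟩ := Submodule.exists_le_ker_of_notMem h
  exact hφ ((apply_Z_iff q hq k φ).2 (fun l hl => hle (mon_mem l hl)) j i hj hi)

/-- The two-sided ideal of the relations. -/
noncomputable def relIdeal (N : ℕ) (q : ℂ) : Submodule ℂ (FA N) :=
  twoSidedSpan N {x | ∃ p r, x = rel N q p r}

/-- A functional concentrated in degree `k` whose values on the `Z j i` satisfy `Cond` vanishes on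
the ideal. -/
theorem relIdeal_le_ker (hq : q ≠ 0) (k : ℕ) (φ : FA N →ₗ[ℂ] ℂ)
    (h0 : ∀ l, l.length ≠ k → φ (mon l) = 0) (hφ : Cond q k fun j i => φ (Z q j i)) :
    relIdeal N q ≤ LinearMap.ker φ := by
  have hw : ∀ p r u v, φ (mon u * rel N q p r * mon v) = 0 := by
    intro p r u v
    by_cases h : u.length + v.length + 2 = k
    · exact (E_iff q hq k φ).1 ((cond_iff q hq k φ).1 hφ) u p r v h
    · have hm := degComp_mul (degComp_mul (mon_mem u rfl) (rel_mem (q := q) p r)) (mon_mem v rfl)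
      have hle : degComp N (u.length + 2 + v.length) ≤ LinearMap.ker φ := by
        rw [degComp, Submodule.span_le]
        rintro _ ⟨l, hl, rfl⟩
        exact h0 l (by omega)
      exact hle hm
  rw [relIdeal, twoSidedSpan, Submodule.span_le]
  rintro _ ⟨a, b, _, ⟨p, r, rfl⟩, rfl⟩
  have h1 : ∀ v, φ (a * rel N q p r * mon v) = 0 := fun v =>
    LinearMap.congr_fun (ext_mon (φ := φ ∘ₗ LinearMap.mulRight ℂ (mon v) ∘ₗ
      LinearMap.mulRight ℂ (rel N q p r)) (ψ := 0) fun u => hw p r u v) a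
  exact LinearMap.congr_fun (ext_mon (φ := φ ∘ₗ LinearMap.mulLeft ℂ (a * rel N q p r)) (ψ := 0) h1) b

/-- `Cond` in degree `k` involves only words with `k` letters. -/
theorem cond_congr {k : ℕ} {A B : List (Fin N) → List (Fin N) → ℂ}
    (h : ∀ j i, j.length = k → i.length = k → A j i = B j i) (hA : Cond q k A) : Cond q k B := by
  intro s j i hs hj hi
  have e : ∀ C : List (Fin N) → List (Fin N) → ℂ,
      hecke (· > ·) q s C j i = hecke (· > ·) q s (fun l => C l i) j := fun C =>
    map_hecke (· > ·) q (LinearMap.proj (R := ℂ) (φ := fun _ : List (Fin N) => ℂ) i) s C j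
  have := hA s j i hs hj hi
  rw [e] at this ⊢
  rw [← hecke_congr _ _ s _ _ j fun l hl => h l i (hl.trans hj) hi, this,
    hecke_congr _ _ s _ _ i fun l hl => h j l hj (hl.trans hi)]

/-- The column word of the increasing word of a set of pairs. -/
noncomputable def colWord (s : Finset (Fin N ×ₗ Fin N)) : List (Fin N) :=
  (s.sort).map fun p => (ofLex p).1

/-- The row word of the increasing word of a set of pairs. -/
noncomputable def rowWord (s : Finset (Fin N ×ₗ Fin N)) : List (Fin N) :=
  (s.sort).map fun p => (ofLex p).2

theorem colWord_length (s : Finset (Fin N ×ₗ Fin N)) : (colWord s).length = s.card := by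
  simp [colWord]

theorem rowWord_length (s : Finset (Fin N ×ₗ Fin N)) : (rowWord s).length = s.card := by
  simp [rowWord]

theorem colWord_sorted (s : Finset (Fin N ×ₗ Fin N)) : (colWord s).Pairwise (· ≤ ·) := by
  rw [colWord, List.pairwise_map]
  refine (s.pairwise_sort (· ≤ ·)).imp fun {x y} h => ?_
  rcases Prod.Lex.le_iff.1 h with h | h
  · exact h.le
  · exact h.1.le

theorem sol_word (g : Finset (Fin N ×ₗ Fin N) → ℂ) (s : Finset (Fin N ×ₗ Fin N)) :
    sol q g (colWord s) (rowWord s) = g s := by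
  have e : zl (colWord s) (rowWord s) = s.sort := zl_map _
  rw [sol_sorted g _ (colWord_sorted s), wt, e, if_pos
    ⟨by rw [rowWord_length, colWord_length], s.sort_nodup _⟩, Finset.sort_toFinset,
    inv_sorted _ (s.pairwise_sort _), pow_zero, one_mul]

/-- The degree `k` component of the quadratic algebra. -/
abbrev Comp (N : ℕ) (q : ℂ) (k : ℕ) : Type :=
  ↥(degComp N k) ⧸ (relIdeal N q).comap (degComp N k).subtype

/-- The class of the entry of `Z` indexed by a set of `k` pairs. -/
noncomputable def cls (hq : q ≠ 0) (k : ℕ) (s : {s : Finset (Fin N ×ₗ Fin N) // s.card = k}) :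
    Comp N q k :=
  Submodule.Quotient.mk ⟨Z q (colWord s.1) (rowWord s.1), Z_mem hq _ _
    ((colWord_length _).trans s.2) ((rowWord_length _).trans s.2)⟩

/-- The solutions `sol` attached to indicator functions provide functionals dual to the classes. -/
theorem cls_linearIndependent (hq : q ≠ 0) (k : ℕ) :
    LinearIndependent ℂ (cls (N := N) hq k) := by
  classical
  have dual : ∀ s : {s : Finset (Fin N ×ₗ Fin N) // s.card = k},
      ∃ χ : Comp N q k →ₗ[ℂ] ℂ, ∀ t, χ (cls hq k t) = if t = s then 1 else 0 := by
    intro s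
    obtain ⟨φ, h0, hφ⟩ := exists_functional q hq k (sol q fun t => if t = s.1 then 1 else 0)
    have hker := relIdeal_le_ker hq k φ h0
      (cond_congr (fun j i hj hi => (hφ j i hj hi).symm) (cond_sol hq _ k))
    refine ⟨Submodule.liftQ _ (φ ∘ₗ (degComp N k).subtype) fun x hx => hker hx, fun t => ?_⟩
    change φ (Z q _ _) = _
    rw [hφ _ _ ((colWord_length _).trans t.2) ((rowWord_length _).trans t.2), sol_word]
    simp only [Subtype.ext_iff]
  choose χ hχ using dual
  rw [linearIndependent_iff']
  intro S c hc s hs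
  have := congrArg (χ s) hc
  simpa [map_sum, hχ, hs] using this

/-- A functional on the quotient killing all the classes is zero, by `cond_inj`. -/
theorem cls_span (hq : q ≠ 0) (hq2 : q ^ 2 + 1 ≠ 0) (k : ℕ) :
    ⊤ ≤ Submodule.span ℂ (Set.range (cls (N := N) hq k)) := by
  classical
  by_contra hne
  obtain ⟨χ, hχ, hle⟩ := Submodule.exists_le_ker_of_lt_top _ (lt_top_iff_ne_top.2 fun h => hne h.ge)
  let φ : FA N →ₗ[ℂ] ℂ := functional fun l =>
    if h : l.length = k then χ (Submodule.Quotient.mk ⟨mon l, mon_mem l h⟩) else 0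
  have φ_eq : ∀ x (hx : x ∈ degComp N k), φ x = χ (Submodule.Quotient.mk ⟨x, hx⟩) := by
    intro x hx
    induction hx using Submodule.span_induction with
    | mem x h =>
      obtain ⟨l, hl, rfl⟩ := h
      exact (functional_mon _ l).trans (dif_pos hl)
    | zero => rw [map_zero]; exact (map_zero χ).symm
    | add x y hx hy ihx ihy => rw [map_add, ihx, ihy, ← map_add]; rfl
    | smul c x hx ih => rw [map_smul, ih, ← map_smul]; rfl
  have hcond : Cond q k fun j i => φ (Z q j i) := by
    rw [cond_iff q hq, E_iff q hq]
    intro u p r v huv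
    have hm : mon u * rel N q p r * mon v ∈ degComp N k := by
      have := degComp_mul (degComp_mul (mon_mem u rfl) (rel_mem (q := q) p r)) (mon_mem v rfl)
      rwa [show u.length + 2 + v.length = k by omega] at this
    rw [φ_eq _ hm, (Submodule.Quotient.mk_eq_zero _).2, map_zero]
    exact Submodule.subset_span ⟨_, _, _, ⟨p, r, rfl⟩, rfl⟩
  have hZ := cond_inj hq hq2 k _ hcond (by
    intro j i hj hi hji
    have e := map_zl j i (hj.trans hi.symm)
    have hs : (zl j i).toFinset.sort = zl j i :=
      (List.toFinset_sort _ (hji.imp ne_of_lt)).2 (hji.imp le_of_lt)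
    have hc : (zl j i).toFinset.card = k := by
      rw [List.toFinset_card_of_nodup (hji.imp ne_of_lt)]
      simp [zl, hj, hi]
    have h1 : colWord (zl j i).toFinset = j := by rw [colWord, hs, e.1]
    have h2 : rowWord (zl j i).toFinset = i := by rw [rowWord, hs, e.2]
    have := hle (Submodule.subset_span ⟨⟨_, hc⟩, rfl⟩)
    rw [LinearMap.mem_ker, cls, ← φ_eq] at this
    rwa [h1, h2] at this)
  refine hχ (LinearMap.ext fun y => ?_)
  obtain ⟨⟨x, hx⟩, rfl⟩ := Submodule.Quotient.mk_surjective _ y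
  rw [← φ_eq, LinearMap.zero_apply]
  have hd : degComp N k ≤ LinearMap.ker φ := by
    rw [degComp, Submodule.span_le]
    rintro _ ⟨l, hl, rfl⟩
    exact (apply_Z_iff q hq k φ).1 hZ l hl
  exact hd hx

theorem finrank_comp (hq : q ≠ 0) (hq2 : q ^ 2 + 1 ≠ 0) (k : ℕ) :
    Module.finrank ℂ (Comp N q k) = (N ^ 2).choose k := by
  rw [Module.finrank_eq_card_basis (Module.Basis.mk (cls_linearIndependent hq k) (cls_span hq hq2 k)),
    Fintype.card_finset_len]
  simp [sq]

end dimension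
end TsyganRE

/-- For `q` transcendental, the quadratic algebra with `N²` generators `T`
and relations `R̂ T₂ R̂ T₂ R̂ + T₂ R̂ T₂ = 0` (the algebra of left-invariant
forms of Tsygan) has Poincaré series `(1 + t)^{N²}`: its degree-`k`
component has dimension `C(N², k)`.  In particular its top nonzero component
sits in degree `N²` and is one-dimensional. -/
theorem tsygan_algebra_poincare_series (N : ℕ) (hN : 2 ≤ N) (q : ℂ)
    (hq : Transcendental ℚ q) :
    ∀ RF relMat J,
      RF = (Rhat N q).map (algebraMap ℂ (FreeAlgebra ℂ (Fin N × Fin N))) →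
      relMat = RF * T2mat N * RF * T2mat N * RF + T2mat N * RF * T2mat N →
      J = twoSidedSpan N {x | ∃ p r, x = relMat p r} →
      (∀ k : ℕ,
        Module.finrank ℂ
          (↥(degComp N k) ⧸ (J.comap (degComp N k).subtype)) =
        Nat.choose (N ^ 2) k) ∧
      Module.finrank ℂ
        (↥(degComp N (N ^ 2)) ⧸ (J.comap (degComp N (N ^ 2)).subtype)) = 1 ∧
      (∀ k : ℕ, N ^ 2 < k →
        Module.finrank ℂ
          (↥(degComp N k) ⧸ (J.comap (degComp N k).subtype)) = 0) := by
  -- only two consequences of transcendence enter: `q ≠ 0` and `q² ≠ -1`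
  have hq0 : q ≠ 0 := fun h => hq (h ▸ isAlgebraic_zero)
  have hq2 : q ^ 2 + 1 ≠ 0 := fun h =>
    hq ⟨Polynomial.X ^ 2 + 1, (Polynomial.monic_X_pow_add_C (1 : ℚ) two_ne_zero).ne_zero, by
      simpa using h⟩
  rintro _ _ _ rfl rfl rfl
  have main := TsyganRE.finrank_comp (N := N) hq0 hq2
  exact ⟨main, (main _).trans (Nat.choose_self _),
    fun k hk => (main k).trans (Nat.choose_eq_zero_of_lt hk)⟩
end

section
/- Let N ≥ 2 and let q ∈ ℂ be transcendental over ℚ. Let F be the free unital associative ℂ-algebra on N² generators x^i_j (1 ≤ i, j ≤ N), V the ℂ-span of the generators, L the N×N matrix over F with (i,j) entry x^i_j, and L₁ = L ⊗ I the corresponding N²×N² matrix over F. Regard the standard R-matrix R̂ of GL_q(N) as a scalar N²×N² matrix. Let J ⊆ F be the two-sided ideal generated by the N⁴ entries of the matrix R̂ L₁ R̂ L₁ − L₁ R̂ L₁ R̂ (the reflection equation). Then for every k ≥ 0, dim_ℂ ( V^{⊗k} / (J ∩ V^{⊗k}) ) = C(N² + k − 1, k); that is, the reflection equation algebra F/J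 is a flat deformation of the polynomial ring in N² variables, with Poincaré series (1−t)^{−N²}. -/
/-- The matrix `L₁ = L ⊗ I` over the free algebra, where `L` is the `N × N`
matrix of generators. -/
noncomputable def L1mat (N : ℕ) :
    Matrix (Fin N × Fin N) (Fin N × Fin N) (FreeAlgebra ℂ (Fin N × Fin N)) :=
  fun out inp =>
    FreeAlgebra.ι ℂ (out.1, inp.1) * (if out.2 = inp.2 then 1 else 0)

/-!
The dimension is bounded from both sides by comparison with `q = 1`, working over the ring
`A = ℚ[T, T⁻¹]`, which embeds in `ℂ` by `T ↦ q` and specializes to `ℚ` by `T ↦ 1`. In both directions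
a square matrix over `A` that is a nonzero multiple of the identity at `T = 1` has nonzero
determinant, hence stays invertible over `ℂ` (`REA.det_ne_zero_of_map`).

*Upper bound.* At `q = 1` the reflection equation relators become commutators `x y - y x`. Hence,
modulo the ideal and one monomial for each multiset of `k` generators, every monomial of degree `k`
is represented by a combination of monomials vanishing modulo that subspace whose coefficients
specialize to those of the given monomial; inverting the coefficient matrix shows that these
representatives span (`REA.words_mem`).

*Lower bound.* A functional on words in the `x^a_b` is a function of words in the indices, each
letter occupying two neighbouring sites. Let `R` be the Hecke R-matrix, `S` its crossed version
(which is invertible) and `Q` its transpose conjugated by the flip, acting at neighbouring sites,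
and put
`l j = S⁻¹ (2j+1) * R (2j) * S (2j+1)` and `r j = S⁻¹ (2j+1) * Q (2j+2) * S (2j+1)`.
A function `f` kills the relators at the letters `j, j + 1` exactly when `l j f = r j f`. By the
Yang-Baxter equation, the `l j` and the `r j` form two commuting actions of the Hecke algebra with
the same parameter (`REA.MixedBraid.doubleHecke`): the operator
`S (2j+2) * S (2j+1) * S (2j+3)` conjugates neighbouring `l` and `r` to `R` and `Q` on disjoint
sites. The Casimir element `∑ w, l_w r_w` over the symmetric group then satisfies
`l j * C = r j * C` (`REA.DoubleHecke.casimir_inv`), so every function in its image annihilates the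
ideal. At `q = 1` the Casimir element is the full symmetrization of the letters, so the functionals
obtained from indicator functions of multisets are, at `q = 1`, dual to the monomials up to a
nonzero scalar (`REA.casVal_spec`), and therefore remain independent on them for `q`
transcendental.

Both bounds equal the number of multisets of size `k` in `N²` letters, which is
`C(N² + k - 1, k)`.
-/

namespace REA

open Finset

set_option linter.unusedSectionVars false

/-! ### Two-site operators on functions of words -/

section Local
variable {ι : Type*}

/-- The word `w` with the entries at sites `i` and `i + 1` replaced by `x` and `y`. -/
def upd (w : ℕ → ι) (i : ℕ) (x y : ι) : ℕ → ι :=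
  Function.update (Function.update w i x) (i + 1) y

theorem upd_comm (w : ℕ → ι) {i j : ℕ} (h : i + 2 ≤ j) (x y z t : ι) :
    upd (upd w i x y) j z t = upd (upd w j z t) i x y := by
  funext n
  simp only [upd, Function.update_apply]
  split_ifs <;> first | rfl | omega

@[simp] theorem upd_fst (w : ℕ → ι) (i : ℕ) (x y : ι) : upd w i x y i = x := by
  simp [upd]

@[simp] theorem upd_snd (w : ℕ → ι) (i : ℕ) (x y : ι) : upd w i x y (i + 1) = y := by
  simp [upd]

theorem upd_of_ne (w : ℕ → ι) (i : ℕ) (x y : ι) (n : ℕ) (h : n ≠ i) (h' : n ≠ i + 1) :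
    upd w i x y n = w n := by
  simp [upd, h, h']

theorem upd_self (w : ℕ → ι) (i : ℕ) : upd w i (w i) (w (i + 1)) = w := by
  simp [upd]

theorem upd_upd (w : ℕ → ι) (i : ℕ) (x y z t : ι) : upd (upd w i x y) i z t = upd w i z t := by
  funext n
  simp only [upd, Function.update_apply]
  split_ifs <;> rfl

variable {A : Type*} [CommRing A] [Fintype ι]

/-- The operator acting on functions of words `ℕ → ι` through the kernel `M` at the sites
`i, i + 1`; `M a b x y` is the coefficient of the input pair `(x, y)` in the output at `(a, b)`.
Words are infinite so that all degrees are treated at once. -/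
def loc (M : ι → ι → ι → ι → A) (i : ℕ) : Module.End A ((ℕ → ι) → A) where
  toFun f w := ∑ x, ∑ y, M (w i) (w (i + 1)) x y * f (upd w i x y)
  map_add' f g := by
    funext w; simp [mul_add, sum_add_distrib]
  map_smul' a f := by
    funext w; simp [mul_sum, mul_left_comm]

theorem loc_apply (M : ι → ι → ι → ι → A) (i : ℕ) (f : (ℕ → ι) → A) (w : ℕ → ι) :
    loc M i f w = ∑ x, ∑ y, M (w i) (w (i + 1)) x y * f (upd w i x y) := rfl

theorem loc_comm (M M' : ι → ι → ι → ι → A) {i j : ℕ} (h : i + 2 ≤ j) :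
    Commute (loc M i) (loc M' j) := by
  refine LinearMap.ext fun f => funext fun w => ?_
  simp only [Module.End.mul_apply, loc_apply, mul_sum]
  have e1 : ∀ x y, upd w i x y j = w j := fun x y => upd_of_ne _ _ _ _ _ (by omega) (by omega)
  have e2 : ∀ x y, upd w i x y (j+1) = w (j+1) :=
    fun x y => upd_of_ne _ _ _ _ _ (by omega) (by omega)
  have e3 : ∀ x y, upd w j x y i = w i := fun x y => upd_of_ne _ _ _ _ _ (by omega) (by omega)
  have e4 : ∀ x y, upd w j x y (i+1) = w (i+1) :=
    fun x y => upd_of_ne _ _ _ _ _ (by omega) (by omega)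
  simp only [e1, e2, e3, e4, upd_comm w h, ← sum_product', univ_product_univ]
  refine Fintype.sum_equiv ⟨fun ⟨x, y, z, t⟩ => ⟨z, t, x, y⟩,
    fun ⟨z, t, x, y⟩ => ⟨x, y, z, t⟩, fun _ => rfl, fun _ => rfl⟩ _ _ ?_
  rintro ⟨x, y, z, t⟩
  exact mul_left_comm _ _ _

/-- The word `w` with the entries at sites `i`, `i + 1`, `i + 2` replaced by `x`, `y`, `z`. -/
def upd3 (w : ℕ → ι) (i : ℕ) (x y z : ι) : ℕ → ι :=
  Function.update (upd w i x y) (i + 2) z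

/-- A braid-type identity between kernels on three sites gives the corresponding identity
between the operators they define at the sites `i, i + 1, i + 2`. -/
theorem loc_braid (M₁ M₂ M₃ N₁ N₂ N₃ : ι → ι → ι → ι → A)
    (h : ∀ a b c u v t,
      ∑ x, ∑ y, ∑ z, M₁ a b x y * M₂ y c z t * M₃ x z u v =
      ∑ x, ∑ y, ∑ z, N₁ b c x y * N₂ a x u z * N₃ z y v t) (i : ℕ) :
    loc M₁ i * loc M₂ (i + 1) * loc M₃ i =
      loc N₁ (i + 1) * loc N₂ i * loc N₃ (i + 1) := by
  refine LinearMap.ext fun f => funext fun w => ?_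
  have u1 : ∀ x y z t u v, upd (upd (upd w i x y) (i+1) z t) i u v = upd3 w i u v t := by
    intros; funext n; simp only [upd, upd3, Function.update_apply]
    split_ifs <;> first | rfl | omega
  have u2 : ∀ x y z t u v, upd (upd (upd w (i+1) x y) i u z) (i+1) v t = upd3 w i u v t := by
    intros; funext n; simp only [upd, upd3, Function.update_apply]
    split_ifs <;> rfl
  have v1 : ∀ x y, upd w i x y (i+1+1) = w (i+1+1) :=
    fun x y => upd_of_ne _ _ _ _ _ (by omega) (by omega)
  have v2 : ∀ x y z t, upd (upd w i x y) (i+1) z t i = x := by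
    intros; rw [upd_of_ne _ _ _ _ _ (by omega) (by omega), upd_fst]
  have v3 : ∀ x y, upd w (i+1) x y i = w i :=
    fun x y => upd_of_ne _ _ _ _ _ (by omega) (by omega)
  have v4 : ∀ x y z t, upd (upd w (i+1) x y) i z t (i+1+1) = y := by
    intros; rw [upd_of_ne _ _ _ _ _ (by omega) (by omega), upd_snd]
  simp only [Module.End.mul_apply, loc_apply, u1, u2, v1, v2, v3, v4, upd_fst, upd_snd, mul_sum]
  trans ∑ u, ∑ v, ∑ t, (∑ x, ∑ y, ∑ z, M₁ (w i) (w (i+1)) x y * M₂ y (w (i+1+1)) z t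
      * M₃ x z u v) * f (upd3 w i u v t)
  · simp only [sum_mul, ← sum_product', univ_product_univ]
    refine Fintype.sum_equiv ⟨fun ⟨x, y, z, t, u, v⟩ => ⟨u, v, t, x, y, z⟩,
      fun ⟨u, v, t, x, y, z⟩ => ⟨x, y, z, t, u, v⟩, fun _ => rfl, fun _ => rfl⟩ _ _ ?_
    rintro ⟨x, y, z, t, u, v⟩
    simp only [Equiv.coe_fn_mk]; ring
  · simp only [h]
    simp only [sum_mul, ← sum_product', univ_product_univ]
    refine Fintype.sum_equiv ⟨fun ⟨u, v, t, x, y, z⟩ => ⟨x, y, u, z, v, t⟩,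
      fun ⟨x, y, u, z, v, t⟩ => ⟨u, v, t, x, y, z⟩, fun _ => rfl, fun _ => rfl⟩ _ _ ?_
    rintro ⟨u, v, t, x, y, z⟩
    simp only [Equiv.coe_fn_mk]; ring

end Local

/-! ### The Hecke R-matrix, its transposes, and the Yang-Baxter equation

Throughout, `c` stands for `q - q⁻¹`; the relation used is `q * q = c * q + 1`. -/

section Kernels
variable {A : Type*} [CommRing A] {ι : Type*} [LinearOrder ι]

/-- The matrix entries of the R-matrix, row `(a, b)` and column `(x, y)`, over a commutative
ring, with `c` in the role of `q - q⁻¹`. -/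
def kerR (q c : A) (a b x y : ι) : A :=
  if a = b then (if x = a ∧ y = b then q else 0)
  else (if x = b ∧ y = a then 1 else 0) + (if b < a then (if x = a ∧ y = b then c else 0) else 0)

/-- The R-matrix acting on the first two arguments of a function of three variables. -/
def r12 (q c : A) (g : ι → ι → ι → A) (a b d : ι) : A :=
  if a = b then q * g a b d else g b a d + if b < a then c * g a b d else 0

/-- The R-matrix acting on the last two arguments of a function of three variables. -/
def r23 (q c : A) (g : ι → ι → ι → A) (d a b : ι) : A :=
  if a = b then q * g d a b else g d b a + if b < a then c * g d a b else 0

/-- The Yang-Baxter equation in operator form, checked separately for each relative order of the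
three indices. -/
theorem ybe_fun (q c : A) (hq : q * q = c * q + 1) (g : ι → ι → ι → A) (a b d : ι) :
    r12 q c (r23 q c (r12 q c g)) a b d = r23 q c (r12 q c (r23 q c g)) a b d := by
  rcases lt_trichotomy a b with h1 | h1 | h1 <;> rcases lt_trichotomy b d with h2 | h2 | h2 <;>
  rcases lt_trichotomy a d with h3 | h3 | h3 <;>
  first
  | (exfalso; order)
  | (subst_vars
     simp only [r12, r23, *, lt_irrefl, if_false, ne_of_lt, ne_of_gt, not_lt_of_gt, if_pos]
     try first
      | ring1
      | linear_combination c * g b b d * hq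
      | linear_combination -c * g a d d * hq)

theorem kerR_symm (q c : A) (a b x y : ι) : kerR q c x y a b = kerR q c a b x y := by
  unfold kerR
  grind

variable [Fintype ι]

theorem sum_kerR (q c : A) (a b : ι) (g : ι → ι → A) :
    ∑ x, ∑ y, kerR q c a b x y * g x y =
      if a = b then q * g a b else g b a + if b < a then c * g a b else 0 := by
  unfold kerR
  split_ifs with h1 h2
  · simp [ite_and, ite_mul]
  · simp [ite_and, ite_mul, add_mul, sum_add_distrib]
  · simp [ite_and, ite_mul]

/-- The Yang-Baxter equation for the entries of the R-matrix. -/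
theorem ybe (q c : A) (hq : q * q = c * q + 1) (o₁ o₂ o₃ i₁ i₂ i₃ : ι) :
    ∑ x, ∑ y, ∑ z, kerR q c o₁ o₂ x y * kerR q c y o₃ z i₃ * kerR q c x z i₁ i₂ =
    ∑ x, ∑ y, ∑ z, kerR q c o₂ o₃ x y * kerR q c o₁ x i₁ z * kerR q c z y i₂ i₃ := by
  have e1 : ∀ g : ι → ι → ι → A, ∀ a b d,
      r12 q c g a b d = ∑ x, ∑ y, kerR q c a b x y * g x y d :=
    fun g a b d => (sum_kerR q c a b (fun x y => g x y d)).symm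
  have e2 : ∀ g : ι → ι → ι → A, ∀ a b d,
      r23 q c g a b d = ∑ x, ∑ y, kerR q c b d x y * g a x y :=
    fun g a b d => (sum_kerR q c b d (fun x y => g a x y)).symm
  have h := ybe_fun q c hq
    (fun u v t => if u = i₁ then (if v = i₂ then (if t = i₃ then 1 else 0) else 0) else 0) o₁ o₂ o₃
  simp only [e1, e2, mul_ite, mul_one, mul_zero, sum_ite_irrel, sum_const_zero, sum_ite_eq',
    mem_univ, if_true, mul_sum] at h
  simpa only [mul_assoc] using h

/-- The R-matrix conjugated by the flip of the two sites and transposed. -/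
def kerQ (q c : A) (a b x y : ι) : A := kerR q c y x b a

/-- The R-matrix with rows and columns exchanged in one tensor factor (crossed R-matrix). -/
def kerS (q c : A) (b d e f : ι) : A := kerR q c e b f d

theorem kerQ_ybe (q c : A) (hq : q * q = c * q + 1) (a b d u v t : ι) :
    ∑ x, ∑ y, ∑ z, kerQ q c a b x y * kerQ q c y d z t * kerQ q c x z u v =
    ∑ x, ∑ y, ∑ z, kerQ q c b d x y * kerQ q c a x u z * kerQ q c z y v t := by
  have h := ybe q c hq t v u d b a
  simp only [← sum_product', univ_product_univ] at h ⊢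
  refine Eq.trans ?_ (h.symm.trans ?_)
  · refine Fintype.sum_equiv ⟨fun ⟨x, y, z⟩ => ⟨z, x, y⟩, fun ⟨z, x, y⟩ => ⟨x, y, z⟩,
      fun _ => rfl, fun _ => rfl⟩ _ _ ?_
    rintro ⟨x, y, z⟩
    simp only [Equiv.coe_fn_mk, kerQ]; ring
  · refine Fintype.sum_equiv ⟨fun ⟨x, y, z⟩ => ⟨z, x, y⟩, fun ⟨z, x, y⟩ => ⟨x, y, z⟩,
      fun _ => rfl, fun _ => rfl⟩ _ _ ?_
    rintro ⟨x, y, z⟩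
    simp only [Equiv.coe_fn_mk, kerQ]; ring

theorem kerRSS (q c : A) (hq : q * q = c * q + 1) (a b d u v t : ι) :
    ∑ x, ∑ y, ∑ z, kerR q c a b x y * kerS q c y d z t * kerS q c x z u v =
    ∑ x, ∑ y, ∑ z, kerS q c b d x y * kerS q c a x u z * kerR q c z y v t := by
  have h := ybe q c hq u a b v t d
  simp only [← sum_product', univ_product_univ] at h ⊢
  refine Eq.trans ?_ (h.symm.trans ?_)
  · refine Fintype.sum_equiv ⟨fun ⟨x, y, z⟩ => ⟨x, y, z⟩, fun ⟨x, y, z⟩ => ⟨x, y, z⟩,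
      fun _ => rfl, fun _ => rfl⟩ _ _ ?_
    rintro ⟨x, y, z⟩
    simp only [Equiv.coe_fn_mk, kerS]; ring
  · refine Fintype.sum_equiv ⟨fun ⟨x, y, z⟩ => ⟨y, z, x⟩, fun ⟨z, x, y⟩ => ⟨y, z, x⟩,
      fun _ => rfl, fun _ => rfl⟩ _ _ ?_
    rintro ⟨x, y, z⟩
    simp only [Equiv.coe_fn_mk, kerS]; ring

theorem kerSSQ (q c : A) (hq : q * q = c * q + 1) (a b d u v t : ι) :
    ∑ x, ∑ y, ∑ z, kerS q c a b x y * kerS q c y d z t * kerQ q c x z u v =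
    ∑ x, ∑ y, ∑ z, kerQ q c b d x y * kerS q c a x u z * kerS q c z y v t := by
  have h := ybe q c hq v u a t d b
  simp only [← sum_product', univ_product_univ] at h ⊢
  refine Eq.trans ?_ (h.trans ?_)
  · refine Fintype.sum_equiv ⟨fun ⟨x, y, z⟩ => ⟨z, x, y⟩, fun ⟨z, x, y⟩ => ⟨x, y, z⟩,
      fun _ => rfl, fun _ => rfl⟩ _ _ ?_
    rintro ⟨x, y, z⟩
    simp only [Equiv.coe_fn_mk, kerS, kerQ]; ring1
  · refine Fintype.sum_equiv ⟨fun ⟨x, y, z⟩ => ⟨y, z, x⟩, fun ⟨z, x, y⟩ => ⟨y, z, x⟩,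
      fun _ => rfl, fun _ => rfl⟩ _ _ ?_
    rintro ⟨x, y, z⟩
    simp only [Equiv.coe_fn_mk, kerS, kerQ]; ring1

theorem sum_kerQ (q c : A) (a b : ι) (g : ι → ι → A) :
    ∑ x, ∑ y, kerQ q c a b x y * g x y =
      if a = b then q * g a b else g b a + if a < b then c * g a b else 0 := by
  have := sum_kerR q c b a (fun x y => g y x)
  simp only [kerQ, kerR_symm q c b a]
  rw [sum_comm, this]
  simp only [eq_comm (a := b)]

/-- The block of the crossed R-matrix on the pairs `(b, b)`; it is triangular with diagonal entries
`q`. -/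
def triT (q c : A) : Matrix ι ι A := fun b e => if b = e then q else if b < e then c else 0

theorem triT_isUnit {q : A} (hq : IsUnit q) (c : A) : IsUnit (triT (ι := ι) q c).det := by
  rw [Matrix.det_of_isUpperTriangular]
  · simp only [triT, if_true, prod_const]; exact hq.pow _
  · intro i j h
    simp only [id] at h
    simp [triT, h.ne', not_lt_of_gt h]

/-- The inverse of the crossed R-matrix `kerS`. -/
noncomputable def kerS' (q c : A) (a b x y : ι) : A :=
  if a = b then (if x = y then (triT q c)⁻¹ a x else 0) else if x = b ∧ y = a then 1 else 0

theorem sum_kerS (q c : A) (a b : ι) (g : ι → ι → A) :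
    ∑ x, ∑ y, kerS q c a b x y * g x y =
      if a = b then ∑ e, triT q c a e * g e e else g b a := by
  have key : ∀ x y, kerS q c a b x y = if a = b then (if y = x then triT q c a x else 0) else
      if x = b then (if y = a then 1 else 0) else 0 := by
    intro x y
    unfold kerS kerR triT
    grind
  simp only [key]
  split_ifs <;> simp

theorem sum_kerS' (q c : A) (a b : ι) (g : ι → ι → A) :
    ∑ x, ∑ y, kerS' q c a b x y * g x y =
      if a = b then ∑ e, (triT q c)⁻¹ a e * g e e else g b a := by
  unfold kerS'
  split_ifs <;> simp [ite_and]

theorem loc_S_mul_S' {q : A} (hq : IsUnit q) (c : A) (i : ℕ) :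
    loc (ι := ι) (kerS q c) i * loc (kerS' q c) i = 1 := by
  refine LinearMap.ext fun f => funext fun w => ?_
  simp only [Module.End.mul_apply, loc_apply, upd_upd, upd_fst, upd_snd, Module.End.one_apply]
  rw [sum_kerS]
  simp only [sum_kerS', if_true]
  split_ifs with h h'
  · simp only [mul_sum, ← mul_assoc]
    rw [sum_comm]
    simp only [← sum_mul, ← Matrix.mul_apply, Matrix.mul_nonsing_inv _ (triT_isUnit hq c),
      Matrix.one_apply, ite_mul, one_mul, zero_mul, sum_ite_eq, mem_univ, if_true]
    conv_lhs => rw [show upd w i (w i) (w i) = upd w i (w i) (w (i+1)) by rw [← h]]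
    rw [upd_self]
  · exact absurd h'.symm h
  · rw [upd_self]

theorem loc_S'_mul_S {q : A} (hq : IsUnit q) (c : A) (i : ℕ) :
    loc (ι := ι) (kerS' q c) i * loc (kerS q c) i = 1 := by
  refine LinearMap.ext fun f => funext fun w => ?_
  simp only [Module.End.mul_apply, loc_apply, upd_upd, upd_fst, upd_snd, Module.End.one_apply]
  rw [sum_kerS']
  simp only [sum_kerS, if_true]
  split_ifs with h h'
  · simp only [mul_sum, ← mul_assoc]
    rw [sum_comm]
    simp only [← sum_mul, ← Matrix.mul_apply, Matrix.nonsing_inv_mul _ (triT_isUnit hq c),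
      Matrix.one_apply, ite_mul, one_mul, zero_mul, sum_ite_eq, mem_univ, if_true]
    conv_lhs => rw [show upd w i (w i) (w i) = upd w i (w i) (w (i+1)) by rw [← h]]
    rw [upd_self]
  · exact absurd h'.symm h
  · rw [upd_self]

theorem loc_R_apply (q c : A) (i : ℕ) (f : (ℕ → ι) → A) (w : ℕ → ι) :
    loc (kerR q c) i f w = if w i = w (i+1) then q * f w else
      f (upd w i (w (i+1)) (w i)) + if w (i+1) < w i then c * f w else 0 := by
  rw [loc_apply, sum_kerR, upd_self]

theorem loc_Q_apply (q c : A) (i : ℕ) (f : (ℕ → ι) → A) (w : ℕ → ι) :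
    loc (kerQ q c) i f w = if w i = w (i+1) then q * f w else
      f (upd w i (w (i+1)) (w i)) + if w i < w (i+1) then c * f w else 0 := by
  rw [loc_apply, sum_kerQ, upd_self]

theorem loc_R_hecke (q c : A) (hq : q * q = c * q + 1) (i : ℕ) :
    loc (ι := ι) (kerR q c) i * loc (kerR q c) i = 1 + c • loc (kerR q c) i := by
  refine LinearMap.ext fun f => funext fun w => ?_
  simp only [Module.End.mul_apply, LinearMap.add_apply, Module.End.one_apply, LinearMap.smul_apply,
    Pi.add_apply, Pi.smul_apply, smul_eq_mul, loc_R_apply, upd_upd, upd_fst, upd_snd, upd_self]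
  rcases lt_trichotomy (w i) (w (i+1)) with h | h | h
  · simp [h.ne, h.ne', h, h.not_gt]
  · simp only [h, if_true]; linear_combination f w * hq
  · simp [h.ne, h.ne', h, h.not_gt, add_comm]

theorem loc_Q_hecke (q c : A) (hq : q * q = c * q + 1) (i : ℕ) :
    loc (ι := ι) (kerQ q c) i * loc (kerQ q c) i = 1 + c • loc (kerQ q c) i := by
  refine LinearMap.ext fun f => funext fun w => ?_
  simp only [Module.End.mul_apply, LinearMap.add_apply, Module.End.one_apply, LinearMap.smul_apply,
    Pi.add_apply, Pi.smul_apply, smul_eq_mul, loc_Q_apply, upd_upd, upd_fst, upd_snd, upd_self]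
  rcases lt_trichotomy (w i) (w (i+1)) with h | h | h
  · simp [h.ne, h.ne', h, h.not_gt, add_comm]
  · simp only [h, if_true]; linear_combination f w * hq
  · simp [h.ne, h.ne', h, h.not_gt]

end Kernels

/-! ### Two commuting Hecke actions from a mixed braid system -/

section Abstract

/-- Generators `R i`, `Q i`, `S i` (with inverses `S' i`) acting at the sites `i, i + 1`: `R` and
`Q` are Hecke generators, and mixed braid relations let `S` move them past each other. -/
structure MixedBraid {K E : Type*} [CommRing K] [Ring E] [Algebra K E] (c : K)
    (R Q S S' : ℕ → E) : Prop where
  braidR : ∀ i, R i * R (i + 1) * R i = R (i + 1) * R i * R (i + 1)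
  braidQ : ∀ i, Q i * Q (i + 1) * Q i = Q (i + 1) * Q i * Q (i + 1)
  heckeR : ∀ i, R i * R i = 1 + c • R i
  heckeQ : ∀ i, Q i * Q i = 1 + c • Q i
  rss : ∀ i, R i * S (i + 1) * S i = S (i + 1) * S i * R (i + 1)
  ssq : ∀ i, S i * S (i + 1) * Q i = Q (i + 1) * S i * S (i + 1)
  inv : ∀ i, S i * S' i = 1
  inv' : ∀ i, S' i * S i = 1
  farRR : ∀ {i j}, i + 2 ≤ j → Commute (R i) (R j)
  farQQ : ∀ {i j}, i + 2 ≤ j → Commute (Q i) (Q j)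
  farRQ : ∀ {i j}, i + 2 ≤ j → Commute (R i) (Q j)
  farQR : ∀ {i j}, i + 2 ≤ j → Commute (Q i) (R j)
  farRS : ∀ {i j}, i + 2 ≤ j → Commute (R i) (S j)
  farSR : ∀ {i j}, i + 2 ≤ j → Commute (S i) (R j)
  farQS : ∀ {i j}, i + 2 ≤ j → Commute (Q i) (S j)
  farSQ : ∀ {i j}, i + 2 ≤ j → Commute (S i) (Q j)
  farSS : ∀ {i j}, i + 2 ≤ j → Commute (S i) (S j)

/-- Two commuting families `l`, `r` of Hecke generators with the same parameter
`c = q - q⁻¹`. -/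
structure DoubleHecke {K E : Type*} [CommRing K] [Ring E] [Algebra K E] (c : K)
    (l r : ℕ → E) : Prop where
  braidL : ∀ i, l i * l (i + 1) * l i = l (i + 1) * l i * l (i + 1)
  braidR : ∀ i, r i * r (i + 1) * r i = r (i + 1) * r i * r (i + 1)
  heckeL : ∀ i, l i * l i = 1 + c • l i
  heckeR : ∀ i, r i * r i = 1 + c • r i
  farL : ∀ {i j}, i + 2 ≤ j → Commute (l i) (l j)
  farR : ∀ {i j}, i + 2 ≤ j → Commute (r i) (r j)
  comm : ∀ i j, Commute (l i) (r j)

variable {K E : Type*} [CommRing K] [Ring E] [Algebra K E] {c : K} {R Q S S' l r : ℕ → E}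

/-- The left operator of the letters `j, j + 1`; letter `j` occupies the sites `2j`, `2j + 1`. -/
def lOp (R S S' : ℕ → E) (j : ℕ) : E := S' (2 * j + 1) * R (2 * j) * S (2 * j + 1)

/-- The right operator of the letters `j, j + 1`; letter `j` occupies the sites `2j`, `2j + 1`. -/
def rOp (Q S S' : ℕ → E) (j : ℕ) : E := S' (2 * j + 1) * Q (2 * j + 2) * S (2 * j + 1)

namespace MixedBraid

theorem isUnitS (h : MixedBraid c R Q S S') (i : ℕ) : IsUnit (S i) :=
  ⟨⟨S i, S' i, h.inv i, h.inv' i⟩, rfl⟩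

theorem commS' (h : MixedBraid c R Q S S') {i : ℕ} {x : E} (hx : Commute x (S i)) :
    Commute x (S' i) := by
  have : Commute x ((⟨S i, S' i, h.inv i, h.inv' i⟩ : Eˣ)⁻¹ : Eˣ) :=
    Commute.units_inv_right (u := ⟨S i, S' i, h.inv i, h.inv' i⟩) hx
  exact this

theorem S_l (h : MixedBraid c R Q S S') (j : ℕ) :
    S (2 * j + 1) * lOp R S S' j = R (2 * j) * S (2 * j + 1) := by
  simp only [lOp, ← mul_assoc, h.inv, one_mul]

theorem S_r (h : MixedBraid c R Q S S') (j : ℕ) :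
    S (2 * j + 1) * rOp Q S S' j = Q (2 * j + 2) * S (2 * j + 1) := by
  simp only [rOp, ← mul_assoc, h.inv, one_mul]

/-- The invertible operator conjugating the left operators `j`, `j + 1` to `R (2j)`, `R (2j + 1)`
and the right operators `j`, `j + 1` to `Q (2j + 3)`, `Q (2j + 4)`. -/
def U (S : ℕ → E) (j : ℕ) : E := S (2 * j + 2) * S (2 * j + 1) * S (2 * j + 3)

theorem isUnitU (h : MixedBraid c R Q S S') (j : ℕ) : IsUnit (U S j) :=
  ((h.isUnitS _).mul (h.isUnitS _)).mul (h.isUnitS _)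

theorem U_l (h : MixedBraid c R Q S S') (j : ℕ) :
    U S j * lOp R S S' j = R (2 * j) * U S j := by
  have c1 : Commute (S (2 * j + 1)) (S (2 * j + 3)) := h.farSS (by omega)
  have c2 : Commute (R (2 * j)) (S (2 * j + 2)) := h.farRS (by omega)
  have c3 : Commute (R (2 * j)) (S (2 * j + 3)) := h.farRS (by omega)
  calc U S j * lOp R S S' j = S (2 * j + 2) * S (2 * j + 3) * (S (2 * j + 1) * lOp R S S' j) := by
        rw [U, mul_assoc (S (2 * j + 2)), c1.eq]; simp only [mul_assoc]
    _ = S (2 * j + 2) * (S (2 * j + 3) * R (2 * j)) * S (2 * j + 1) := by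
        rw [h.S_l]; simp only [mul_assoc]
    _ = (S (2 * j + 2) * R (2 * j)) * (S (2 * j + 3) * S (2 * j + 1)) := by
        rw [← c3.eq]; simp only [mul_assoc]
    _ = R (2 * j) * U S j := by
        rw [← c2.eq, ← c1.eq, U]; simp only [mul_assoc]

theorem U_l' (h : MixedBraid c R Q S S') (j : ℕ) :
    U S j * lOp R S S' (j + 1) = R (2 * j + 1) * U S j := by
  have e := h.S_l (j + 1)
  have c1 : Commute (S (2 * j + 1)) (S (2 * j + 3)) := h.farSS (by omega)
  have rel := h.rss (2 * j + 1)
  rw [show 2 * (j + 1) + 1 = 2 * j + 3 by ring, show 2 * (j + 1) = 2 * j + 2 by ring] at e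
  simp only [add_assoc, Nat.reduceAdd] at rel
  calc U S j * lOp R S S' (j + 1)
      = S (2 * j + 2) * S (2 * j + 1) * (S (2 * j + 3) * lOp R S S' (j + 1)) := by
        rw [U, mul_assoc]
    _ = S (2 * j + 2) * S (2 * j + 1) * R (2 * j + 2) * S (2 * j + 3) := by
        rw [e]; simp only [mul_assoc]
    _ = R (2 * j + 1) * U S j := by
        rw [← rel, U]; simp only [mul_assoc]

theorem U_r' (h : MixedBraid c R Q S S') (j : ℕ) :
    U S j * rOp Q S S' (j + 1) = Q (2 * j + 4) * U S j := by
  have e := h.S_r (j + 1)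
  have c1 : Commute (S (2 * j + 1)) (Q (2 * j + 4)) := h.farSQ (by omega)
  have c2 : Commute (S (2 * j + 2)) (Q (2 * j + 4)) := h.farSQ (by omega)
  rw [show 2 * (j + 1) + 1 = 2 * j + 3 by ring, show 2 * (j + 1) + 2 = 2 * j + 4 by ring] at e
  calc U S j * rOp Q S S' (j + 1)
      = S (2 * j + 2) * S (2 * j + 1) * (S (2 * j + 3) * rOp Q S S' (j + 1)) := by
        rw [U, mul_assoc]
    _ = S (2 * j + 2) * (S (2 * j + 1) * Q (2 * j + 4)) * S (2 * j + 3) := by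
        rw [e]; simp only [mul_assoc]
    _ = (S (2 * j + 2) * Q (2 * j + 4)) * S (2 * j + 1) * S (2 * j + 3) := by
        rw [c1.eq]; simp only [mul_assoc]
    _ = Q (2 * j + 4) * U S j := by
        rw [c2.eq, U]; simp only [mul_assoc]

theorem U_r (h : MixedBraid c R Q S S') (j : ℕ) :
    U S j * rOp Q S S' j = Q (2 * j + 3) * U S j := by
  have c1 : Commute (S (2 * j + 1)) (S (2 * j + 3)) := h.farSS (by omega)
  have rel := h.ssq (2 * j + 2)
  simp only [add_assoc, Nat.reduceAdd] at rel
  calc U S j * rOp Q S S' j = S (2 * j + 2) * S (2 * j + 3) * (S (2 * j + 1) * rOp Q S S' j) := by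
        rw [U, mul_assoc (S (2 * j + 2)), c1.eq]; simp only [mul_assoc]
    _ = (S (2 * j + 2) * S (2 * j + 3) * Q (2 * j + 2)) * S (2 * j + 1) := by
        rw [h.S_r]; simp only [mul_assoc]
    _ = Q (2 * j + 3) * U S j := by
        rw [rel, U, mul_assoc (S (2 * j + 2)), c1.eq]; simp only [mul_assoc]

theorem comm_of {U a b a' b' : E} (hU : IsUnit U) (ha : U * a = a' * U) (hb : U * b = b' * U)
    (h : Commute a' b') : Commute a b := by
  apply hU.mul_left_cancel
  rw [← mul_assoc, ha, mul_assoc, hb, ← mul_assoc, h.eq, mul_assoc, ← ha, ← mul_assoc, ← hb,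
    mul_assoc]

theorem braid_of {U a b a' b' : E} (hU : IsUnit U) (ha : U * a = a' * U) (hb : U * b = b' * U)
    (h : a' * b' * a' = b' * a' * b') : a * b * a = b * a * b := by
  have key : ∀ {x y z x' y' z' : E}, U * x = x' * U → U * y = y' * U → U * z = z' * U →
      U * (x * y * z) = x' * y' * z' * U := by
    intro x y z x' y' z' hx hy hz
    rw [← mul_assoc, ← mul_assoc, hx, mul_assoc x', hy, ← mul_assoc, mul_assoc _ U, hz,
      ← mul_assoc]
  apply hU.mul_left_cancel
  rw [key ha hb ha, key hb ha hb, h]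

theorem conj_hecke {s s' x : E} (h : s * s' = 1) (h' : s' * s = 1) (hx : x * x = 1 + c • x) :
    (s' * x * s) * (s' * x * s) = 1 + c • (s' * x * s) := by
  calc (s' * x * s) * (s' * x * s) = s' * x * (s * s') * x * s := by simp only [mul_assoc]
    _ = s' * (x * x) * s := by rw [h, mul_one]; simp only [mul_assoc]
    _ = 1 + c • (s' * x * s) := by
        rw [hx, mul_add, add_mul, mul_one, h']; simp

/-- Braid relations and commutation of neighbouring operators are read off after conjugation by
`U`, which separates the left and the right operators onto disjoint sites. -/
theorem doubleHecke (h : MixedBraid c R Q S S') :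
    DoubleHecke c (lOp R S S') (rOp Q S S') where
  braidL i := braid_of (h.isUnitU i) (h.U_l i) (h.U_l' i) (h.braidR _)
  braidR i := braid_of (h.isUnitU i) (h.U_r i) (h.U_r' i) (h.braidQ (2 * i + 3))
  heckeL i := conj_hecke (h.inv _) (h.inv' _) (h.heckeR _)
  heckeR i := conj_hecke (h.inv _) (h.inv' _) (h.heckeQ _)
  farL {i j} hij := by
    unfold lOp
    have c1 : Commute (S (2 * i + 1)) (S (2 * j + 1)) := h.farSS (by omega)
    have c2 : Commute (S (2 * i + 1)) (R (2 * j)) := h.farSR (by omega)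
    have c3 : Commute (R (2 * i)) (S (2 * j + 1)) := h.farRS (by omega)
    have c4 : Commute (R (2 * i)) (R (2 * j)) := h.farRR (by omega)
    have d1 : Commute (S (2 * i + 1)) (lOp R S S' j) :=
      ((h.commS' c1).mul_right c2).mul_right c1
    exact (((h.commS' d1.symm).symm).mul_left
      (((h.commS' c3).mul_right c4).mul_right c3)).mul_left d1
  farR {i j} hij := by
    have c1 : Commute (S (2 * i + 1)) (S (2 * j + 1)) := h.farSS (by omega)
    have c2 : Commute (S (2 * i + 1)) (Q (2 * j + 2)) := h.farSQ (by omega)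
    have c3 : Commute (Q (2 * i + 2)) (S (2 * j + 1)) := by
      rcases Nat.lt_or_ge (i + 1) j with hh | hh
      · exact h.farQS (by omega)
      · omega
    have c4 : Commute (Q (2 * i + 2)) (Q (2 * j + 2)) := h.farQQ (by omega)
    have d1 : Commute (S (2 * i + 1)) (rOp Q S S' j) :=
      ((h.commS' c1).mul_right c2).mul_right c1
    exact (((h.commS' d1.symm).symm).mul_left
      (((h.commS' c3).mul_right c4).mul_right c3)).mul_left d1
  comm i j := by
    rcases lt_trichotomy (i + 1) j with hij | hij | hij
    · have c1 : Commute (S (2 * i + 1)) (S (2 * j + 1)) := h.farSS (by omega)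
      have c2 : Commute (S (2 * i + 1)) (Q (2 * j + 2)) := h.farSQ (by omega)
      have c3 : Commute (R (2 * i)) (S (2 * j + 1)) := h.farRS (by omega)
      have c4 : Commute (R (2 * i)) (Q (2 * j + 2)) := h.farRQ (by omega)
      have d1 : Commute (S (2 * i + 1)) (rOp Q S S' j) :=
        ((h.commS' c1).mul_right c2).mul_right c1
      exact (((h.commS' d1.symm).symm).mul_left
        (((h.commS' c3).mul_right c4).mul_right c3)).mul_left d1
    · subst hij
      exact comm_of (h.isUnitU i) (h.U_l i) (h.U_r' i) (h.farRQ (by omega))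
    · rcases lt_trichotomy i j with h1 | h1 | h1
      · omega
      · subst h1
        exact comm_of (h.isUnitS (2 * i + 1)) (h.S_l i) (h.S_r i) (h.farRQ (by omega))
      · obtain h2 | h2 : i = j + 1 ∨ j + 2 ≤ i := by omega
        · subst h2
          exact comm_of (h.isUnitU j) (h.U_l' j) (h.U_r j) (h.farRQ (by omega))
        · have c1 : Commute (S (2 * j + 1)) (S (2 * i + 1)) := h.farSS (by omega)
          have c2 : Commute (S (2 * j + 1)) (R (2 * i)) := h.farSR (by omega)
          have c3 : Commute (Q (2 * j + 2)) (S (2 * i + 1)) := h.farQS (by omega)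
          have c4 : Commute (Q (2 * j + 2)) (R (2 * i)) := h.farQR (by omega)
          have d1 : Commute (S (2 * j + 1)) (lOp R S S' i) :=
            ((h.commS' c1).mul_right c2).mul_right c1
          exact ((((h.commS' d1.symm).symm).mul_left
            (((h.commS' c3).mul_right c4).mul_right c3)).mul_left d1).symm

end MixedBraid

/-! ### The Casimir element of the double Hecke action -/

namespace DoubleHecke

/-- The sum `1 + t (n-1) + t (n-2) * t (n-1) + ⋯ + t 0 * ⋯ * t (n-1)` with `t i = l i * r i`, that
is, the part of the Casimir element coming from coset representatives of `S_n` in `S_{n+1}`. -/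
def G (l r : ℕ → E) : ℕ → E
  | 0 => 1
  | n + 1 => 1 + G l r n * (l n * r n)

/-- The Casimir element `∑ w, l_w * r_w` over the symmetric group `S_{n+1}`, built from coset
representatives. -/
def casimir (l r : ℕ → E) : ℕ → E
  | 0 => 1
  | n + 1 => G l r (n + 1) * casimir l r n

theorem comm_G (x : E) (n : ℕ) (h : ∀ i < n, Commute x (l i * r i)) : Commute x (G l r n) := by
  induction n with
  | zero => exact Commute.one_right x
  | succ n ih =>
    exact (Commute.one_right x).add_right
      ((ih fun i hi => h i (by omega)).mul_right (h n (by omega)))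

/-- The braid relation carries `l (n + 1)` through `t n * t (n + 1)` to `l n`. -/
theorem l_tt (h : DoubleHecke c l r) (n : ℕ) :
    l (n + 1) * (l n * r n * (l (n + 1) * r (n + 1))) =
      l n * r n * (l (n + 1) * r (n + 1)) * l n := by
  have e1 : r n * l (n + 1) = l (n + 1) * r n := (h.comm _ _).eq.symm
  have e2 : r (n + 1) * l n = l n * r (n + 1) := (h.comm _ _).eq.symm
  have e3 : r n * l n = l n * r n := (h.comm _ _).eq.symm
  calc _ = l (n + 1) * l n * (r n * l (n + 1)) * r (n + 1) := by simp only [mul_assoc]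
    _ = (l (n + 1) * l n * l (n + 1)) * r n * r (n + 1) := by rw [e1]; simp only [mul_assoc]
    _ = l n * l (n + 1) * (l n * r n) * r (n + 1) := by
      rw [← h.braidL]; simp only [mul_assoc]
    _ = l n * (l (n + 1) * r n) * (l n * r (n + 1)) := by rw [← e3]; simp only [mul_assoc]
    _ = _ := by rw [← e1, ← e2]; simp only [mul_assoc]

theorem swap (h : DoubleHecke c l r) : DoubleHecke c r l where
  braidL := h.braidR
  braidR := h.braidL
  heckeL := h.heckeR
  heckeR := h.heckeL
  farL := h.farR
  farR := h.farL
  comm i j := (h.comm j i).symm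

theorem r_tt (h : DoubleHecke c l r) (n : ℕ) :
    r (n + 1) * (l n * r n * (l (n + 1) * r (n + 1))) =
      l n * r n * (l (n + 1) * r (n + 1)) * r n := by
  have := h.swap.l_tt n
  rwa [(h.comm n n).eq, (h.comm (n + 1) (n + 1)).eq]

theorem far_l (h : DoubleHecke c l r) {i j : ℕ} (hij : i + 2 ≤ j ∨ j + 2 ≤ i) :
    Commute (l i) (l j * r j) := by
  refine Commute.mul_right ?_ (h.comm _ _)
  rcases hij with hij | hij
  exacts [h.farL hij, (h.farL hij).symm]

theorem far_r (h : DoubleHecke c l r) {i j : ℕ} (hij : i + 2 ≤ j ∨ j + 2 ≤ i) :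
    Commute (r i) (l j * r j) := by
  refine Commute.mul_right (h.comm _ _).symm ?_
  rcases hij with hij | hij
  exacts [h.farR hij, (h.farR hij).symm]

/-- The rank-one case: by the quadratic relations, `1 + l n * r n` equalizes `l n` and `r n`. -/
theorem hecke_pair (h : DoubleHecke c l r) (n : ℕ) (X : E) :
    l n * (X + l n * r n * X) = r n * (X + l n * r n * X) := by
  have e : r n * l n = l n * r n := (h.comm _ _).eq.symm
  have e1 : l n * (X + l n * r n * X) = l n * X + (l n * l n) * (r n * X) := by
    simp only [mul_add, mul_assoc]
  have e2 : r n * (X + l n * r n * X) = r n * X + (r n * l n) * (r n * X) := by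
    simp only [mul_add, mul_assoc]
  have e3 : l n * r n * (r n * X) = l n * ((r n * r n) * X) := by simp only [mul_assoc]
  rw [e1, e2, h.heckeL, e, e3, h.heckeR]
  simp only [add_mul, mul_add, one_mul, smul_mul_assoc, mul_smul_comm]
  abel

/-- Multiplying by `G` extends the equality of the left and right actions from the first `n - 1`
generators to the first `n`. -/
theorem G_inv (h : DoubleHecke c l r) (n : ℕ) :
    ∀ X : E, (∀ i, i + 1 < n → l i * X = r i * X) →
      ∀ i < n, l i * (G l r n * X) = r i * (G l r n * X) := by
  induction n with
  | zero => intro X _ i hi; omega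
  | succ n ih =>
    intro X hX i hi
    have hY : ∀ i, i + 1 < n → l i * (l n * r n * X) = r i * (l n * r n * X) := by
      intro i hi
      rw [← mul_assoc, (h.far_l (Or.inl (by omega))).eq, mul_assoc, hX i (by omega), ← mul_assoc,
        ← (h.far_r (Or.inl (by omega))).eq, mul_assoc]
    have e : G l r (n + 1) * X = X + G l r n * (l n * r n * X) := by
      simp only [G, add_mul, one_mul, mul_assoc]
    rw [e]
    rcases Nat.lt_or_ge i n with hin | hin
    · rw [mul_add, mul_add, ih _ hY i hin, hX i (by omega)]
    · obtain rfl : i = n := by omega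
      cases i with
      | zero => simpa only [G, one_mul] using h.hecke_pair 0 X
      | succ m =>
        have e' : X + G l r (m + 1) * (l (m + 1) * r (m + 1) * X) =
            (X + l (m + 1) * r (m + 1) * X) +
              G l r m * (l m * r m * (l (m + 1) * r (m + 1)) * X) := by
          simp only [G, add_mul, one_mul, mul_assoc, add_assoc]
        have hl := comm_G (l := l) (r := r) (l (m + 1)) m fun j hj => h.far_l (i := m + 1) (Or.inr (by omega))
        have hr := comm_G (l := l) (r := r) (r (m + 1)) m fun j hj => h.far_r (i := m + 1) (Or.inr (by omega))
        rw [e', mul_add _ (X + _), mul_add _ (X + _), h.hecke_pair]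
        congr 1
        rw [← mul_assoc, hl.eq, mul_assoc, ← mul_assoc (l (m + 1)), h.l_tt, mul_assoc _ (l m),
          hX m (by omega), ← mul_assoc (r (m + 1)), hr.eq, mul_assoc (G l r m),
          ← mul_assoc (r (m + 1)), h.r_tt]
        simp only [mul_assoc]

/-- The left and the right Hecke action agree on the Casimir element. -/
theorem casimir_inv (h : DoubleHecke c l r) (n : ℕ) :
    ∀ i < n, l i * casimir l r n = r i * casimir l r n := by
  induction n with
  | zero => intro i hi; omega
  | succ n ih => exact h.G_inv (n + 1) _ fun i hi => ih i (by omega)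

end DoubleHecke

end Abstract

/-! ### The Casimir operator on functions of words and its value at `q = 1` -/

section Specialize

variable {A : Type*} [CommRing A] {ι : Type*} [Fintype ι] [LinearOrder ι]

theorem mixedBraid (q c : A) (hq : q * q = c * q + 1) :
    MixedBraid c (fun i => loc (ι := ι) (kerR q c) i) (fun i => loc (kerQ q c) i)
      (fun i => loc (kerS q c) i) (fun i => loc (kerS' q c) i) := by
  have hu : IsUnit q := IsUnit.of_mul_eq_one (q - c) (by linear_combination hq)
  exact
  { braidR := loc_braid _ _ _ _ _ _ (ybe q c hq)
    braidQ := loc_braid _ _ _ _ _ _ (kerQ_ybe q c hq)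
    heckeR := loc_R_hecke q c hq
    heckeQ := loc_Q_hecke q c hq
    rss := loc_braid _ _ _ _ _ _ (kerRSS q c hq)
    ssq := loc_braid _ _ _ _ _ _ (kerSSQ q c hq)
    inv := loc_S_mul_S' hu c
    inv' := loc_S'_mul_S hu c
    farRR := loc_comm _ _
    farQQ := loc_comm _ _
    farRQ := loc_comm _ _
    farQR := loc_comm _ _
    farRS := loc_comm _ _
    farSR := loc_comm _ _
    farQS := loc_comm _ _
    farSQ := loc_comm _ _
    farSS := loc_comm _ _ }

/-- The left Hecke generator of the letters `j, j + 1` on functions of words. -/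
noncomputable def opL (q c : A) : ℕ → Module.End A ((ℕ → ι) → A) :=
  lOp (fun i => loc (kerR q c) i) (fun i => loc (kerS q c) i) (fun i => loc (kerS' q c) i)

/-- The right Hecke generator of the letters `j, j + 1` on functions of words. -/
noncomputable def opR (q c : A) : ℕ → Module.End A ((ℕ → ι) → A) :=
  rOp (fun i => loc (kerQ q c) i) (fun i => loc (kerS q c) i) (fun i => loc (kerS' q c) i)

/-- The Casimir operator on the first `n + 1` letters. -/
noncomputable def cas (q c : A) (n : ℕ) : Module.End A ((ℕ → ι) → A) :=
  DoubleHecke.casimir (opL q c) (opR q c) n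

/-- Functions in the image of the Casimir operator satisfy the reflection equation at each pair of
neighbouring letters. -/
theorem cas_inv (q c : A) (hq : q * q = c * q + 1) (n i : ℕ) (hi : i < n) (f : (ℕ → ι) → A) :
    loc (kerR q c) (2 * i) (loc (kerS q c) (2 * i + 1) (cas q c n f)) =
      loc (kerQ q c) (2 * i + 2) (loc (kerS q c) (2 * i + 1) (cas q c n f)) := by
  have hM := mixedBraid (ι := ι) q c hq
  have h := hM.doubleHecke.casimir_inv n i hi
  have h2 := congrArg (fun X => loc (kerS q c) (2 * i + 1) * X) h
  simp only [← mul_assoc] at h2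
  have h3 := hM.S_l i
  have h4 := hM.S_r i
  rw [h3, h4] at h2
  exact LinearMap.congr_fun h2 f

/-- The word `w` with the entries at sites `i` and `i + 1` exchanged. -/
def sw (i : ℕ) (w : ℕ → ι) : ℕ → ι := w ∘ Equiv.swap i (i + 1)

theorem upd_eq_sw (w : ℕ → ι) (i : ℕ) : upd w i (w (i + 1)) (w i) = sw i w := by
  funext n
  simp only [upd, sw, Function.comp, Function.update_apply, Equiv.swap_apply_def]
  split_ifs <;> first | rfl | omega

theorem sw_self (w : ℕ → ι) (i : ℕ) (h : w i = w (i + 1)) : sw i w = w := by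
  rw [← upd_eq_sw]
  conv_rhs => rw [← upd_self w i]
  rw [h]

theorem sw_sw (w : ℕ → ι) (i : ℕ) : sw i (sw i w) = w := by
  funext n; simp [sw]

/-- The permutation of sites to which `opL j * opR j` specializes at `q = 1`. -/
def tw (j : ℕ) (w : ℕ → ι) : ℕ → ι :=
  sw (2 * j + 1) (sw (2 * j + 2) (sw (2 * j + 1) (sw (2 * j + 1) (sw (2 * j) (sw (2 * j + 1) w)))))

variable {B : Type*} [CommRing B] (φ : A →+* B) {q c : A} (h1 : φ q = 1) (h0 : φ c = 0)
include h1 h0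

theorem spec_R (i : ℕ) (f : (ℕ → ι) → A) (w : ℕ → ι) :
    φ (loc (kerR q c) i f w) = φ (f (sw i w)) := by
  rw [loc_R_apply, upd_eq_sw]
  split_ifs with h h'
  · simp [h1, sw_self w i h]
  · simp [h0]
  · simp

theorem spec_Q (i : ℕ) (f : (ℕ → ι) → A) (w : ℕ → ι) :
    φ (loc (kerQ q c) i f w) = φ (f (sw i w)) := by
  rw [loc_Q_apply, upd_eq_sw]
  split_ifs with h h'
  · simp [h1, sw_self w i h]
  · simp [h0]
  · simp

theorem spec_S (i : ℕ) (f : (ℕ → ι) → A) (w : ℕ → ι) :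
    φ (loc (kerS q c) i f w) = φ (f (sw i w)) := by
  rw [loc_apply, sum_kerS, upd_eq_sw]
  split_ifs with h
  · have : ∀ e, φ (triT q c (w i) e) = if w i = e then 1 else 0 := by
      intro e; unfold triT; split_ifs <;> simp [h1, h0]
    rw [map_sum]
    simp only [map_mul, this, ite_mul, one_mul, zero_mul, sum_ite_eq, mem_univ, if_true]
    rw [sw_self w i h]
    conv_lhs => rw [show upd w i (w i) (w i) = upd w i (w i) (w (i+1)) by rw [← h]]
    rw [upd_self]
  · rfl

theorem spec_S' (hq : IsUnit q) (i : ℕ) (f : (ℕ → ι) → A) (w : ℕ → ι) :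
    φ (loc (kerS' q c) i f w) = φ (f (sw i w)) := by
  have h := spec_S φ h1 h0 i (loc (kerS' q c) i f) (sw i w)
  rw [sw_sw, ← Module.End.mul_apply, loc_S_mul_S' hq, Module.End.one_apply] at h
  exact h.symm

theorem spec_t (hq : IsUnit q) (j : ℕ) (f : (ℕ → ι) → A) (w : ℕ → ι) :
    φ ((opL q c j * opR q c j : Module.End A ((ℕ → ι) → A)) f w) = φ (f (tw j w)) := by
  simp only [opL, opR, lOp, rOp, Module.End.mul_apply, spec_R φ h1 h0, spec_Q φ h1 h0,
    spec_S φ h1 h0, spec_S' φ h1 h0 hq, tw]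

/-- At `q = 1`, each of the `n + 1` terms of `G` fixes a function that is invariant under letter
exchanges. -/
theorem spec_G (hq : IsUnit q) (n : ℕ) : ∀ f : (ℕ → ι) → A,
    (∀ j < n, ∀ w, φ (f (tw j w)) = φ (f w)) → ∀ w,
    φ (DoubleHecke.G (opL q c) (opR q c) n f w) = (n + 1 : ℕ) * φ (f w) := by
  induction n with
  | zero => intro f _ w; simp [DoubleHecke.G]
  | succ n ih =>
    intro f hf w
    have e : DoubleHecke.G (opL q c) (opR q c) (n + 1) f =
      f + DoubleHecke.G (opL q c) (opR q c) n ((opL q c n * opR q c n : Module.End A ((ℕ → ι) → A)) f) := rfl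
    rw [e, Pi.add_apply, map_add, ih, spec_t φ h1 h0 hq, hf n (by omega)]
    · push_cast; ring
    · intro j hj w
      rw [spec_t φ h1 h0 hq, spec_t φ h1 h0 hq, hf n (by omega), hf n (by omega), hf j (by omega)]

/-- At `q = 1` the Casimir operator is the full symmetrization; on a function invariant under
exchanges of the letters it is multiplication by `(n + 1)!`. -/
theorem spec_cas (hq : IsUnit q) (n : ℕ) (f : (ℕ → ι) → A)
    (hf : ∀ j < n, ∀ w, φ (f (tw j w)) = φ (f w)) (w : ℕ → ι) :
    φ (cas q c n f w) = ((n + 1).factorial : ℕ) * φ (f w) := by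
  induction n generalizing w with
  | zero => simp [cas, DoubleHecke.casimir]
  | succ n ih =>
    have ih' := ih (fun j hj => hf j (by omega))
    have e : cas q c (n + 1) f = DoubleHecke.G (opL q c) (opR q c) (n + 1) (cas q c n f) := rfl
    rw [e, spec_G φ h1 h0 hq, ih', Nat.factorial_succ (n + 1)]
    · push_cast; ring
    · intro j hj w
      rw [ih', ih', hf j hj]

omit h1 h0

/-- The `j`-th letter of a word, a pair of entries labelling a generator `x^a_b`. -/
def letter (w : ℕ → ι) (j : ℕ) : ι × ι := (w (2 * j), w (2 * j + 1))

/-- The site permutation `tw j` exchanges the letters `j` and `j + 1`. -/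
theorem letter_tw (w : ℕ → ι) (j n : ℕ) :
    letter (tw j w) n = letter w (Equiv.swap j (j + 1) n) := by
  have key : ∀ m, tw j w m = if m = 2 * j then w (2 * j + 2) else if m = 2 * j + 1 then
      w (2 * j + 3) else if m = 2 * j + 2 then w (2 * j) else if m = 2 * j + 3 then w (2 * j + 1)
      else w m := by
    intro m
    simp only [tw, sw, Function.comp, Equiv.swap_apply_def]
    grind
  simp only [letter, key, Equiv.swap_apply_def]
  grind

end Specialize

/-! ### The relators and the functionals that annihilate them -/

section Relations

variable {ι : Type*} [Fintype ι]

/-- The `((a, b), (c, d))` entry of `R L₁ R L₁ - L₁ R L₁ R` with `g x y` substituted for the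
product of the generators indexed by `x` and `y`. -/
def relEval {K M : Type*} [CommRing K] [AddCommGroup M] [Module K M] (R : ι → ι → ι → ι → K)
    (a b c d : ι) (g : ι × ι → ι × ι → M) : M :=
  (∑ a', ∑ b', ∑ e, ∑ f, (R a b a' b' * R e b' f d) • g (a', e) (f, c)) -
    ∑ x, ∑ y, ∑ e, ∑ f, (R y x c d * R e b f x) • g (a, e) (f, y)

theorem map_relEval {K M M' : Type*} [CommRing K] [AddCommGroup M] [Module K M] [AddCommGroup M']
    [Module K M'] (R : ι → ι → ι → ι → K) (a b c d : ι) (g : ι × ι → ι × ι → M) (φ : M →ₗ[K] M') :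
    φ (relEval R a b c d g) = relEval R a b c d fun x y => φ (g x y) := by
  simp only [relEval, map_sub, map_sum, map_smul]

theorem ringHom_relEval {K K' : Type*} [CommRing K] [CommRing K'] (R : ι → ι → ι → ι → K)
    (a b c d : ι) (g : ι × ι → ι × ι → K) (φ : K →+* K') :
    φ (relEval R a b c d g) =
      relEval (fun a b x y => φ (R a b x y)) a b c d fun x y => φ (g x y) := by
  simp only [relEval, map_sub, map_sum, smul_eq_mul, map_mul]

theorem relEval_algebraMap {A K M : Type*} [CommRing A] [CommRing K] [Algebra A K]
    [AddCommGroup M] [Module A M] [Module K M] [IsScalarTower A K M] (R : ι → ι → ι → ι → A)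
    (a b c d : ι) (g : ι × ι → ι × ι → M) :
    relEval R a b c d g = relEval (fun a b x y => algebraMap A K (R a b x y)) a b c d g := by
  simp only [relEval, ← map_mul, algebraMap_smul]

variable [LinearOrder ι]

theorem kerR_map {A B : Type*} [CommRing A] [CommRing B] (φ : A →+* B) (q c : A) (a b x y : ι) :
    φ (kerR q c a b x y) = kerR (φ q) (φ c) a b x y := by
  unfold kerR
  split_ifs <;> simp

/-- At `q = 1` the relators are commutators of generators. -/
theorem relEval_one (a b c d : ι) (g : ι × ι → ι × ι → ℚ) :
    relEval (kerR (1 : ℚ) 0) a b c d g = g (b, d) (a, c) - g (a, c) (b, d) := by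
  have key : ∀ a b x y : ι, kerR (1 : ℚ) 0 a b x y = if x = b ∧ y = a then 1 else 0 := by
    intro a b x y
    unfold kerR
    grind
  simp only [relEval, key, smul_eq_mul]
  congr 1
  · rw [Fintype.sum_eq_single b, Fintype.sum_eq_single a, Fintype.sum_eq_single d,
      Fintype.sum_eq_single a]
    · simp
    all_goals (intro t ht; simp [ht, Ne.symm ht])
  · rw [Fintype.sum_eq_single c, Fintype.sum_eq_single d, Fintype.sum_eq_single c,
      Fintype.sum_eq_single b]
    · simp
    all_goals (intro t ht; simp [ht, Ne.symm ht])

/-- A function in the image of the Casimir operator kills the relators at letters `i`, `i + 1`.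
Here `W x y` is a word whose letters `i`, `i + 1` are `x`, `y` and which is otherwise fixed. -/
theorem relEval_cas {A : Type*} [CommRing A] (q c : A) (hq : q * q = c * q + 1) (n i : ℕ)
    (hi : i < n) (h : (ℕ → ι) → A) (a b c' d : ι) (W : ι × ι → ι × ι → ℕ → ι)
    (hW : ∀ x y, W x y = upd (upd (W (a, b) (d, c')) (2 * i) x.1 x.2) (2 * i + 2) y.1 y.2) :
    relEval (kerR q c) a b c' d (fun x y => cas q c n h (W x y)) = 0 := by
  have e := congrFun (cas_inv q c hq n i hi h) (W (a, b) (d, c'))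
  have s0 : W (a, b) (d, c') (2 * i) = a := by
    rw [hW, upd_of_ne _ _ _ _ _ (by omega) (by omega)]; simp
  have s1 : W (a, b) (d, c') (2 * i + 1) = b := by rw [hW]; simp [upd]
  have s2 : W (a, b) (d, c') (2 * i + 2) = d := by rw [hW]; simp [upd]
  have s3 : W (a, b) (d, c') (2 * i + 3) = c' := by rw [hW]; simp [upd]
  simp only [loc_apply] at e
  have t1 : ∀ x y u v, upd (upd (W (a, b) (d, c')) (2 * i) x y) (2 * i + 1) u v =
      W (x, u) (v, c') := by
    intro x y u v
    rw [hW (x, u) (v, c'), hW (a, b) (d, c')]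
    funext m
    simp only [upd, Function.update_apply]
    split_ifs <;> first | rfl | omega
  have t2 : ∀ x y u v, upd (upd (W (a, b) (d, c')) (2 * i + 2) x y) (2 * i + 1) u v =
      W (a, u) (v, y) := by
    intro x y u v
    rw [hW (a, u) (v, y), hW (a, b) (d, c')]
    funext m
    simp only [upd, Function.update_apply]
    split_ifs <;> first | rfl | omega
  simp only [t1, t2, s0, s1, s2, s3, Nat.add_assoc, Nat.reduceAdd] at e
  have u1 : ∀ x y, upd (W (a, b) (d, c')) (2 * i) x y (2 * i + 1) = y := fun x y => by simp [upd]
  have u2 : ∀ x y, upd (W (a, b) (d, c')) (2 * i) x y (2 * i + 2) = d := fun x y => by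
    rw [upd_of_ne _ _ _ _ _ (by omega) (by omega), s2]
  have u3 : ∀ x y, upd (W (a, b) (d, c')) (2 * i + 2) x y (2 * i + 1) = b := fun x y => by
    rw [upd_of_ne _ _ _ _ _ (by omega) (by omega), s1]
  have u4 : ∀ x y, upd (W (a, b) (d, c')) (2 * i + 2) x y (2 * i + 2) = x := fun x y => by
    simp [upd]
  simp only [u1, u2, u3, u4, kerQ, kerS, mul_sum] at e
  simp only [relEval, smul_eq_mul, mul_assoc, sub_eq_zero]
  exact e

end Relations

section Words

variable {ι : Type*} [Fintype ι] [LinearOrder ι]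

/-- The list of letters `l` spread over the sites `0, …, 2 * l.length - 1`; the remaining sites are
filled with copies of `d0`. -/
def pad (d0 : ι × ι) (l : List (ι × ι)) (n : ℕ) : ι :=
  if n % 2 = 0 then (l.getD (n / 2) d0).1 else (l.getD (n / 2) d0).2

theorem letter_pad (d0 : ι × ι) (l : List (ι × ι)) (j : ℕ) : letter (pad d0 l) j = l.getD j d0 := by
  have h1 : (2 * j + 1) / 2 = j := by omega
  have h2 : (2 * j + 1) % 2 = 1 := by omega
  simp [letter, pad, h1, h2]

theorem pad_upd (d0 : ι × ι) (l1 l2 : List (ι × ι)) (x y x' y' : ι × ι) :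
    pad d0 (l1 ++ x :: y :: l2) =
      upd (upd (pad d0 (l1 ++ x' :: y' :: l2)) (2 * l1.length) x.1 x.2)
        (2 * l1.length + 2) y.1 y.2 := by
  have key : ∀ x y m, (l1 ++ x :: y :: l2).getD m d0 = if m = l1.length then x else
      if m = l1.length + 1 then y else (l1 ++ d0 :: d0 :: l2).getD m d0 := by
    intro x y m
    rcases lt_or_ge m l1.length with h | h
    · rw [List.getD_append _ _ _ _ h, List.getD_append _ _ _ _ h, if_neg (by omega),
        if_neg (by omega)]
    · obtain ⟨r, rfl⟩ := Nat.exists_eq_add_of_le h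
      rw [List.getD_append_right _ _ _ _ h, List.getD_append_right _ _ _ _ h]
      rcases r with _ | _ | r <;> simp
  funext m
  have k1 := key x y (m / 2)
  have k2 := key x' y' (m / 2)
  simp only [upd, Function.update_apply, pad]
  rw [k1, k2]
  grind

/-- The multiset of the first `k` letters of a word. -/
def content (k : ℕ) (w : ℕ → ι) : Multiset (ι × ι) := ∑ j ∈ range k, {letter w j}

theorem content_tw (k : ℕ) (w : ℕ → ι) (j : ℕ) (hj : j + 1 < k) :
    content k (tw j w) = content k w := by
  unfold content
  simp only [letter_tw]
  refine Equiv.Perm.sum_comp (Equiv.swap j (j + 1)) (range k)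
    (fun n => ({letter w n} : Multiset (ι × ι))) fun a ha => ?_
  have : a = j ∨ a = j + 1 := by
    by_contra hcon
    push Not at hcon
    exact ha (Equiv.swap_apply_of_ne_of_ne hcon.1 hcon.2)
  simp only [coe_range, Set.mem_Iio]
  omega

theorem content_pad (d0 : ι × ι) (l : List (ι × ι)) :
    content l.length (pad d0 l) = (l : Multiset (ι × ι)) := by
  unfold content
  simp only [letter_pad]
  induction l with
  | nil => simp
  | cons a l ih =>
    rw [List.length_cons, sum_range_succ']
    simp only [List.getD_cons_succ, List.getD_cons_zero, ih]
    rw [← Multiset.cons_coe, ← Multiset.singleton_add, add_comm]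

variable {A : Type*} [CommRing A]

/-- The value on the word `l` of the functional of degree `k` attached to the multiset `s`: the
Casimir operator applied to the indicator function of the words with content `s`. For `k = 0` the
Casimir operator used is the identity, as `k - 1 = 0`. -/
noncomputable def casVal (q c : A) (d0 : ι × ι) (k : ℕ) (s : Multiset (ι × ι))
    (l : List (ι × ι)) : A :=
  cas q c (k - 1) (fun w => if content k w = s then 1 else 0) (pad d0 l)

/-- At `q = 1` the functionals are, up to a nonzero integer, dual to the monomials. -/
theorem casVal_spec (q c : A) (hu : IsUnit q) (φ : A →+* ℚ) (h1 : φ q = 1) (h0 : φ c = 0)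
    (d0 : ι × ι) (k : ℕ) (s : Multiset (ι × ι)) (l : List (ι × ι)) (hl : l.length = k) :
    φ (casVal q c d0 k s l) =
      if (l : Multiset (ι × ι)) = s then ((k - 1 + 1).factorial : ℚ) else 0 := by
  unfold casVal
  rw [spec_cas φ h1 h0 hu]
  · subst hl
    rw [content_pad]
    split_ifs <;> simp
  · intro j hj w
    rw [content_tw _ _ _ (by omega)]

theorem casVal_rel (q c : A) (hq : q * q = c * q + 1) (d0 : ι × ι) (k : ℕ)
    (s : Multiset (ι × ι)) (l1 l2 : List (ι × ι)) (hl : l1.length + l2.length + 2 = k)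
    (a b c' d : ι) :
    relEval (kerR q c) a b c' d (fun x y => casVal q c d0 k s (l1 ++ x :: y :: l2)) = 0 := by
  refine relEval_cas q c hq (k - 1) l1.length (by omega) _ a b c' d
    (fun x y => pad d0 (l1 ++ x :: y :: l2)) fun x y => pad_upd _ _ _ _ _ _ _

end Words

/-! ### Linear algebra over the coefficient ring -/

section LinearAlgebra

/-- A matrix that specializes under `φ` to a nonzero multiple of the identity has nonzero
determinant, also after an injective change of rings `ev`. -/
theorem det_ne_zero_of_map {A K T : Type*} [CommRing A] [Field K] [Fintype T] [DecidableEq T]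
    (ev : A →+* K) (hev : Function.Injective ev) (φ : A →+* ℚ) (M : Matrix T T A) (r : ℚ)
    (hr : r ≠ 0) (hM : ∀ s t, φ (M s t) = if s = t then r else 0) : (M.map ev).det ≠ 0 := by
  have h1 : φ M.det ≠ 0 := by
    rw [RingHom.map_det, show φ.mapMatrix M = Matrix.diagonal fun _ => r from
      Matrix.ext fun s t => by simp [hM, Matrix.diagonal_apply], Matrix.det_diagonal]
    exact prod_ne_zero_iff.2 fun _ _ => hr
  intro h
  apply h1
  have : ev M.det = 0 := by rw [RingHom.map_det]; exact h
  rw [(injective_iff_map_eq_zero ev).1 hev _ this, map_zero]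

/-- If `P` contains combinations of the `W t` whose coefficient matrix specializes to the
identity, then `P` contains every `W t`. -/
theorem mem_of_specialization {A K M T : Type*} [CommRing A] [Field K] [Algebra A K]
    [AddCommGroup M] [Module A M] [Module K M] [IsScalarTower A K M] [Fintype T] [DecidableEq T]
    (hev : Function.Injective (algebraMap A K)) (φ : A →+* ℚ) (P : Submodule K M) (W : T → M)
    (ρ : Matrix T T A) (hρ : ∀ t, Fintype.linearCombination A W (ρ t) ∈ P)
    (h1 : ∀ s t, φ (ρ s t) = if s = t then 1 else 0) (s : T) : W s ∈ P := by
  have hd := det_ne_zero_of_map (algebraMap A K) hev φ ρ 1 one_ne_zero h1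
  have hd' : algebraMap A K ρ.det ≠ 0 := by rw [RingHom.map_det]; exact hd
  have e : ρ.det • W s = ∑ t, ρ.adjugate s t • Fintype.linearCombination A W (ρ t) := by
    simp only [Fintype.linearCombination_apply, smul_sum, smul_smul]
    rw [sum_comm]
    simp only [← sum_smul, ← Matrix.mul_apply, Matrix.adjugate_mul, Matrix.smul_apply,
      Matrix.one_apply, smul_eq_mul, mul_ite, mul_one, mul_zero, ite_smul, zero_smul, sum_ite_eq,
      mem_univ, if_true]
  have hm : algebraMap A K ρ.det • W s ∈ P := by
    rw [algebraMap_smul, e]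
    refine P.sum_mem fun t _ => ?_
    rw [← algebraMap_smul K]
    exact P.smul_mem _ (hρ t)
  exact (P.smul_mem_iff hd').1 hm

/-- The vectors `v s` span `E` modulo `J`, and functionals vanishing on `J` separate them, so their
classes form a basis of `E / (J ∩ E)`. -/
theorem finrank_quotient_eq {K M S : Type*} [Field K] [AddCommGroup M] [Module K M] [Fintype S]
    [DecidableEq S] (E J : Submodule K M) (v : S → M) (hv : ∀ s, v s ∈ E)
    (hE : E ≤ J ⊔ Submodule.span K (Set.range v)) (φ : S → M →ₗ[K] K)
    (hφ : ∀ s, ∀ x ∈ J, φ s x = 0) (hd : (Matrix.of fun s t => φ t (v s)).det ≠ 0) :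
    Module.finrank K (↥E ⧸ (J.comap E.subtype)) = Fintype.card S := by
  let g : (S → K) →ₗ[K] (↥E ⧸ (J.comap E.subtype)) :=
    Fintype.linearCombination K fun s => (J.comap E.subtype).mkQ ⟨v s, hv s⟩
  have hg : ∀ x : S → K, ∃ h : (∑ s, x s • v s) ∈ E,
      g x = (J.comap E.subtype).mkQ ⟨∑ s, x s • v s, h⟩ := by
    intro x
    refine ⟨E.sum_mem fun s _ => E.smul_mem _ (hv s), ?_⟩
    simp only [g, Fintype.linearCombination_apply, ← map_smul, ← map_sum]
    congr 1
    ext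
    simp
  have hinj : Function.Injective g := by
    rw [← LinearMap.ker_eq_bot, LinearMap.ker_eq_bot']
    intro x hx
    obtain ⟨h, e⟩ := hg x
    rw [e, Submodule.mkQ_apply, Submodule.Quotient.mk_eq_zero] at hx
    refine Matrix.eq_zero_of_vecMul_eq_zero hd (funext fun t => ?_)
    have := hφ t _ hx
    simpa [Matrix.vecMul, dotProduct] using this
  have hsurj : Function.Surjective g := by
    intro z
    obtain ⟨⟨y, hy⟩, rfl⟩ := Submodule.mkQ_surjective _ z
    obtain ⟨j, hj, w, hw, rfl⟩ := Submodule.mem_sup.1 (hE hy)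
    obtain ⟨x, rfl⟩ := (Submodule.mem_span_range_iff_exists_fun K).1 hw
    obtain ⟨h, e⟩ := hg x
    refine ⟨x, ?_⟩
    rw [e, Submodule.mkQ_apply, Submodule.mkQ_apply, Submodule.Quotient.eq]
    simpa using hj
  rw [← (LinearEquiv.ofBijective g ⟨hinj, hsurj⟩).finrank_eq, Module.finrank_fintype_fun_eq_card]

end LinearAlgebra

/-! ### Words and functionals on the free algebra -/

section Flat

variable {K X : Type*} [Field K]

/-- The monomial of the free algebra attached to a list of generators. -/
def wd (K : Type*) [Field K] {X : Type*} (l : List X) : FreeAlgebra K X :=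
  (l.map (FreeAlgebra.ι K)).prod

theorem wd_append (l l' : List X) : wd K (l ++ l') = wd K l * wd K l' := by
  simp [wd]

theorem basis_eq_wd (l : List X) :
    FreeAlgebra.basisFreeMonoid K X (FreeMonoid.ofList l) = wd K l := by
  simp [FreeAlgebra.basisFreeMonoid, FreeAlgebra.equivMonoidAlgebraFreeMonoid, wd,
    FreeMonoid.lift_apply]

/-- The linear functional on the free algebra with prescribed values on monomials. -/
noncomputable def wordFun (h : List X → K) : FreeAlgebra K X →ₗ[K] K :=
  (FreeAlgebra.basisFreeMonoid K X).constr K fun l => h l.toList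

theorem wordFun_wd (h : List X → K) (l : List X) : wordFun h (wd K l) = h l := by
  rw [← basis_eq_wd, wordFun, Module.Basis.constr_basis, FreeMonoid.toList_ofList]

/-- To vanish on the two-sided ideal generated by `r`, it suffices to vanish on `r` multiplied by
monomials on both sides. -/
theorem wordFun_ideal (h : List X → K) (r : FreeAlgebra K X)
    (hr : ∀ l1 l2, wordFun h (wd K l1 * r * wd K l2) = 0) (a b : FreeAlgebra K X) :
    wordFun h (a * r * b) = 0 := by
  have h1 : ∀ l1, wordFun h ∘ₗ LinearMap.mulLeft K (wd K l1 * r) = 0 := fun l1 =>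
    (FreeAlgebra.basisFreeMonoid K X).ext fun l => by
      have := hr l1 l.toList
      rwa [← basis_eq_wd l.toList] at this
  have h2 : wordFun h ∘ₗ LinearMap.mulRight K (r * b) = 0 :=
    (FreeAlgebra.basisFreeMonoid K X).ext fun l => by
      have := LinearMap.congr_fun (h1 l.toList) b
      rw [← basis_eq_wd] at this
      simpa [mul_assoc] using this
  simpa [mul_assoc] using LinearMap.congr_fun h2 a

end Flat

/-! ### Sorted monomials span -/

section Upper

variable {ι A K : Type*} [Fintype ι] [LinearOrder ι] [CommRing A] [Field K] [Algebra A K]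

/-- The coefficient vector of the monomial `l` among the words of length `k`; it is zero when `l`
does not have length `k`. -/
def oneAt (A : Type*) [CommRing A] (k : ℕ) (l : List (ι × ι)) : List.Vector (ι × ι) k → A :=
  fun v => if v.1 = l then 1 else 0

theorem linComb_oneAt (k : ℕ) (l : List (ι × ι)) (hl : l.length = k) :
    Fintype.linearCombination A (fun v : List.Vector (ι × ι) k => wd K v.1) (oneAt A k l) =
      wd K l := by
  rw [Fintype.linearCombination_apply, Fintype.sum_eq_single ⟨l, hl⟩]
  · simp [oneAt]
  · intro v hv
    have : v.1 ≠ l := fun h => hv (Subtype.ext h)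
    simp [oneAt, this]

theorem relEval_apply {T : Type*} (R : ι → ι → ι → ι → A) (a b c d : ι)
    (g : ι × ι → ι × ι → T → A) (v : T) :
    relEval R a b c d g v = relEval R a b c d fun x y => g x y v := by
  simp only [relEval, Pi.sub_apply, Finset.sum_apply, Pi.smul_apply]

/-- Two words `l1 ++ l` and `l1 ++ l'` differing by a permutation: `P` contains a combination of
words whose coefficients specialize at `q = 1` to those of their difference. An adjacent
transposition is provided by a relator. -/
theorem perm_reduce (q c : A) (φ : A →+* ℚ) (h1 : φ q = 1) (h0 : φ c = 0) (k : ℕ)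
    (P : Submodule K (FreeAlgebra K (ι × ι)))
    (hP : ∀ (l1 l2 : List (ι × ι)) (a b c' d : ι), l1.length + l2.length + 2 = k →
      relEval (kerR q c) a b c' d (fun x y => wd K (l1 ++ x :: y :: l2)) ∈ P)
    {l l' : List (ι × ι)} (h : l.Perm l') : ∀ l1 : List (ι × ι), (l1 ++ l).length = k →
      ∃ ρ : List.Vector (ι × ι) k → A,
        Fintype.linearCombination A (fun v : List.Vector (ι × ι) k => wd K v.1) ρ ∈ P ∧
        ∀ v, φ (ρ v) = oneAt ℚ k (l1 ++ l) v - oneAt ℚ k (l1 ++ l') v := by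
  induction h with
  | nil => exact fun l1 _ => ⟨0, by simp, by simp⟩
  | cons x _ ih =>
    intro l1 hl
    simpa using ih (l1 ++ [x]) (by simpa using hl)
  | swap x y l0 =>
    intro l1 hl
    obtain ⟨b, d⟩ := y
    obtain ⟨a, c'⟩ := x
    refine ⟨relEval (kerR q c) a b c' d (fun x y => oneAt A k (l1 ++ x :: y :: l0)), ?_, ?_⟩
    · have hl' : l1.length + l0.length + 2 = k := by simp at hl; omega
      rw [map_relEval]
      convert hP l1 l0 a b c' d hl' using 4 with x y
      exact linComb_oneAt k _ (by simp; omega)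
    · intro v
      have e : relEval (kerR q c) a b c' d (fun x y => oneAt A k (l1 ++ x :: y :: l0)) v =
          relEval (kerR q c) a b c' d (fun x y => oneAt A k (l1 ++ x :: y :: l0) v) :=
        relEval_apply _ _ _ _ _ _ _
      rw [e, ringHom_relEval]
      simp only [kerR_map, h1, h0]
      have e2 : ∀ l, φ (oneAt A k l v) = oneAt ℚ k l v := by
        intro l; unfold oneAt; split_ifs <;> simp
      simp only [e2]
      rw [relEval_one]
  | trans h h' ih ih' =>
    intro l1 hl
    obtain ⟨ρ, hρ, e⟩ := ih l1 hl
    obtain ⟨ρ', hρ', e'⟩ := ih' l1 (by rw [← hl]; simp [h.length_eq])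
    refine ⟨ρ + ρ', by rw [map_add]; exact P.add_mem hρ hρ', fun v => ?_⟩
    rw [Pi.add_apply, map_add, e, e']
    ring

/-- A subspace containing the relators of degree `k` and one monomial for each multiset of letters
contains all monomials of degree `k`. -/
theorem words_mem (hev : Function.Injective (algebraMap A K)) (q c : A) (φ : A →+* ℚ)
    (h1 : φ q = 1) (h0 : φ c = 0) (k : ℕ) (P : Submodule K (FreeAlgebra K (ι × ι)))
    (hP : ∀ (l1 l2 : List (ι × ι)) (a b c' d : ι), l1.length + l2.length + 2 = k →
      relEval (kerR q c) a b c' d (fun x y => wd K (l1 ++ x :: y :: l2)) ∈ P)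
    (hS : ∀ s : Sym (ι × ι) k, wd K s.1.toList ∈ P) (l : List (ι × ι)) (hl : l.length = k) :
    wd K l ∈ P := by
  have key : ∀ v : List.Vector (ι × ι) k, ∃ ρ : List.Vector (ι × ι) k → A,
      Fintype.linearCombination A (fun v : List.Vector (ι × ι) k => wd K v.1) ρ ∈ P ∧
      ∀ t, φ (ρ t) = if v = t then 1 else 0 := by
    intro v
    have hp : v.1.Perm ((v.1 : Multiset (ι × ι)).toList) :=
      Multiset.coe_eq_coe.1 (Multiset.coe_toList _).symm
    obtain ⟨ρ, hρ, e⟩ := perm_reduce (K := K) q c φ h1 h0 k P hP hp [] v.2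
    refine ⟨ρ + oneAt A k (v.1 : Multiset (ι × ι)).toList, ?_, fun t => ?_⟩
    · rw [map_add, linComb_oneAt k _ (by rw [← hp.length_eq]; exact v.2)]
      exact P.add_mem hρ (hS ⟨v.1, v.2⟩)
    · have e2 : ∀ l, φ (oneAt A k l t) = oneAt ℚ k l t := by
        intro l; unfold oneAt; split_ifs <;> simp
      have e3 : v = t ↔ t.1 = v.1 := Subtype.ext_iff.trans eq_comm
      rw [Pi.add_apply, map_add, e, e2]
      simp [oneAt, e3]
  choose ρ hρ e using key
  exact mem_of_specialization hev φ P (fun v : List.Vector (ι × ι) k => wd K v.1) ρ hρ e ⟨l, hl⟩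

end Upper

/-! ### The dimension count -/

section Main

variable {ι A K : Type*} [Fintype ι] [LinearOrder ι] [CommRing A] [Field K] [Algebra A K]

/-- The dimension of the degree-`k` component over any field `K`, for `q` coming from a ring `A` that
embeds in `K` and has a specialization `q = 1`. -/
theorem flat (hev : Function.Injective (algebraMap A K)) (q c : A) (hq : q * q = c * q + 1)
    (φ : A →+* ℚ) (h1 : φ q = 1) (h0 : φ c = 0) (k : ℕ) (d0 : ι × ι)
    (E J : Submodule K (FreeAlgebra K (ι × ι)))
    (hE : E = Submodule.span K {x | ∃ l : List (ι × ι), l.length = k ∧ x = wd K l})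
    (hJ : J = Submodule.span K {x | ∃ u v : FreeAlgebra K (ι × ι), ∃ a b c' d : ι, x = u *
      relEval (kerR q c) a b c' d (fun x y => FreeAlgebra.ι K x * FreeAlgebra.ι K y) * v}) :
    Module.finrank K (↥E ⧸ (J.comap E.subtype)) = Fintype.card (Sym (ι × ι) k) := by
  have hu : IsUnit q := IsUnit.of_mul_eq_one (q - c) (by linear_combination hq)
  have hw : ∀ (l1 l2 : List (ι × ι)) (a b c' d : ι), wd K l1 *
      relEval (kerR q c) a b c' d (fun x y => FreeAlgebra.ι K x * FreeAlgebra.ι K y) * wd K l2 =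
      relEval (kerR q c) a b c' d (fun x y => wd K (l1 ++ x :: y :: l2)) := by
    intro l1 l2 a b c' d
    have := map_relEval (kerR q c) a b c' d (fun x y => FreeAlgebra.ι K x * FreeAlgebra.ι K y)
      (LinearMap.mulRight A (wd K l2) ∘ₗ LinearMap.mulLeft A (wd K l1))
    simp only [LinearMap.comp_apply, LinearMap.mulLeft_apply, LinearMap.mulRight_apply] at this
    rw [this]
    congr 1
    funext x y
    simp [wd, mul_assoc]
  have hlen : ∀ s : Sym (ι × ι) k, s.1.toList.length = k := fun s => by
    rw [Multiset.length_toList]; exact s.2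
  refine finrank_quotient_eq E J (fun s : Sym (ι × ι) k => wd K s.1.toList) ?_ ?_
    (fun s => wordFun fun l => if l.length = k then
      algebraMap A K (casVal q c d0 k s.1 l) else 0) ?_ ?_
  · intro s
    rw [hE]
    exact Submodule.subset_span ⟨_, hlen s, rfl⟩
  · rw [hE, Submodule.span_le]
    rintro _ ⟨l, hl, rfl⟩
    refine words_mem hev q c φ h1 h0 k _ ?_ ?_ l hl
    · intro l1 l2 a b c' d _
      rw [← hw, hJ]
      exact Submodule.mem_sup_left (Submodule.subset_span ⟨_, _, a, b, c', d, rfl⟩)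
    · exact fun s => Submodule.mem_sup_right (Submodule.subset_span ⟨s, rfl⟩)
  · intro s x hx
    rw [hJ] at hx
    induction hx using Submodule.span_induction with
    | mem x h =>
      obtain ⟨u, v, a, b, c', d, rfl⟩ := h
      refine wordFun_ideal _ _ (fun l1 l2 => ?_) u v
      rw [hw, relEval_algebraMap (K := K), map_relEval]
      simp only [wordFun_wd]
      by_cases h : l1.length + l2.length + 2 = k
      · have hl : ∀ x y, (l1 ++ x :: y :: l2).length = k := fun x y => by simp; omega
        simp only [hl, if_true]
        rw [← ringHom_relEval, casVal_rel q c hq d0 k s.1 l1 l2 h, map_zero]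
      · have hl : ∀ x y, (l1 ++ x :: y :: l2).length ≠ k := fun x y => by simp; omega
        simp only [hl, if_false, relEval, smul_zero, sum_const_zero, sub_self]
    | zero => simp
    | add x y _ _ hx hy => rw [map_add, hx, hy, add_zero]
    | smul a x _ hx => rw [map_smul, hx, smul_zero]
  · have := det_ne_zero_of_map (algebraMap A K) hev φ
      (Matrix.of fun s t : Sym (ι × ι) k => casVal q c d0 k t.1 s.1.toList)
      ((k - 1 + 1).factorial : ℚ) (by positivity) ?_
    · convert this using 2
      ext s t
      simp [wordFun_wd]
    · intro s t
      rw [Matrix.of_apply, casVal_spec q c hu φ h1 h0 d0 k t.1 _ (hlen s), Multiset.coe_toList]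
      simp

end Main

/-! ### The reflection equation over the complex numbers -/

section Instance

theorem Rhat_eq (N : ℕ) (q : ℂ) (a b x y : Fin N) :
    Rhat N q (a, b) (x, y) = kerR q (q - q⁻¹) a b x y := by
  unfold Rhat kerR
  simp only [Prod.mk.injEq]
  grind

theorem relMat_eq (N : ℕ) (q : ℂ) (a b c d : Fin N) :
    ((Rhat N q).map (algebraMap ℂ (FreeAlgebra ℂ (Fin N × Fin N))) * L1mat N *
      (Rhat N q).map (algebraMap ℂ (FreeAlgebra ℂ (Fin N × Fin N))) * L1mat N -
      L1mat N * (Rhat N q).map (algebraMap ℂ (FreeAlgebra ℂ (Fin N × Fin N))) * L1mat N *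
      (Rhat N q).map (algebraMap ℂ (FreeAlgebra ℂ (Fin N × Fin N)))) (a, b) (c, d) =
    relEval (kerR q (q - q⁻¹)) a b c d fun x y => FreeAlgebra.ι ℂ x * FreeAlgebra.ι ℂ y := by
  rw [Matrix.sub_apply, relEval]
  congr 1
  · rw [Matrix.mul_assoc, Matrix.mul_assoc]
    simp only [Matrix.mul_apply, Matrix.map_apply, Rhat_eq, L1mat, Fintype.sum_prod_type]
    simp only [mul_ite, mul_one, mul_zero, ite_mul, zero_mul, sum_ite_eq, sum_ite_eq', mem_univ,
      if_true]
    simp only [mul_sum, Algebra.smul_def, map_mul]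
    refine sum_congr rfl fun x _ => sum_congr rfl fun y _ => sum_congr rfl fun e _ =>
      sum_congr rfl fun f _ => ?_
    have := Algebra.commutes (kerR q (q - q⁻¹) e y f d) (FreeAlgebra.ι ℂ (x, e))
    rw [← mul_assoc (FreeAlgebra.ι ℂ (x, e)), ← this]
    simp only [mul_assoc]
  · rw [Matrix.mul_assoc, Matrix.mul_assoc]
    simp only [Matrix.mul_apply, Matrix.map_apply, Rhat_eq, L1mat, Fintype.sum_prod_type]
    simp only [mul_ite, mul_one, mul_zero, ite_mul, zero_mul, sum_ite_eq, mem_univ, if_true]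
    simp only [mul_sum, ← sum_product', univ_product_univ]
    refine Fintype.sum_equiv ⟨fun ⟨e, f, x, y⟩ => ⟨x, y, e, f⟩, fun ⟨x, y, e, f⟩ => ⟨e, f, x, y⟩,
      fun _ => rfl, fun _ => rfl⟩ _ _ fun ⟨e, f, x, y⟩ => ?_
    simp only [Equiv.coe_fn_mk, Algebra.smul_def, map_mul]
    have h1 := Algebra.commutes (kerR q (q - q⁻¹) e b f x) (FreeAlgebra.ι ℂ (a, e))
    have h2 := Algebra.commutes (kerR q (q - q⁻¹) y x c d)
      (FreeAlgebra.ι ℂ (a, e) * FreeAlgebra.ι ℂ (f, y))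
    rw [← mul_assoc (FreeAlgebra.ι ℂ (a, e)), ← h1, mul_assoc, ← mul_assoc (FreeAlgebra.ι ℂ (a, e)),
      ← h2, ← mul_assoc, ← map_mul, mul_comm (kerR _ _ e b f x), map_mul]

/-- Laurent polynomials over `ℚ` map to `ℂ` by `T ↦ q`, injectively since `q` is transcendental,
and to `ℚ` by `T ↦ 1`. -/
theorem exists_model (q : ℂ) (hq : Transcendental ℚ q) :
    ∃ (ev : LaurentPolynomial ℚ →+* ℂ) (φ : LaurentPolynomial ℚ →+* ℚ)
      (t c : LaurentPolynomial ℚ), Function.Injective ev ∧ ev t = q ∧ ev c = q - q⁻¹ ∧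
      φ t = 1 ∧ φ c = 0 ∧ t * t = c * t + 1 := by
  have h0 : q ≠ 0 := fun h => hq (h ▸ isAlgebraic_zero)
  refine ⟨LaurentPolynomial.eval₂ (algebraMap ℚ ℂ) (Units.mk0 q h0),
    LaurentPolynomial.eval₂ (RingHom.id ℚ) 1, LaurentPolynomial.T 1,
    LaurentPolynomial.T 1 - LaurentPolynomial.T (-1), ?_, ?_, ?_, ?_, ?_, ?_⟩
  · rw [injective_iff_map_eq_zero]
    intro f hf
    obtain ⟨n, p, hp⟩ := f.exists_T_pow
    have e := LaurentPolynomial.eval₂_toLaurent (algebraMap ℚ ℂ) (Units.mk0 q h0) p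
    rw [hp, map_mul, hf, zero_mul] at e
    have hp0 : p = 0 := (transcendental_iff.1 hq) p e.symm
    rw [hp0, map_zero] at hp
    have : f = f * LaurentPolynomial.T n * LaurentPolynomial.T (-n) := by
      rw [mul_assoc, ← LaurentPolynomial.T_add]; simp
    rw [this, ← hp, zero_mul]
  · simp [LaurentPolynomial.eval₂_T]
  · simp [LaurentPolynomial.eval₂_T]
  · simp [LaurentPolynomial.eval₂_T]
  · simp [LaurentPolynomial.eval₂_T]
  · rw [sub_mul, ← LaurentPolynomial.T_add, ← LaurentPolynomial.T_add]; simp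

end Instance

end REA

/-- For `q` transcendental, the reflection equation algebra with `N²`
generators `L` and relations `R̂ L₁ R̂ L₁ = L₁ R̂ L₁ R̂` is a flat deformation
of the polynomial ring in `N²` variables: its degree-`k` component has
dimension `C(N² + k - 1, k)`, i.e. its Poincaré series is `(1 - t)^{-N²}`. -/
theorem reflection_equation_algebra_flat (N : ℕ) (hN : 2 ≤ N) (q : ℂ)
    (hq : Transcendental ℚ q) :
    ∀ RF relMat J,
      RF = (Rhat N q).map (algebraMap ℂ (FreeAlgebra ℂ (Fin N × Fin N))) →
      relMat = RF * L1mat N * RF * L1mat N - L1mat N * RF * L1mat N * RF →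
      J = twoSidedSpan N {x | ∃ p r, x = relMat p r} →
      ∀ k : ℕ,
        Module.finrank ℂ
          (↥(degComp N k) ⧸ (J.comap (degComp N k).subtype)) =
        Nat.choose (N ^ 2 + k - 1) k := by
  intro RF relMat J hRF hrel hJ k
  obtain ⟨ev, φ, t, c, hev, et, ec, h1, h0, ht⟩ := REA.exists_model q hq
  let _ : Algebra (LaurentPolynomial ℚ) ℂ := ev.toAlgebra
  have hR : ∀ a b c' d : Fin N, REA.relEval (REA.kerR t c) a b c' d
      (fun x y => FreeAlgebra.ι ℂ x * FreeAlgebra.ι ℂ y) = relMat (a, b) (c', d) := by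
    intro a b c' d
    rw [hrel, hRF, REA.relMat_eq, REA.relEval_algebraMap (K := ℂ)]
    congr 1
    funext a b x y
    change ev _ = _
    rw [REA.kerR_map, et, ec]
  rw [REA.flat hev t c ht φ h1 h0 k (⟨0, by omega⟩, ⟨0, by omega⟩) (degComp N k) J rfl ?_,
    Sym.card_sym_eq_choose, Fintype.card_prod, Fintype.card_fin, sq]
  rw [hJ, twoSidedSpan]
  congr 1
  ext x
  simp only [hR, Set.mem_ofPred_eq]
  constructor
  · rintro ⟨u, v, _, ⟨⟨a, b⟩, ⟨c', d⟩, rfl⟩, rfl⟩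
    exact ⟨u, v, a, b, c', d, rfl⟩
  · rintro ⟨u, v, a, b, c', d, rfl⟩
    exact ⟨u, v, _, ⟨(a, b), (c', d), rfl⟩, rfl⟩
end
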